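/- arXiv:1711.00998 — 2 statements merged into one kernel-verified Lean document; each statement's English description precedes it below -/
import Mathlib

section
/- Let n ≥ 1, let θ ∈ S^{n-1} be a unit vector in ℝ^n, and let γ ∈ (0,∞). Let f : ℝ^n → [0,∞) be a γ-concave function with 0 < ∫_{ℝ^n} f(x) dx < ∞ and with centroid at the origin, i.e. ∫_{ℝ^n} x f(x) dx = 0. Then ∫_0^∞ f(sθ) ds ≥ ((γ+1)/(γn+γ+1))^{(γ+1)/γ} · ∫_{-∞}^∞ f(sθ) ds. -/
open MeasureTheory Set
open scoped RealInnerProductSpace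


lemma gr_bm0_compact {A B C : Set ℝ} (hA : IsCompact A) (hB : IsCompact B)
    (hA0 : A.Nonempty) (hB0 : B.Nonempty) (h : ∀ x ∈ A, ∀ y ∈ B, x + y ∈ C) :
    volume A + volume B ≤ volume C := by
  obtain ⟨a, haA, ha⟩ := hA.exists_isGreatest hA0
  obtain ⟨b, hbB, hb⟩ := hB.exists_isLeast hB0
  have h1 : volume ((fun x => b + x) '' A) = volume A := by
    simp
  have h2 : volume ((fun x => a + x) '' B) = volume B := by
    simp
  rw [← h1, ← h2, ← measure_union₀]
  · apply measure_mono
    rintro _ (⟨x, hx, rfl⟩ | ⟨y, hy, rfl⟩)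
    · simpa [add_comm] using h x hx b hbB
    · exact h a haA y hy
  · exact (hB.image (by fun_prop)).measurableSet.nullMeasurableSet
  · refine measure_mono_null (t := {a + b}) ?_ (by simp)
    rintro _ ⟨⟨x, hx, rfl⟩, ⟨y, hy, hxy⟩⟩
    have := ha hx
    have := hb hy
    simp only [mem_singleton_iff] at *
    linarith

lemma gr_bm0 {A B C : Set ℝ} (hA : MeasurableSet A) (hB : MeasurableSet B)
    (hA0 : A.Nonempty) (hB0 : B.Nonempty) (h : ∀ x ∈ A, ∀ y ∈ B, x + y ∈ C) :
    volume A + volume B ≤ volume C := by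
  rcases eq_or_ne (volume A) 0 with hvA | hvA
  · obtain ⟨a, ha⟩ := hA0
    rw [hvA, zero_add]
    have h2 : volume ((fun x => a + x) '' B) = volume B := by simp
    rw [← h2]
    apply measure_mono
    rintro _ ⟨y, hy, rfl⟩
    exact h a ha y hy
  rcases eq_or_ne (volume B) 0 with hvB | hvB
  · obtain ⟨b, hb⟩ := hB0
    rw [hvB, add_zero]
    have h2 : volume ((fun x => b + x) '' A) = volume A := by simp
    rw [← h2]
    apply measure_mono
    rintro _ ⟨y, hy, rfl⟩
    simpa [add_comm] using h y hy b hb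
  by_contra hlt
  push Not at hlt
  obtain ⟨a', ha', b', hb', hab⟩ := ENNReal.exists_lt_add_of_lt_add hlt hvA hvB
  obtain ⟨K, hKA, hK, hK'⟩ := hA.exists_lt_isCompact ha'
  obtain ⟨L, hLB, hL, hL'⟩ := hB.exists_lt_isCompact hb'
  have hK0 : K.Nonempty := nonempty_of_measure_ne_zero (μ := volume) (ne_bot_of_gt hK')
  have hL0 : L.Nonempty := nonempty_of_measure_ne_zero (μ := volume) (ne_bot_of_gt hL')
  have := gr_bm0_compact hK hL hK0 hL0 (C := C) (fun x hx y hy => h x (hKA hx) y (hLB hy))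
  exact absurd (hab.trans_le ((add_le_add hK'.le hL'.le).trans this)) (lt_irrefl _)

lemma gr_bm1 {A B C : Set ℝ} (hA : MeasurableSet A) (hB : MeasurableSet B)
    (hA0 : A.Nonempty) (hB0 : B.Nonempty) {l : ℝ} (hl0 : 0 < l) (hl1 : l < 1)
    (h : ∀ x ∈ A, ∀ y ∈ B, l * x + (1 - l) * y ∈ C) :
    ENNReal.ofReal l * volume A + ENNReal.ofReal (1 - l) * volume B ≤ volume C := by
  open Pointwise in
  have h1 : volume (l • A) = ENNReal.ofReal l * volume A := by
    rw [Measure.addHaar_smul]; simp [abs_of_pos hl0]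
  open Pointwise in
  have h2 : volume ((1 - l) • B) = ENNReal.ofReal (1 - l) * volume B := by
    rw [Measure.addHaar_smul]; simp [abs_of_pos (sub_pos.2 hl1)]
  rw [← h1, ← h2]
  apply gr_bm0 (hA.const_smul₀ _) (hB.const_smul₀ _)
  · exact hA0.smul_set
  · exact hB0.smul_set
  · rintro _ ⟨x, hx, rfl⟩ _ ⟨y, hy, rfl⟩
    exact h x hx y hy

/-- bounded case, before Hölder -/
lemma gr_bbl_aux {γ : ℝ} (hγ : 0 < γ) {F G H : ℝ → ℝ} (hF0 : ∀ x, 0 ≤ F x) (hG0 : ∀ x, 0 ≤ G x)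
    (hH0 : ∀ x, 0 ≤ H x) (hF : Measurable F) (hG : Measurable G) (hH : Measurable H)
    {l : ℝ} (hl0 : 0 < l) (hl1 : l < 1)
    (h : ∀ s t, F s ≠ 0 → G t ≠ 0 →
      (l * F s ^ γ + (1 - l) * G t ^ γ) ^ (1 / γ) ≤ H (l * s + (1 - l) * t))
    {A B : ℝ} (hA0 : 0 < A) (hB0 : 0 < B) (hA : IsLUB (range F) A) (hB : IsLUB (range G) B) :
    ENNReal.ofReal l * (∫⁻ x, ENNReal.ofReal (F x / A))
      + ENNReal.ofReal (1 - l) * (∫⁻ x, ENNReal.ofReal (G x / B))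
    ≤ ∫⁻ x, ENNReal.ofReal (H x / (l * A ^ γ + (1 - l) * B ^ γ) ^ (1 / γ)) := by
  have hl1' : 0 < 1 - l := sub_pos.2 hl1
  set W := (l * A ^ γ + (1 - l) * B ^ γ) ^ (1 / γ) with hW
  have hW0 : 0 < W := by positivity
  have hFm : Measurable (fun x => F x / A) := hF.div_const _
  have hGm : Measurable (fun x => G x / B) := hG.div_const _
  have hHm : Measurable (fun x => H x / W) := hH.div_const _
  rw [lintegral_eq_lintegral_meas_lt volume
      (Filter.Eventually.of_forall fun x => div_nonneg (hF0 x) hA0.le) hFm.aemeasurable,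
    lintegral_eq_lintegral_meas_lt volume
      (Filter.Eventually.of_forall fun x => div_nonneg (hG0 x) hB0.le) hGm.aemeasurable,
    lintegral_eq_lintegral_meas_lt volume
      (Filter.Eventually.of_forall fun x => div_nonneg (hH0 x) hW0.le) hHm.aemeasurable,
    ← lintegral_const_mul' _ _ ENNReal.ofReal_ne_top,
    ← lintegral_const_mul' _ _ ENNReal.ofReal_ne_top, ← lintegral_add_left]
  · apply setLIntegral_mono' measurableSet_Ioi
    intro r hr
    have hr0 : 0 < r := hr
    rcases lt_or_ge r 1 with hr1 | hr1
    · apply gr_bm1 (measurableSet_lt measurable_const hFm) (measurableSet_lt measurable_const hGm)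
        _ _ hl0 hl1
      · intro x hx y hy
        simp only [mem_ofPred_eq, lt_div_iff₀ hA0, lt_div_iff₀ hB0, lt_div_iff₀ hW0] at hx hy ⊢
        have hFx : 0 < F x := lt_trans (by positivity) hx
        have hGy : 0 < G y := lt_trans (by positivity) hy
        refine lt_of_lt_of_le ?_ (h x y hFx.ne' hGy.ne')
        have e : r * W = (l * (r * A) ^ γ + (1 - l) * (r * B) ^ γ) ^ (1 / γ) := by
          rw [Real.mul_rpow hr0.le hA0.le, Real.mul_rpow hr0.le hB0.le]
          rw [show l * (r ^ γ * A ^ γ) + (1 - l) * (r ^ γ * B ^ γ)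
            = r ^ γ * (l * A ^ γ + (1 - l) * B ^ γ) by ring]
          rw [Real.mul_rpow (by positivity) (by positivity), ← Real.rpow_mul hr0.le,
            mul_one_div_cancel hγ.ne', Real.rpow_one]
        rw [e]
        apply Real.rpow_lt_rpow (by positivity) _ (by positivity)
        have := Real.rpow_lt_rpow (by positivity) hx hγ
        have := Real.rpow_lt_rpow (by positivity) hy hγ
        gcongr
      · obtain ⟨_, ⟨x, rfl⟩, hx, -⟩ := hA.exists_between (b := r * A) (by nlinarith)
        exact ⟨x, by simpa [lt_div_iff₀ hA0] using hx⟩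
      · obtain ⟨_, ⟨x, rfl⟩, hx, -⟩ := hB.exists_between (b := r * B) (by nlinarith)
        exact ⟨x, by simpa [lt_div_iff₀ hB0] using hx⟩
    · have e1 : {a | r < F a / A} = ∅ := by
        ext x
        have := hA.1 (mem_range_self x)
        simp only [mem_ofPred_eq, lt_div_iff₀ hA0, mem_empty_iff_false, iff_false, not_lt]
        nlinarith
      have e2 : {a | r < G a / B} = ∅ := by
        ext x
        have := hB.1 (mem_range_self x)
        simp only [mem_ofPred_eq, lt_div_iff₀ hB0, mem_empty_iff_false, iff_false, not_lt]
        nlinarith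
      simp [e1, e2]
  · apply Measurable.const_mul
    have : Antitone (fun r : ℝ => volume {a | r < F a / A}) := by
      intro r s hrs
      apply measure_mono
      intro x hx
      exact lt_of_le_of_lt hrs hx
    exact this.measurable

/-- two point weighted Hölder -/
lemma gr_holder {γ l A B I J : ℝ} (hγ : 0 < γ) (hl0 : 0 < l) (hl1 : l < 1) (hA : 0 < A) (hB : 0 < B)
    (hI : 0 ≤ I) (hJ : 0 ≤ J) :
    l * I ^ (γ / (1 + γ)) + (1 - l) * J ^ (γ / (1 + γ)) ≤
      ((l * A ^ γ + (1 - l) * B ^ γ) ^ (1 / γ) * (l * (I / A) + (1 - l) * (J / B))) ^ (γ / (1 + γ)) := by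
  have hl1' : 0 < 1 - l := sub_pos.2 hl1
  have hpq : ((1 + γ) / γ).HolderConjugate (1 + γ) := by
    rw [Real.holderConjugate_iff]
    constructor
    · rw [lt_div_iff₀ hγ]; linarith
    · field_simp
      ring
  have key := Real.inner_le_Lp_mul_Lq_of_nonneg (Finset.univ : Finset (Fin 2))
    (f := ![(l * (I / A)) ^ (γ / (1 + γ)), ((1 - l) * (J / B)) ^ (γ / (1 + γ))])
    (g := ![(l * A ^ γ) ^ (1 / (1 + γ)), ((1 - l) * B ^ γ) ^ (1 / (1 + γ))]) hpq
    (by intro i _; fin_cases i <;> simp <;> positivity)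
    (by intro i _; fin_cases i <;> simp <;> positivity)
  simp only [Fin.sum_univ_two, Matrix.cons_val_zero, Matrix.cons_val_one] at key
  have c1 : γ / (1 + γ) * ((1 + γ) / γ) = 1 := by field_simp
  have c2 : 1 / (1 + γ) * (1 + γ) = 1 := by field_simp
  rw [← Real.rpow_mul (by positivity), ← Real.rpow_mul (by positivity),
    ← Real.rpow_mul (by positivity), ← Real.rpow_mul (by positivity), c1, c2] at key
  simp only [Real.rpow_one] at key
  have t : ∀ {l A I : ℝ}, 0 < l → 0 < A → 0 ≤ I →
      (l * (I / A)) ^ (γ / (1 + γ)) * (l * A ^ γ) ^ (1 / (1 + γ)) = l * I ^ (γ / (1 + γ)) := by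
    intro l A I hl hA hI
    rw [Real.mul_rpow hl.le (by positivity), Real.mul_rpow hl.le (by positivity),
      Real.div_rpow hI hA.le, ← Real.rpow_mul hA.le]
    rw [show γ * (1 / (1 + γ)) = γ / (1 + γ) by ring]
    have h1 : l ^ (γ / (1 + γ)) * l ^ (1 / (1 + γ)) = l := by
      rw [← Real.rpow_add hl]
      rw [show γ / (1 + γ) + 1 / (1 + γ) = 1 by field_simp; ring, Real.rpow_one]
    have h2 : A ^ (γ / (1 + γ)) ≠ 0 := by positivity
    calc _ = (l ^ (γ / (1 + γ)) * l ^ (1 / (1 + γ))) * I ^ (γ / (1 + γ)) := by field_simp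
      _ = _ := by rw [h1]
  rw [t hl0 hA hI, t hl1' hB hJ] at key
  refine key.trans (le_of_eq ?_)
  rw [Real.mul_rpow (by positivity) (by positivity), ← Real.rpow_mul (by positivity), mul_comm]
  congr 2
  · field_simp
  · field_simp


lemma gr_lintegral_div {F : ℝ → ℝ} {A : ℝ} (hA : 0 < A) :
    ∫⁻ x, ENNReal.ofReal (F x / A) = (∫⁻ x, ENNReal.ofReal (F x)) / ENNReal.ofReal A := by
  simp_rw [ENNReal.ofReal_div_of_pos hA, div_eq_mul_inv]
  rw [lintegral_mul_const']
  simp [hA]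

lemma gr_bbl_bdd {γ : ℝ} (hγ : 0 < γ) {F G H : ℝ → ℝ} (hF0 : ∀ x, 0 ≤ F x) (hG0 : ∀ x, 0 ≤ G x)
    (hH0 : ∀ x, 0 ≤ H x) (hF : Measurable F) (hG : Measurable G) (hH : Measurable H)
    {l : ℝ} (hl0 : 0 < l) (hl1 : l < 1)
    (h : ∀ s t, F s ≠ 0 → G t ≠ 0 →
      (l * F s ^ γ + (1 - l) * G t ^ γ) ^ (1 / γ) ≤ H (l * s + (1 - l) * t))
    (hFb : BddAbove (range F)) (hGb : BddAbove (range G))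
    (hFn : ∃ x, F x ≠ 0) (hGn : ∃ x, G x ≠ 0) :
    ENNReal.ofReal l * (∫⁻ x, ENNReal.ofReal (F x)) ^ (γ / (1 + γ))
      + ENNReal.ofReal (1 - l) * (∫⁻ x, ENNReal.ofReal (G x)) ^ (γ / (1 + γ))
    ≤ (∫⁻ x, ENNReal.ofReal (H x)) ^ (γ / (1 + γ)) := by
  have hl1' : 0 < 1 - l := sub_pos.2 hl1
  have hA := isLUB_csSup (range_nonempty F) hFb
  have hB := isLUB_csSup (range_nonempty G) hGb
  set A := sSup (range F)
  set B := sSup (range G)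
  obtain ⟨x, hx⟩ := hFn
  obtain ⟨y, hy⟩ := hGn
  have hA0 : 0 < A := lt_of_lt_of_le (lt_of_le_of_ne (hF0 x) hx.symm) (hA.1 (mem_range_self x))
  have hB0 : 0 < B := lt_of_lt_of_le (lt_of_le_of_ne (hG0 y) hy.symm) (hB.1 (mem_range_self y))
  have key := gr_bbl_aux hγ hF0 hG0 hH0 hF hG hH hl0 hl1 h hA0 hB0 hA hB
  have hp : 0 < γ / (1 + γ) := by positivity
  set W := (l * A ^ γ + (1 - l) * B ^ γ) ^ (1 / γ) with hW
  have hW0 : 0 < W := by positivity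
  rw [gr_lintegral_div hA0, gr_lintegral_div hB0, gr_lintegral_div hW0] at key
  rcases eq_or_ne (∫⁻ x, ENNReal.ofReal (H x)) ⊤ with hT | hT
  · rw [hT, ENNReal.top_rpow_of_pos hp]; exact le_top
  set LH := ∫⁻ x, ENNReal.ofReal (H x) with hLH
  have hne : LH / ENNReal.ofReal W ≠ ⊤ := ENNReal.div_ne_top hT (by simpa using hW0)
  have hfin := ne_top_of_le_ne_top hne key
  have hF1 : (∫⁻ x, ENNReal.ofReal (F x)) ≠ ⊤ := by
    intro hh
    apply hfin
    rw [hh, ENNReal.top_div_of_ne_top ENNReal.ofReal_ne_top, ENNReal.mul_top (by simpa using hl0)]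
    simp
  have hG1 : (∫⁻ x, ENNReal.ofReal (G x)) ≠ ⊤ := by
    intro hh
    apply hfin
    rw [hh, ENNReal.top_div_of_ne_top ENNReal.ofReal_ne_top, ENNReal.mul_top (by simpa using hl1)]
    simp
  obtain ⟨I, hI0, hI⟩ : ∃ I : ℝ, 0 ≤ I ∧ (∫⁻ x, ENNReal.ofReal (F x)) = ENNReal.ofReal I :=
    ⟨_, ENNReal.toReal_nonneg, (ENNReal.ofReal_toReal hF1).symm⟩
  obtain ⟨J, hJ0, hJ⟩ : ∃ I : ℝ, 0 ≤ I ∧ (∫⁻ x, ENNReal.ofReal (G x)) = ENNReal.ofReal I :=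
    ⟨_, ENNReal.toReal_nonneg, (ENNReal.ofReal_toReal hG1).symm⟩
  obtain ⟨Q, hQ0, hQ⟩ : ∃ I : ℝ, 0 ≤ I ∧ LH = ENNReal.ofReal I :=
    ⟨_, ENNReal.toReal_nonneg, (ENNReal.ofReal_toReal hT).symm⟩
  rw [hI, hJ, hQ] at key
  rw [hI, hJ, hQ]
  rw [← ENNReal.ofReal_div_of_pos hA0, ← ENNReal.ofReal_div_of_pos hB0,
    ← ENNReal.ofReal_div_of_pos hW0, ← ENNReal.ofReal_mul hl0.le, ← ENNReal.ofReal_mul hl1'.le,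
    ← ENNReal.ofReal_add (by positivity) (by positivity),
    ENNReal.ofReal_le_ofReal_iff (by positivity), le_div_iff₀ hW0] at key
  rw [ENNReal.ofReal_rpow_of_nonneg hI0 hp.le, ENNReal.ofReal_rpow_of_nonneg hJ0 hp.le,
    ENNReal.ofReal_rpow_of_nonneg hQ0 hp.le, ← ENNReal.ofReal_mul hl0.le,
    ← ENNReal.ofReal_mul hl1'.le,
    ← ENNReal.ofReal_add (by positivity) (by positivity)]
  apply ENNReal.ofReal_le_ofReal
  refine (gr_holder hγ hl0 hl1 hA0 hB0 hI0 hJ0).trans ?_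
  apply Real.rpow_le_rpow (by positivity) _ hp.le
  rw [mul_comm]
  exact key

lemma gr_tendsto_trunc {F : ℝ → ℝ} (hF : Measurable F) :
    Filter.Tendsto (fun N : ℕ => ∫⁻ x, ENNReal.ofReal (min (F x) (N + 1))) Filter.atTop
      (nhds (∫⁻ x, ENNReal.ofReal (F x))) := by
  apply lintegral_tendsto_of_tendsto_of_monotone
  · intro N; fun_prop
  · refine Filter.Eventually.of_forall fun x => ?_
    intro N M h
    simp only
    gcongr
  · refine Filter.Eventually.of_forall fun x => ?_
    apply tendsto_const_nhds.congr'
    obtain ⟨N, hN⟩ := exists_nat_ge (F x)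
    filter_upwards [Filter.eventually_ge_atTop N] with M hM
    rw [min_eq_left]
    have : (N : ℝ) ≤ M := by exact_mod_cast hM
    linarith

/-- one-dimensional Borell-Brascamp-Lieb -/
lemma gr_bbl {γ : ℝ} (hγ : 0 < γ) {F G H : ℝ → ℝ} (hF0 : ∀ x, 0 ≤ F x) (hG0 : ∀ x, 0 ≤ G x)
    (hH0 : ∀ x, 0 ≤ H x) (hF : Measurable F) (hG : Measurable G) (hH : Measurable H)
    {l : ℝ} (hl0 : 0 < l) (hl1 : l < 1)
    (h : ∀ s t, F s ≠ 0 → G t ≠ 0 →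
      (l * F s ^ γ + (1 - l) * G t ^ γ) ^ (1 / γ) ≤ H (l * s + (1 - l) * t))
    (hFn : ∫⁻ x, ENNReal.ofReal (F x) ≠ 0) (hGn : ∫⁻ x, ENNReal.ofReal (G x) ≠ 0) :
    ENNReal.ofReal l * (∫⁻ x, ENNReal.ofReal (F x)) ^ (γ / (1 + γ))
      + ENNReal.ofReal (1 - l) * (∫⁻ x, ENNReal.ofReal (G x)) ^ (γ / (1 + γ))
    ≤ (∫⁻ x, ENNReal.ofReal (H x)) ^ (γ / (1 + γ)) := by
  have hl1' : 0 < 1 - l := sub_pos.2 hl1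
  have hex : ∀ {F : ℝ → ℝ}, ∫⁻ x, ENNReal.ofReal (F x) ≠ 0 → ∃ x, F x ≠ 0 := by
    intro F hF
    by_contra! hh
    apply hF
    simp [hh]
  obtain ⟨x, hx⟩ := hex hFn
  obtain ⟨y, hy⟩ := hex hGn
  have key : ∀ N : ℕ, ENNReal.ofReal l *
        (∫⁻ x, ENNReal.ofReal (min (F x) (N + 1))) ^ (γ / (1 + γ))
      + ENNReal.ofReal (1 - l) * (∫⁻ x, ENNReal.ofReal (min (G x) (N + 1))) ^ (γ / (1 + γ))
    ≤ (∫⁻ x, ENNReal.ofReal (H x)) ^ (γ / (1 + γ)) := by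
    intro N
    have hN : (0 : ℝ) < N + 1 := by positivity
    have hm : ∀ {F : ℝ → ℝ}, (∀ x, 0 ≤ F x) → ∀ x, (min (F x) ((N : ℝ) + 1) ≠ 0 ↔ F x ≠ 0) := by
      intro F hF0 x
      constructor
      · intro h1 h2
        apply h1
        rw [h2, min_eq_left hN.le]
      · intro h1
        exact (lt_min (lt_of_le_of_ne (hF0 x) h1.symm) hN).ne'
    apply gr_bbl_bdd hγ (fun x => le_min (hF0 x) hN.le) (fun x => le_min (hG0 x) hN.le) hH0
      (by fun_prop) (by fun_prop) hH hl0 hl1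
    · intro s t hs ht
      refine le_trans ?_ (h s t ((hm hF0 s).1 hs) ((hm hG0 t).1 ht))
      have h1 : 0 ≤ min (F s) ((N : ℝ) + 1) := le_min (hF0 s) hN.le
      have h2 : 0 ≤ min (G t) ((N : ℝ) + 1) := le_min (hG0 t) hN.le
      have h3 := Real.rpow_le_rpow h1 (min_le_left _ _) hγ.le
      have h4 := Real.rpow_le_rpow h2 (min_le_left _ _) hγ.le
      apply Real.rpow_le_rpow (by positivity) _ (by positivity)
      gcongr
    · refine ⟨N + 1, ?_⟩
      rintro _ ⟨x, rfl⟩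
      exact min_le_right _ _
    · refine ⟨N + 1, ?_⟩
      rintro _ ⟨x, rfl⟩
      exact min_le_right _ _
    · exact ⟨x, (hm hF0 x).2 hx⟩
    · exact ⟨y, (hm hG0 y).2 hy⟩
  refine le_of_tendsto' (x := Filter.atTop) (Filter.Tendsto.add ?_ ?_) key
  · apply ENNReal.Tendsto.const_mul
    · exact (ENNReal.continuous_rpow_const.tendsto _).comp (gr_tendsto_trunc hF)
    · right; simp
  · apply ENNReal.Tendsto.const_mul
    · exact (ENNReal.continuous_rpow_const.tendsto _).comp (gr_tendsto_trunc hG)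
    · right; simp


lemma gr_tail_exists {F : ℝ → ℝ} (hF : Integrable F) {r : ℝ}
    (hr0 : 0 < r) (hrT : r < ∫ s, F s) : ∃ t, ∫ s in Ioi t, F s = r := by
  have hc : Continuous (fun t => ∫ s in Ioi t, F s) := by
    have : (fun t => ∫ s in Ioi t, F s)
        = fun t => (∫ s, F s) - ((∫ s in (0:ℝ)..t, F s) + ∫ s in Iic 0, F s) := by
      ext t
      have h1 := intervalIntegral.integral_Iic_add_Ioi (b := t) (μ := volume) hF.integrableOn hF.integrableOn
      have h2 := intervalIntegral.integral_Iic_sub_Iic (a := 0) (b := t) (μ := volume) hF.integrableOn hF.integrableOn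
      linarith
    rw [this]
    exact continuous_const.sub ((intervalIntegral.continuous_primitive (fun a b => hF.intervalIntegrable) 0).add continuous_const)
  have h1 : Filter.Tendsto (fun t => ∫ s in Ioi t, F s) Filter.atBot (nhds (∫ s, F s)) :=
    (aecover_Ioi Filter.tendsto_id).integral_tendsto_of_countably_generated hF
  have h2 : Filter.Tendsto (fun t => ∫ s in Ioi t, F s) Filter.atTop (nhds 0) :=
    tendsto_integral_Ioi_zero Filter.tendsto_id
  obtain ⟨a, ha⟩ := (h1.eventually (lt_mem_nhds hrT)).exists
  obtain ⟨b, hb⟩ := (h2.eventually (gt_mem_nhds hr0)).exists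
  exact mem_range_of_exists_le_of_exists_ge hc ⟨b, hb.le⟩ ⟨a, ha.le⟩

lemma gr_tail_anti {F : ℝ → ℝ} (hF0 : ∀ x, 0 ≤ F x) (hF : Integrable F) :
    Antitone (fun t => ∫ s in Ioi t, F s) := by
  intro a b hab
  exact setIntegral_mono_set hF.integrableOn (Filter.Eventually.of_forall hF0)
    (Ioi_subset_Ioi hab).eventuallyLE

lemma gr_beta {p T : ℝ} (hp : 0 < p) (hT : 0 ≤ T) :
    IntervalIntegrable (fun r : ℝ => (T - r) * r ^ (p - 1)) volume 0 T ∧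
    ∫ r in (0:ℝ)..T, (T - r) * r ^ (p - 1) = T ^ (p + 1) / (p * (p + 1)) := by
  have i1 : IntervalIntegrable (fun r : ℝ => r ^ (p - 1)) volume 0 T :=
    intervalIntegral.intervalIntegrable_rpow' (by linarith)
  have i2 : IntervalIntegrable (fun r : ℝ => r ^ p) volume 0 T :=
    intervalIntegral.intervalIntegrable_rpow' (by linarith)
  have e : EqOn (fun r : ℝ => T * r ^ (p - 1) - r ^ p) (fun r : ℝ => (T - r) * r ^ (p - 1))
      (Ioc 0 T) := by
    intro r hr
    have hr0 : 0 < r := hr.1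
    simp only
    rw [Real.rpow_sub_one hr0.ne']
    field_simp
  rw [← uIoc_of_le hT] at e
  constructor
  · exact ((i1.const_mul T).sub i2).congr e
  · rw [← intervalIntegral.integral_congr_ae (Filter.Eventually.of_forall fun r hr => e hr),
      intervalIntegral.integral_sub (i1.const_mul T) i2, intervalIntegral.integral_const_mul,
      integral_rpow (Or.inl (by linarith)), integral_rpow (Or.inl (by linarith))]
    rw [Real.zero_rpow (by linarith), Real.zero_rpow (by linarith)]
    rcases hT.eq_or_lt with h | h
    · rw [← h, Real.zero_rpow (by linarith : p + 1 ≠ 0)]; simp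
    · rw [show p - 1 + 1 = p by ring]
      rw [Real.rpow_add_one h.ne' p]
      have : p + 1 ≠ 0 := by linarith
      field_simp
      ring

/-- `∫ R^p F ≥ T^(p+1)/(p+1)`. -/
lemma gr_layer {F : ℝ → ℝ} (hF0 : ∀ x, 0 ≤ F x) (hFm : Measurable F) (hF : Integrable F) {p : ℝ}
    (hp : 0 < p) :
    (∫ s, F s) ^ (p + 1) / (p + 1) ≤ ∫ t, (∫ s in Ioi t, F s) ^ p * F t := by
  set T := ∫ s, F s with hTdef
  have hT : 0 ≤ T := integral_nonneg hF0
  set R : ℝ → ℝ := fun t => ∫ s in Ioi t, F s with hR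
  have hRa : Antitone R := gr_tail_anti hF0 hF
  have hR0 : ∀ t, 0 ≤ R t := fun t => integral_nonneg hF0
  have hRT : ∀ t, R t ≤ T := fun t => setIntegral_le_integral hF (Filter.Eventually.of_forall hF0)
  have hRm : Measurable R := hRa.measurable
  have hint : Integrable (fun t => R t ^ p * F t) := by
    refine (hF.const_mul (T ^ p)).mono' (by fun_prop) (Filter.Eventually.of_forall fun t => ?_)
    rw [Real.norm_of_nonneg (mul_nonneg (Real.rpow_nonneg (hR0 t) _) (hF0 t))]
    exact mul_le_mul_of_nonneg_right (Real.rpow_le_rpow (hR0 t) (hRT t) hp.le) (hF0 t)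
  have hnn : 0 ≤ ∫ t, R t ^ p * F t :=
    integral_nonneg fun t => mul_nonneg (Real.rpow_nonneg (hR0 t) _) (hF0 t)
  rw [← ENNReal.ofReal_le_ofReal_iff hnn,
    ofReal_integral_eq_lintegral_ofReal hint
      (Filter.Eventually.of_forall fun t => mul_nonneg (Real.rpow_nonneg (hR0 t) _) (hF0 t))]
  let ν : Measure ℝ := volume.withDensity (fun t => ENNReal.ofReal (F t))
  have e1 : ∫⁻ t, ENNReal.ofReal (R t ^ p * F t) = ∫⁻ t, ENNReal.ofReal (R t ^ p) ∂ν := by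
    rw [lintegral_withDensity_eq_lintegral_mul _ (by fun_prop) (by fun_prop)]
    refine lintegral_congr fun t => ?_
    simp only [Pi.mul_apply]
    rw [ENNReal.ofReal_mul (Real.rpow_nonneg (hR0 t) _), mul_comm]
  rw [e1, lintegral_rpow_eq_lintegral_meas_le_mul _ (Filter.Eventually.of_forall hR0)
    hRm.aemeasurable hp]
  obtain ⟨b1, b2⟩ := gr_beta hp hT
  have e2 : ENNReal.ofReal (T ^ (p + 1) / (p + 1))
      = ENNReal.ofReal p * ∫⁻ r in Ioo 0 T, ENNReal.ofReal ((T - r) * r ^ (p - 1)) := by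
    rw [Measure.restrict_congr_set Ioo_ae_eq_Ioc]
    rw [← ofReal_integral_eq_lintegral_ofReal ((intervalIntegrable_iff_integrableOn_Ioc_of_le hT).1 b1),
      ← intervalIntegral.integral_of_le hT, b2, ← ENNReal.ofReal_mul hp.le]
    · congr 1
      have : p + 1 ≠ 0 := by linarith
      field_simp
    · rw [Filter.EventuallyLE, ae_restrict_iff' measurableSet_Ioc]
      refine Filter.Eventually.of_forall fun r hr => ?_
      exact mul_nonneg (sub_nonneg.2 hr.2) (Real.rpow_nonneg hr.1.le _)
  rw [e2]
  gcongr ENNReal.ofReal p * ?_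
  refine le_trans ?_ (lintegral_mono_set (show Ioo 0 T ⊆ Ioi 0 from fun _ h => h.1))
  apply setLIntegral_mono' measurableSet_Ioo
  intro r hr
  rw [ENNReal.ofReal_mul (sub_nonneg.2 hr.2.le)]
  gcongr
  obtain ⟨t, ht⟩ := gr_tail_exists hF hr.1 hr.2
  have h1 := intervalIntegral.integral_Iic_add_Ioi (b := t) (μ := volume) hF.integrableOn hF.integrableOn
  have h2 : T - r = ∫ s in Iic t, F s := by
    rw [hTdef, ← h1, ← ht]; ring
  rw [h2, ofReal_integral_eq_lintegral_ofReal hF.integrableOn (Filter.Eventually.of_forall hF0),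
    ← withDensity_apply _ measurableSet_Iic]
  apply measure_mono
  intro s hs
  have := hRa (show s ≤ t from hs)
  have ht' : R t = r := ht
  show r ≤ R s
  linarith


lemma gr_supergrad {X : Type*} [NormedAddCommGroup X] [NormedSpace ℝ X] {U : Set X} {g : X → ℝ}
    (hU : IsOpen U) (hg : ConcaveOn ℝ U g) (hgc : ContinuousOn g U) (h0 : (0 : X) ∈ U) :
    ∃ ψ : X →L[ℝ] ℝ, ∀ x ∈ U, g x ≤ g 0 + ψ x := by
  have hS : Convex ℝ {q : X × ℝ | q.1 ∈ U ∧ q.2 < g q.1} := hg.convex_strict_hypograph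
  have hSo : IsOpen {q : X × ℝ | q.1 ∈ U ∧ q.2 < g q.1} := by
    have h1 : ContinuousOn (fun q : X × ℝ => g q.1 - q.2) (Prod.fst ⁻¹' U) := by
      apply ContinuousOn.sub
      · exact hgc.comp continuousOn_fst (fun q hq => hq)
      · exact continuousOn_snd
    have := h1.isOpen_inter_preimage (hU.preimage continuous_fst) (isOpen_Ioi (a := (0:ℝ)))
    convert this using 1
    ext q
    simp
  obtain ⟨Φ, hΦ⟩ := geometric_hahn_banach_open_point hS hSo (x := ((0 : X), g 0)) (by simp)
  have hsplit : ∀ x r, Φ (x, r) = Φ (x, 0) + r * Φ (0, 1) := by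
    intro x r
    have : ((x, r) : X × ℝ) = (x, 0) + r • ((0 : X), (1 : ℝ)) := by simp
    rw [this, map_add, map_smul]; simp
  set c := Φ (0, 1) with hc
  have hc0 : 0 < c := by
    have := hΦ (0, g 0 - 1) ⟨h0, by simp⟩
    rw [hsplit 0 (g 0 - 1), hsplit 0 (g 0)] at this
    linarith
  refine ⟨-(c⁻¹ • (Φ.comp (ContinuousLinearMap.inl ℝ X ℝ))), fun x hx => ?_⟩
  apply le_of_forall_lt
  intro r hr
  have := hΦ (x, r) ⟨hx, hr⟩
  rw [hsplit x r, hsplit 0 (g 0)] at this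
  have hz : Φ ((0 : X), (0 : ℝ)) = 0 := by
    have : ((0 : X), (0 : ℝ)) = 0 := rfl
    rw [this, map_zero]
  rw [hz] at this
  simp only [ContinuousLinearMap.neg_apply, ContinuousLinearMap.smul_apply,
    ContinuousLinearMap.comp_apply, ContinuousLinearMap.inl_apply, smul_eq_mul]
  have e : g 0 + -(c⁻¹ * Φ (x, 0)) = (g 0 * c - Φ (x, 0)) / c := by field_simp; ring
  rw [e, lt_div_iff₀ hc0]
  linarith

section
variable {X : Type*} [NormedAddCommGroup X] [NormedSpace ℝ X] [FiniteDimensional ℝ X]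
  [MeasurableSpace X] [BorelSpace X]

lemma gr_jensen (μ : Measure X) {f : X → ℝ} {U : Set X} {g : X → ℝ}
    (hf0 : ∀ x, 0 ≤ f x) (hf : Integrable f μ) (hfx : Integrable (fun x => f x • x) μ)
    (hc : ∫ x, f x • x ∂μ = 0) (hU : IsOpen U) (hfU : ∀ᵐ x ∂μ, f x ≠ 0 → x ∈ U)
    (hg : ConcaveOn ℝ U g) (hg0 : ∀ x, 0 ≤ g x) (h0 : (0 : X) ∈ U) :
    Integrable (fun x => g x * f x) μ ∧ ∫ x, g x * f x ∂μ ≤ g 0 * ∫ x, f x ∂μ := by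
  have hgc : ContinuousOn g U := hg.continuousOn hU
  obtain ⟨ψ, hψ⟩ := gr_supergrad hU hg hgc h0
  have hle : ∀ᵐ x ∂μ, g x * f x ≤ g 0 * f x + ψ (f x • x) := by
    filter_upwards [hfU] with x hx
    by_cases h : f x = 0
    · simp [h]
    · rw [map_smul, smul_eq_mul]
      nlinarith [hψ x (hx h), hf0 x]
  have hψi : Integrable (fun x => ψ (f x • x)) μ := ψ.integrable_comp hfx
  have hri : Integrable (fun x => g 0 * f x + ψ (f x • x)) μ := (hf.const_mul _).add hψi
  have hm : AEStronglyMeasurable (fun x => g x * f x) μ := by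
    have h1 : AEStronglyMeasurable (U.indicator g) μ := by
      rw [aestronglyMeasurable_indicator_iff hU.measurableSet]
      exact hgc.aestronglyMeasurable hU.measurableSet
    refine (h1.mul hf.aestronglyMeasurable).congr ?_
    filter_upwards [hfU] with x hx
    simp only [Pi.mul_apply]
    by_cases h : f x = 0
    · simp [h]
    · rw [indicator_of_mem (hx h)]
  have hi : Integrable (fun x => g x * f x) μ := by
    refine hri.mono' hm ?_
    filter_upwards [hle] with x hx
    rwa [Real.norm_of_nonneg (mul_nonneg (hg0 x) (hf0 x))]
  refine ⟨hi, ?_⟩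
  calc ∫ x, g x * f x ∂μ ≤ ∫ x, (g 0 * f x + ψ (f x • x)) ∂μ := integral_mono_ae hi hri hle
    _ = g 0 * ∫ x, f x ∂μ + ψ (∫ x, f x • x ∂μ) := by
      rw [integral_add (hf.const_mul _) hψi, integral_const_mul, ψ.integral_comp_comm hfx]
    _ = _ := by rw [hc]; simp

lemma gr_ae_mem (μ : Measure X) [μ.IsAddHaarMeasure] {f : X → ℝ}
    (hK : Convex ℝ {x | f x ≠ 0}) : ∀ᵐ x ∂μ, f x ≠ 0 → x ∈ interior {x | f x ≠ 0} := by
  have h1 : μ (frontier {x | f x ≠ 0}) = 0 := hK.addHaar_frontier μ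
  filter_upwards [measure_eq_zero_iff_ae_notMem.1 h1] with x hx hfx
  by_contra h
  exact hx ⟨subset_closure hfx, h⟩

lemma gr_zero_mem (μ : Measure X) [μ.IsAddHaarMeasure] {f : X → ℝ}
    (hf0 : ∀ x, 0 ≤ f x) (hfx : Integrable (fun x => f x • x) μ)
    (hc : ∫ x, f x • x ∂μ = 0) (hpos : 0 < ∫ x, f x ∂μ)
    (hK : Convex ℝ {x | f x ≠ 0}) : (0 : X) ∈ interior {x | f x ≠ 0} := by
  by_contra h
  obtain ⟨ψ, hψ⟩ := geometric_hahn_banach_open_point hK.interior isOpen_interior h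
  have hψi : Integrable (fun x => ψ (f x • x)) μ := ψ.integrable_comp hfx
  have hz : ∫ x, -ψ (f x • x) ∂μ = 0 := by
    rw [integral_neg, ψ.integral_comp_comm hfx, hc]; simp
  have hae := gr_ae_mem μ hK
  have hψn : Integrable (fun x => -ψ (f x • x)) μ := hψi.neg
  rw [integral_eq_zero_iff_of_nonneg_ae _ hψn] at hz
  · have : f =ᵐ[μ] 0 := by
      filter_upwards [hae, hz] with x hx hx2
      by_contra hne
      have h1 := hψ x (hx hne)
      have h2 : -ψ (f x • x) = 0 := hx2
      rw [map_smul, smul_eq_mul] at h2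
      rw [map_zero] at h1
      have h3 : 0 < f x := lt_of_le_of_ne (hf0 x) (Ne.symm hne)
      nlinarith
    rw [integral_congr_ae this] at hpos
    simp at hpos
  · filter_upwards [hae] with x hx
    by_cases hne : f x = 0
    · simp [hne]
    · have h1 := hψ x (hx hne)
      rw [map_smul, smul_eq_mul]
      rw [map_zero] at h1
      have h3 := hf0 x
      simp only [Pi.zero_apply]
      nlinarith

lemma gr_tangent {p η0 t l : ℝ} (hp : 0 < p) (hη0 : 0 ≤ η0) (ht : 0 < t) (hl0 : 0 < l) (hl1 : l < 1) :
    t ^ (p + 1) + (1 / p + 1) * (1 - l) * (η0 * t - t ^ (p + 1)) ≤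
      (l * t ^ p + (1 - l) * η0) ^ ((p + 1) / p) := by
  have hη : 0 < t ^ p := by positivity
  have hl1' : 0 < 1 - l := sub_pos.2 hl1
  set s := (1 - l) * (η0 - t ^ p) / t ^ p with hs
  have hs1 : -1 ≤ s := by
    rw [hs, le_div_iff₀ hη]
    nlinarith [mul_nonneg hl1'.le hη0, mul_pos hl0 hη]
  have key := one_add_mul_self_le_rpow_one_add hs1 (p := (p + 1) / p)
    (by rw [le_div_iff₀ hp]; linarith)
  have e1 : l * t ^ p + (1 - l) * η0 = t ^ p * (1 + s) := by
    rw [hs]; field_simp; ring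
  rw [e1, Real.mul_rpow hη.le (by linarith), ← Real.rpow_mul ht.le,
    show p * ((p + 1) / p) = p + 1 by field_simp]
  refine le_trans (le_of_eq ?_) (mul_le_mul_of_nonneg_left key (by positivity))
  rw [hs, Real.rpow_add_one ht.ne']
  field_simp
  ring

lemma gr_scaling (μ : Measure X) [μ.IsAddHaarMeasure] {T : X → ℝ} {p : ℝ} (hp : 0 < p)
    (hT0 : ∀ z, 0 ≤ T z) (hTi : Integrable T μ) (hTp : Integrable (fun z => T z ^ (p + 1)) μ)
    (h : ∀ z, T z ≠ 0 → ∀ l : ℝ, 0 < l → l < 1 →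
      l * T z ^ p + (1 - l) * T 0 ^ p ≤ T (l • z) ^ p) :
    (1 / p + 1) * (T 0 ^ p * ∫ z, T z ∂μ) ≤
      (1 / p + 1 + Module.finrank ℝ X) * ∫ z, T z ^ (p + 1) ∂μ := by
  set J := ∫ z, T z ^ (p + 1) ∂μ with hJ
  set I := ∫ z, T z ∂μ with hI
  set d := Module.finrank ℝ X with hd
  have hη0 : 0 ≤ T 0 ^ p := Real.rpow_nonneg (hT0 0) _
  have hJ0 : 0 ≤ J := integral_nonneg fun z => Real.rpow_nonneg (hT0 z) _
  have step : ∀ l : ℝ, 0 < l → l < 1 →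
      l ^ d * ((1 / p + 1) * (T 0 ^ p * I - J)) ≤ d * J := by
    intro l hl0 hl1
    have hl1' : 0 < 1 - l := sub_pos.2 hl1
    have h1 : ∫ z, (T z ^ (p + 1) + (1 / p + 1) * (1 - l) * (T 0 ^ p * T z - T z ^ (p + 1))) ∂μ
        ≤ ∫ z, T (l • z) ^ (p + 1) ∂μ := by
      apply integral_mono
      · exact hTp.add (((hTi.const_mul _).sub hTp).const_mul _)
      · exact (integrable_comp_smul_iff μ (fun z => T z ^ (p + 1)) hl0.ne').2 hTp
      · intro z
        simp only
        by_cases hz : T z = 0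
        · rw [hz, Real.zero_rpow (by linarith)]
          simpa using Real.rpow_nonneg (hT0 _) _
        · have hz0 : 0 < T z := lt_of_le_of_ne (hT0 z) (Ne.symm hz)
          refine (gr_tangent hp hη0 hz0 hl0 hl1).trans ?_
          have e : T (l • z) ^ (p + 1) = (T (l • z) ^ p) ^ ((p + 1) / p) := by
            rw [← Real.rpow_mul (hT0 _)]; congr 1; field_simp
          rw [e]
          apply Real.rpow_le_rpow _ (h z hz l hl0 hl1) (by positivity)
          have := Real.rpow_nonneg (hT0 z) p
          positivity
    have h2 : ∫ z, (T z ^ (p + 1) + (1 / p + 1) * (1 - l) * (T 0 ^ p * T z - T z ^ (p + 1))) ∂μ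
        = J + (1 / p + 1) * (1 - l) * (T 0 ^ p * I - J) := by
      have hD : Integrable (fun z => T 0 ^ p * T z - T z ^ (p + 1)) μ := (hTi.const_mul _).sub hTp
      have hD' : Integrable (fun z => (1 / p + 1) * (1 - l) * (T 0 ^ p * T z - T z ^ (p + 1))) μ :=
        hD.const_mul _
      rw [integral_add hTp hD', integral_const_mul,
        integral_sub (hTi.const_mul _) hTp, integral_const_mul]
    have h3 : ∫ z, T (l • z) ^ (p + 1) ∂μ = (l ^ d)⁻¹ * J := by
      rw [Measure.integral_comp_smul μ (fun z => T z ^ (p + 1)) l]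
      rw [abs_of_pos (by positivity)]; rfl
    rw [h2, h3] at h1
    have hld : 0 < l ^ d := by positivity
    have h4 : l ^ d * (J + (1 / p + 1) * (1 - l) * (T 0 ^ p * I - J)) ≤ J := by
      have := mul_le_mul_of_nonneg_left h1 hld.le
      rwa [mul_inv_cancel_left₀ hld.ne'] at this
    have h5 : 1 - l ^ d ≤ d * (1 - l) := by
      have := one_add_mul_le_pow (a := l - 1) (by linarith) d
      rw [add_sub_cancel] at this
      linarith
    have h6 := mul_le_mul_of_nonneg_right h5 hJ0
    have h7 : (1 - l) * (l ^ d * ((1 / p + 1) * (T 0 ^ p * I - J))) ≤ (1 - l) * (d * J) := by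
      linarith
    exact le_of_mul_le_mul_left h7 hl1'
  have lim : (1 : ℝ) ^ d * ((1 / p + 1) * (T 0 ^ p * I - J)) ≤ d * J := by
    have hcont : Filter.Tendsto (fun l : ℝ => l ^ d * ((1 / p + 1) * (T 0 ^ p * I - J)))
        (nhdsWithin 1 (Iio 1)) (nhds ((1 : ℝ) ^ d * ((1 / p + 1) * (T 0 ^ p * I - J)))) := by
      apply Filter.Tendsto.mono_left _ nhdsWithin_le_nhds
      apply Continuous.tendsto
      fun_prop
    refine le_of_tendsto hcont ?_
    filter_upwards [Ioo_mem_nhdsLT (show (0 : ℝ) < 1 by norm_num)] with l hl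
    exact step l hl.1 hl.2
  rw [one_pow, one_mul] at lim
  linarith
end


lemma gr_quasi {γ a b c l : ℝ} (hγ : 0 < γ) (ha : 0 ≤ a) (hb : a < b) (hc : a < c)
    (hl0 : 0 ≤ l) (hl1 : l ≤ 1) : a < (l * b ^ γ + (1 - l) * c ^ γ) ^ (1 / γ) := by
  have h1 : a ^ γ < b ^ γ := Real.rpow_lt_rpow ha hb hγ
  have h2 : a ^ γ < c ^ γ := Real.rpow_lt_rpow ha hc hγ
  have h3 : a ^ γ < l * b ^ γ + (1 - l) * c ^ γ := by
    rcases hl0.eq_or_lt with h | h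
    · subst h; linarith
    · nlinarith [mul_pos h (sub_pos.2 h1), mul_nonneg (sub_nonneg.2 hl1) (sub_pos.2 h2).le]
  calc a = (a ^ γ) ^ (1 / γ) := by
        rw [← Real.rpow_mul ha, mul_one_div_cancel hγ.ne', Real.rpow_one]
    _ < _ := Real.rpow_lt_rpow (by positivity) h3 (by positivity)

lemma gr_slice_meas {γ : ℝ} (hγ : 0 < γ) {F : ℝ → ℝ} (hF0 : ∀ x, 0 ≤ F x)
    (h : ∀ s t, F s ≠ 0 → F t ≠ 0 → ∀ l : ℝ, 0 ≤ l → l ≤ 1 →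
      (l * F s ^ γ + (1 - l) * F t ^ γ) ^ (1 / γ) ≤ F (l * s + (1 - l) * t)) :
    Measurable F := by
  apply measurable_of_Ioi
  intro a
  by_cases ha : a < 0
  · have : F ⁻¹' Ioi a = univ := by
      ext x; simp only [mem_preimage, mem_Ioi, mem_univ, iff_true]; linarith [hF0 x]
    rw [this]; exact MeasurableSet.univ
  · push Not at ha
    have hc : Convex ℝ (F ⁻¹' Ioi a) := by
      intro s hs t ht l m hl hm hlm
      simp only [mem_preimage, mem_Ioi] at hs ht ⊢
      have hm' : m = 1 - l := by linarith
      subst hm'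
      have := h s t (by linarith : 0 < F s).ne' (by linarith : 0 < F t).ne' l hl (by linarith)
      exact (gr_quasi hγ ha hs ht hl (by linarith)).trans_le this
    exact hc.ordConnected.measurableSet

lemma gr_supp_convex {X : Type*} [AddCommGroup X] [Module ℝ X] {γ : ℝ} (hγ : 0 < γ) {f : X → ℝ}
    (hf0 : ∀ x, 0 ≤ f x)
    (h : ∀ x y, f x ≠ 0 → f y ≠ 0 → ∀ l : ℝ, 0 ≤ l → l ≤ 1 →
      (l * f x ^ γ + (1 - l) * f y ^ γ) ^ (1 / γ) ≤ f (l • x + (1 - l) • y)) :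
    Convex ℝ {x | f x ≠ 0} := by
  intro s hs t ht l m hl hm hlm
  have hm' : m = 1 - l := by linarith
  subst hm'
  have h1 := h s t hs ht l hl (by linarith)
  have := (gr_quasi hγ le_rfl (lt_of_le_of_ne (hf0 s) (Ne.symm hs))
    (lt_of_le_of_ne (hf0 t) (Ne.symm ht)) hl (by linarith)).trans_le h1
  exact this.ne'

section
variable {E : Type*} [NormedAddCommGroup E] [NormedSpace ℝ E]

/-- slice Borell–Brascamp–Lieb -/
lemma gr_slice_bbl {γ : ℝ} (hγ : 0 < γ) {f : E × ℝ → ℝ} (hf0 : ∀ x, 0 ≤ f x)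
    (h : ∀ x y, f x ≠ 0 → f y ≠ 0 → ∀ l : ℝ, 0 ≤ l → l ≤ 1 →
      (l * f x ^ γ + (1 - l) * f y ^ γ) ^ (1 / γ) ≤ f (l • x + (1 - l) • y))
    (hm : ∀ z, Measurable fun t => f (z, t)) {A B C : Set ℝ}
    (hA : MeasurableSet A) (hB : MeasurableSet B) (hC : MeasurableSet C) {l : ℝ}
    (hl0 : 0 < l) (hl1 : l < 1) (hABC : ∀ a ∈ A, ∀ b ∈ B, l * a + (1 - l) * b ∈ C) (z w : E)
    (hz : ∫⁻ t in A, ENNReal.ofReal (f (z, t)) ≠ 0)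
    (hw : ∫⁻ t in B, ENNReal.ofReal (f (w, t)) ≠ 0) :
    ENNReal.ofReal l * (∫⁻ t in A, ENNReal.ofReal (f (z, t))) ^ (γ / (1 + γ)) +
      ENNReal.ofReal (1 - l) * (∫⁻ t in B, ENNReal.ofReal (f (w, t))) ^ (γ / (1 + γ)) ≤
      (∫⁻ t in C, ENNReal.ofReal (f (l • z + (1 - l) • w, t))) ^ (γ / (1 + γ)) := by
  have key : ∀ (S : Set ℝ) (hS : MeasurableSet S) (g : ℝ → ℝ),
      ∫⁻ t in S, ENNReal.ofReal (g t) = ∫⁻ t, ENNReal.ofReal (S.indicator g t) := by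
    intro S hS g
    rw [← lintegral_indicator hS]
    congr 1; ext t
    by_cases ht : t ∈ S <;> simp [ht]
  rw [key A hA] at hz ⊢
  rw [key B hB] at hw ⊢
  rw [key C hC]
  refine gr_bbl hγ ?_ ?_ ?_ ((hm z).indicator hA) ((hm w).indicator hB) ((hm _).indicator hC)
    hl0 hl1 ?_ hz hw
  · exact fun x => indicator_nonneg (fun t _ => hf0 _) x
  · exact fun x => indicator_nonneg (fun t _ => hf0 _) x
  · exact fun x => indicator_nonneg (fun t _ => hf0 _) x
  · intro s t hs ht
    have hsA : s ∈ A := by by_contra hh; simp [hh] at hs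
    have htB : t ∈ B := by by_contra hh; simp [hh] at ht
    rw [indicator_of_mem hsA] at hs ⊢
    rw [indicator_of_mem htB] at ht ⊢
    rw [indicator_of_mem (hABC s hsA t htB)]
    have := h (z, s) (w, t) hs ht l hl0.le hl1.le
    simpa using this

lemma gr_tail_pos {f : E × ℝ → ℝ} (hf0 : ∀ x, 0 ≤ f x) (hm : ∀ z, Measurable fun t => f (z, t))
    {z : E} {t : ℝ} (ht : (z, t) ∈ interior {x | f x ≠ 0}) :
    ∫⁻ s in Ioi t, ENNReal.ofReal (f (z, s)) ≠ 0 := by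
  intro h0
  have hn : {s : ℝ | (z, s) ∈ interior {x | f x ≠ 0}} ∈ nhds t :=
    (Continuous.prodMk_right z).continuousAt.preimage_mem_nhds (isOpen_interior.mem_nhds ht)
  obtain ⟨ε, hε, hsub⟩ := Metric.mem_nhds_iff.1 hn
  rw [lintegral_eq_zero_iff (hm z).ennreal_ofReal] at h0
  have h1 : ∀ᵐ s : ℝ, s ∈ Ioi t → ENNReal.ofReal (f (z, s)) = 0 :=
    (ae_restrict_iff' measurableSet_Ioi).1 h0
  have h2 : volume (Ioo t (t + ε)) = 0 := by
    apply measure_mono_null _ (ae_iff.1 h1)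
    intro s hs
    have h3 : (z, s) ∈ interior {x | f x ≠ 0} := hsub (by
      rw [Metric.mem_ball, Real.dist_eq, abs_of_pos (by linarith [hs.1])]; linarith [hs.2])
    have h4 : f (z, s) ≠ 0 := interior_subset (s := {x | f x ≠ 0}) h3
    have h5 : 0 < f (z, s) := lt_of_le_of_ne (hf0 _) (Ne.symm h4)
    intro hcon
    have := hcon hs.1
    rw [ENNReal.ofReal_eq_zero] at this
    linarith
  rw [Real.volume_Ioo] at h2
  rw [ENNReal.ofReal_eq_zero] at h2
  linarith

lemma gr_real_of_ennreal {a b c l p : ℝ} (ha : 0 ≤ a) (hb : 0 ≤ b) (hc : 0 ≤ c) (hl0 : 0 < l)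
    (hl1 : l < 1) (hp : 0 < p)
    (h : ENNReal.ofReal l * (ENNReal.ofReal a) ^ p + ENNReal.ofReal (1 - l) * (ENNReal.ofReal b) ^ p
      ≤ (ENNReal.ofReal c) ^ p) : l * a ^ p + (1 - l) * b ^ p ≤ c ^ p := by
  have hl : 0 ≤ 1 - l := by linarith
  rw [ENNReal.ofReal_rpow_of_nonneg ha hp.le, ENNReal.ofReal_rpow_of_nonneg hb hp.le,
    ENNReal.ofReal_rpow_of_nonneg hc hp.le, ← ENNReal.ofReal_mul hl0.le, ← ENNReal.ofReal_mul hl,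
    ← ENNReal.ofReal_add (by positivity) (by positivity),
    ENNReal.ofReal_le_ofReal_iff (by positivity)] at h
  exact h

variable [FiniteDimensional ℝ E] [MeasurableSpace E] [BorelSpace E]

lemma gr_slice_int (μ : Measure E) [μ.IsAddHaarMeasure] {γ : ℝ} (hγ : 0 < γ) {f : E × ℝ → ℝ}
    (hf0 : ∀ x, 0 ≤ f x)
    (h : ∀ x y, f x ≠ 0 → f y ≠ 0 → ∀ l : ℝ, 0 ≤ l → l ≤ 1 →
      (l * f x ^ γ + (1 - l) * f y ^ γ) ^ (1 / γ) ≤ f (l • x + (1 - l) • y))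
    (hm : ∀ z, Measurable fun t => f (z, t)) (hf : Integrable f (μ.prod volume))
    (h0 : (0 : E × ℝ) ∈ interior {x | f x ≠ 0}) (z : E) : Integrable fun t => f (z, t) := by
  by_contra hcon
  have hp : 0 < γ / (1 + γ) := by positivity
  have hinf : ∫⁻ t, ENNReal.ofReal (f (z, t)) = ⊤ := by
    by_contra hne
    exact hcon ((lintegral_ofReal_ne_top_iff_integrable (hm z).aestronglyMeasurable
      (Filter.Eventually.of_forall fun t => hf0 _)).1 hne)
  have hd : Dense {w : E | Integrable fun t => f (w, t)} :=
    Measure.dense_of_ae hf.prod_right_ae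
  let V : Set E := {w | ((2 : ℝ) • w - z, (0 : ℝ)) ∈ interior {x | f x ≠ 0}}
  have hV : IsOpen V := isOpen_interior.preimage (by fun_prop)
  have hVn : V.Nonempty := ⟨(1 / 2 : ℝ) • z, by
    have : (2 : ℝ) • (1 / 2 : ℝ) • z - z = 0 := by rw [smul_smul]; simp
    simp only [V, mem_ofPred_eq]
    rw [this]; exact h0⟩
  obtain ⟨w, hwV, hw⟩ := hd.inter_open_nonempty V hV hVn
  have hpos := gr_tail_pos hf0 hm hwV
  have hpos' : ∫⁻ t in univ, ENNReal.ofReal (f ((2 : ℝ) • w - z, t)) ≠ 0 := by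
    intro hh
    apply hpos
    exact le_antisymm ((lintegral_mono_set (subset_univ _)).trans hh.le) bot_le
  have b := gr_slice_bbl hγ hf0 h hm MeasurableSet.univ MeasurableSet.univ MeasurableSet.univ
    (l := 1 / 2) (by norm_num) (by norm_num) (fun _ _ _ _ => mem_univ _) z ((2 : ℝ) • w - z)
    (by rw [setLIntegral_univ, hinf]; simp) hpos'
  have e : (1 / 2 : ℝ) • z + (1 - 1 / 2 : ℝ) • ((2 : ℝ) • w - z) = w := by
    rw [smul_sub, smul_smul]; norm_num
  rw [e] at b
  simp only [setLIntegral_univ] at b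
  rw [hinf, ENNReal.top_rpow_of_pos hp, ENNReal.mul_top (by simp), top_add] at b
  have hfin : ∫⁻ t, ENNReal.ofReal (f (w, t)) ≠ ⊤ :=
    (lintegral_ofReal_ne_top_iff_integrable (hm w).aestronglyMeasurable
      (Filter.Eventually.of_forall fun t => hf0 _)).2 hw
  exact absurd (top_le_iff.1 b) (ENNReal.rpow_ne_top_of_nonneg hp.le hfin)

theorem gr_core (μ : Measure E) [μ.IsAddHaarMeasure] {γ : ℝ} (hγ : 0 < γ) {f : E × ℝ → ℝ}
    (hf0 : ∀ x, 0 ≤ f x)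
    (h : ∀ x y, f x ≠ 0 → f y ≠ 0 → ∀ l : ℝ, 0 ≤ l → l ≤ 1 →
      (l * f x ^ γ + (1 - l) * f y ^ γ) ^ (1 / γ) ≤ f (l • x + (1 - l) • y))
    (hf : Integrable f (μ.prod volume)) (hpos : 0 < ∫ x, f x ∂(μ.prod volume))
    (hfx : Integrable (fun x => f x • x) (μ.prod volume))
    (hc : ∫ x, f x • x ∂(μ.prod volume) = 0) :
    ((γ + 1) / (γ * (Module.finrank ℝ E + 1) + γ + 1)) ^ ((γ + 1) / γ) * ∫ s : ℝ, f (0, s) ≤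
      ∫ s in Ioi (0 : ℝ), f (0, s) := by
  set d := Module.finrank ℝ E with hd
  have hm : ∀ z, Measurable fun t => f (z, t) := by
    intro z
    apply gr_slice_meas hγ (fun t => hf0 _)
    intro s t hs ht l hl0 hl1
    have := h (z, s) (z, t) hs ht l hl0 hl1
    have e : l • (z, s) + (1 - l) • (z, t) = (z, l * s + (1 - l) * t) := by
      ext
      · simp only [Prod.fst_add, Prod.smul_fst]; rw [← add_smul]; simp
      · simp
    rwa [e] at this
  have hK := gr_supp_convex hγ hf0 h
  have h0 := gr_zero_mem (μ.prod volume) hf0 hfx hc hpos hK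
  have hae := gr_ae_mem (μ.prod volume) hK
  set U := interior {x | f x ≠ 0} with hU
  have hUo : IsOpen U := isOpen_interior
  have hi : ∀ z, Integrable fun t => f (z, t) := gr_slice_int μ hγ hf0 h hm hf h0
  set p := γ / (1 + γ) with hpdef
  have hp : 0 < p := by positivity
  have hlin : ∀ (S : Set ℝ) z, ∫⁻ t in S, ENNReal.ofReal (f (z, t)) =
      ENNReal.ofReal (∫ t in S, f (z, t)) := by
    intro S z
    rw [ofReal_integral_eq_lintegral_ofReal (hi z).integrableOn
      (Filter.Eventually.of_forall fun t => hf0 _)]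
  let ρ : E × ℝ → ℝ := fun x => (∫ s in Ioi x.2, f (x.1, s)) ^ p
  let T : E → ℝ := fun z => ∫ t, f (z, t)
  have hR0 : ∀ (S : Set ℝ) z, 0 ≤ ∫ s in S, f (z, s) := fun S z =>
    integral_nonneg fun t => hf0 _
  have hT0 : ∀ z, 0 ≤ T z := fun z => integral_nonneg fun t => hf0 _
  have hρ0 : ∀ x, 0 ≤ ρ x := fun x => Real.rpow_nonneg (hR0 _ _) _
  have hρc : ConcaveOn ℝ U ρ := by
    refine concaveOn_iff_forall_pos.2 ⟨hK.interior, ?_⟩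
    intro x hx y hy l m hl hm' hlm
    have hmm : m = 1 - l := by linarith
    subst hmm
    have b := gr_slice_bbl hγ hf0 h hm (A := Ioi x.2) (B := Ioi y.2)
      (C := Ioi (l * x.2 + (1 - l) * y.2)) measurableSet_Ioi measurableSet_Ioi
      measurableSet_Ioi hl (by linarith) (fun a ha b hb => by
        simp only [mem_Ioi] at *
        nlinarith [mul_pos hl (sub_pos.2 ha), mul_pos hm' (sub_pos.2 hb)]) x.1 y.1
      (gr_tail_pos hf0 hm hx) (gr_tail_pos hf0 hm hy)
    rw [hlin, hlin, hlin] at b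
    have := gr_real_of_ennreal (hR0 _ _) (hR0 _ _) (hR0 _ _) hl (by linarith) hp b
    simpa [ρ] using this
  obtain ⟨hρi, hJ⟩ := gr_jensen (μ.prod volume) hf0 hf hfx hc hUo hae hρc hρ0 h0
  have hTi : Integrable T μ := hf.integral_prod_left
  have hTI : ∫ z, T z ∂μ = ∫ x, f x ∂(μ.prod volume) := (integral_prod f hf).symm
  have hQi : Integrable (fun z => ∫ t, ρ (z, t) * f (z, t)) μ := hρi.integral_prod_left
  have hQI : ∫ z, (∫ t, ρ (z, t) * f (z, t)) ∂μ = ∫ x, ρ x * f x ∂(μ.prod volume) :=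
    (integral_prod _ hρi).symm
  have hlay : ∀ z, T z ^ (p + 1) / (p + 1) ≤ ∫ t, ρ (z, t) * f (z, t) := fun z =>
    gr_layer (fun t => hf0 (z, t)) (hm z) (hi z) hp
  have hTp : Integrable (fun z => T z ^ (p + 1)) μ := by
    refine (hQi.const_mul (p + 1)).mono' ?_ ?_
    · exact (hTi.aestronglyMeasurable.aemeasurable.pow_const _).aestronglyMeasurable
    · refine Filter.Eventually.of_forall fun z => ?_
      rw [Real.norm_of_nonneg (Real.rpow_nonneg (hT0 z) _)]
      have := hlay z
      rw [div_le_iff₀ (by positivity)] at this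
      linarith
  have hlayI : (∫ z, T z ^ (p + 1) ∂μ) / (p + 1) ≤ ∫ x, ρ x * f x ∂(μ.prod volume) := by
    rw [← hQI, ← integral_div]
    exact integral_mono (hTp.div_const _) hQi hlay
  have hT00 : ENNReal.ofReal (T 0) ≠ 0 := by
    have h1 := gr_tail_pos hf0 hm h0
    intro hh
    apply h1
    have h2 := hlin univ (0 : E)
    rw [setIntegral_univ] at h2
    exact le_antisymm ((lintegral_mono_set (subset_univ _)).trans (h2.trans hh).le) bot_le
  have hsc := gr_scaling μ hp hT0 hTi hTp (by
    intro z hz l hl0 hl1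
    have b := gr_slice_bbl hγ hf0 h hm MeasurableSet.univ MeasurableSet.univ MeasurableSet.univ
      hl0 hl1 (fun _ _ _ _ => mem_univ _) z 0
      (by
        rw [hlin, setIntegral_univ]
        simpa using lt_of_le_of_ne (hT0 z) (Ne.symm hz))
      (by rw [hlin, setIntegral_univ]; exact hT00)
    rw [hlin, hlin, hlin] at b
    have := gr_real_of_ennreal (hR0 _ _) (hR0 _ _) (hR0 _ _) hl0 hl1 hp b
    simpa [T] using this)
  rw [hTI] at hsc
  set I := ∫ x, f x ∂(μ.prod volume) with hI
  set J := ∫ z, T z ^ (p + 1) ∂μ with hJd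
  set N : ℝ := (d : ℝ) with hN
  have hN0 : 0 ≤ N := Nat.cast_nonneg _
  have hfin : (γ + 1) / (γ * (N + 1) + γ + 1) * T 0 ^ p ≤ ρ 0 := by
    have h1 : J ≤ (p + 1) * (ρ 0 * I) := by
      have := hlayI.trans hJ
      rw [div_le_iff₀ (by positivity)] at this
      linarith
    have h2 : (1 / p + 1) * (T 0 ^ p * I) ≤ (1 / p + 1 + N) * ((p + 1) * (ρ 0 * I)) :=
      hsc.trans (mul_le_mul_of_nonneg_left h1 (by positivity))
    have h3 : (1 / p + 1) * T 0 ^ p ≤ (1 / p + 1 + N) * ((p + 1) * ρ 0) := by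
      apply le_of_mul_le_mul_right _ hpos
      linarith
    have e : 1 / p = (1 + γ) / γ := by rw [hpdef]; field_simp
    have e2 : p + 1 = p * (1 / p + 1) := by field_simp; ring
    have h4 : T 0 ^ p ≤ (1 / p + 1 + N) * (p * ρ 0) := by
      have : 0 < 1 / p + 1 := by positivity
      apply le_of_mul_le_mul_left _ this
      rw [e2] at h3
      linarith
    have e3 : (1 / p + 1 + N) * (p * ρ 0) = ρ 0 * ((γ * (N + 1) + γ + 1) / (γ + 1)) := by
      rw [e, hpdef]; field_simp; ring
    rw [e3] at h4
    rw [div_mul_eq_mul_div, div_le_iff₀ (by positivity)]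
    rw [← mul_div_assoc, le_div_iff₀ (by positivity)] at h4
    linarith
  have hfin2 := Real.rpow_le_rpow (z := (γ + 1) / γ) (by
    have := Real.rpow_nonneg (hT0 0) p
    positivity) hfin (by positivity)
  have e4 : p * ((γ + 1) / γ) = 1 := by rw [hpdef]; field_simp; ring
  rw [Real.mul_rpow (by positivity) (Real.rpow_nonneg (hT0 0) p), ← Real.rpow_mul (hT0 0), e4,
    Real.rpow_one] at hfin2
  have e5 : ρ 0 ^ ((γ + 1) / γ) = ∫ s in Ioi (0 : ℝ), f (0, s) := by
    change ((∫ s in Ioi (0 : ℝ), f (0, s)) ^ p) ^ ((γ + 1) / γ) = _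
    rw [← Real.rpow_mul (hR0 _ _), e4, Real.rpow_one]
  rw [e5] at hfin2
  exact hfin2
end


theorem gr_transfer {E X : Type} [NormedAddCommGroup E] [NormedSpace ℝ E] [FiniteDimensional ℝ E]
    [MeasurableSpace E] [BorelSpace E] [NormedAddCommGroup X] [NormedSpace ℝ X]
    [FiniteDimensional ℝ X] [MeasurableSpace X] [BorelSpace X] (ν : Measure X) [ν.IsAddHaarMeasure]
    (L : (E × ℝ) ≃L[ℝ] X) {γ : ℝ} (hγ : 0 < γ) {f : X → ℝ}
    (hf0 : ∀ x, 0 ≤ f x)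
    (h : ∀ x y, f x ≠ 0 → f y ≠ 0 → ∀ l : ℝ, 0 ≤ l → l ≤ 1 →
      (l * f x ^ γ + (1 - l) * f y ^ γ) ^ (1 / γ) ≤ f (l • x + (1 - l) • y))
    (hf : Integrable f ν) (hpos : 0 < ∫ x, f x ∂ν)
    (hfx : Integrable (fun x => f x • x) ν)
    (hc : ∫ x, f x • x ∂ν = 0) :
    ((γ + 1) / (γ * (Module.finrank ℝ E + 1) + γ + 1)) ^ ((γ + 1) / γ) * ∫ s : ℝ, f (L (0, s)) ≤
      ∫ s in Ioi (0 : ℝ), f (L (0, s)) := by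
  let μ : Measure E := Measure.addHaar
  let e : (E × ℝ) ≃ᵐ X := L.toHomeomorph.toMeasurableEquiv
  let m : Measure (E × ℝ) := μ.prod volume
  have hm : (m.map L).IsAddHaarMeasure := L.isAddHaarMeasure_map m
  obtain ⟨c, hc0, hcν⟩ : ∃ c : NNReal, c ≠ 0 ∧ ν = c • m.map e := by
    have h1 := Measure.isAddLeftInvariant_eq_smul ν (m.map L)
    refine ⟨_, ?_, h1⟩
    intro hz
    rw [hz, zero_smul] at h1
    exact NeZero.ne ν h1
  have hc1 : 0 < (c : ℝ) := by positivity
  have hint : ∀ {Y : Type} [NormedAddCommGroup Y] [NormedSpace ℝ Y] (g : X → Y),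
      Integrable g ν → Integrable (fun q => g (e q)) m := by
    intro Y _ _ g hg
    rw [hcν] at hg
    have h2 : Integrable g (m.map e) := by
      rw [← integrable_smul_measure (c := (c : ENNReal)) (by simpa using hc0) (by simp)]
      exact hg
    exact (integrable_map_equiv e g).1 h2
  have hI : ∀ {Y : Type} [NormedAddCommGroup Y] [NormedSpace ℝ Y] (g : X → Y),
      ∫ x, g x ∂ν = (c : ℝ) • ∫ q, g (e q) ∂m := by
    intro Y _ _ g
    rw [hcν, integral_smul_nnreal_measure, integral_map_equiv]
    rfl
  have he : ∀ q, e q = L q := fun q => rfl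
  have hpos' : 0 < ∫ q, f (L q) ∂m := by
    rw [hI] at hpos
    exact (pos_iff_pos_of_mul_pos hpos).1 hc1
  have hfx' : Integrable (fun q => f (L q) • q) m := by
    have h3 := (L.symm : X →L[ℝ] E × ℝ).integrable_comp (hint _ hfx)
    refine h3.congr (Filter.Eventually.of_forall fun q => ?_)
    simp [he]
  have hc' : ∫ q, f (L q) • q ∂m = 0 := by
    have h4 : ∫ q, f (L q) • L q ∂m = 0 := by
      rw [hI] at hc
      exact (smul_eq_zero.1 hc).resolve_left hc1.ne'
    have h5 : L (∫ q, f (L q) • q ∂m) = 0 := by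
      rw [← h4]
      have := (L : (E × ℝ) →L[ℝ] X).integral_comp_comm hfx'
      simpa using this.symm
    exact (map_eq_zero_iff L L.injective).1 h5
  refine gr_core μ hγ (f := fun q => f (L q)) (fun q => hf0 _) ?_ (hint f hf) hpos' hfx' hc'
  intro x y hx hy l hl0 hl1
  have := h (L x) (L y) hx hy l hl0 hl1
  simpa using this

/-- **Grünbaum's inequality for one-dimensional sections of γ-concave functions.**
If `f : ℝⁿ → [0,∞)` is γ-concave (γ > 0) with `0 < ∫ f < ∞` and centroid at the
origin, and `θ` is a unit vector, then
`∫_0^∞ f(sθ) ds ≥ ((γ+1)/(γn+γ+1))^((γ+1)/γ) ∫_{-∞}^∞ f(sθ) ds`. -/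
theorem grunbaum_one_dim_sections
    (n : ℕ) (hn : 1 ≤ n)
    (θ : EuclideanSpace ℝ (Fin n)) (hθ : ‖θ‖ = 1)
    (γ : ℝ) (hγ : 0 < γ)
    (f : EuclideanSpace ℝ (Fin n) → ℝ)
    (hf_nonneg : ∀ x, 0 ≤ f x)
    (hf_concave : ∀ x y : EuclideanSpace ℝ (Fin n), f x ≠ 0 → f y ≠ 0 →
      ∀ l : ℝ, 0 ≤ l → l ≤ 1 →
        (l * f x ^ γ + (1 - l) * f y ^ γ) ^ (1 / γ) ≤ f (l • x + (1 - l) • y))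
    (hf_int : Integrable f)
    (hf_pos : 0 < ∫ x, f x)
    (hf_cent_int : Integrable (fun x => f x • x))
    (hf_cent : (∫ x, f x • x) = (0 : EuclideanSpace ℝ (Fin n))) :
    ((γ + 1) / (γ * n + γ + 1)) ^ ((γ + 1) / γ) * ∫ s : ℝ, f (s • θ) ≤
      ∫ s in Ioi (0 : ℝ), f (s • θ) := by
  have hθ0 : θ ≠ 0 := by
    intro hz; rw [hz, norm_zero] at hθ; exact zero_ne_one hθ
  let E : Submodule ℝ (EuclideanSpace ℝ (Fin n)) := (ℝ ∙ θ)ᗮ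
  have hdim : Module.finrank ℝ E + 1 = n := by
    have h1 := Submodule.finrank_add_finrank_orthogonal (ℝ ∙ θ)
    rw [finrank_span_singleton hθ0, finrank_euclideanSpace_fin] at h1
    change Module.finrank ℝ (ℝ ∙ θ)ᗮ + 1 = n
    omega
  let φ : (E × ℝ) →ₗ[ℝ] EuclideanSpace ℝ (Fin n) :=
    E.subtype.coprod (LinearMap.toSpanSingleton ℝ _ θ)
  have hφ : ∀ z t, φ (z, t) = (z : EuclideanSpace ℝ (Fin n)) + t • θ := fun z t => by simp [φ]
  have hinj : Function.Injective φ := by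
    rw [injective_iff_map_eq_zero]
    rintro ⟨z, t⟩ hzt
    rw [hφ] at hzt
    have h1 : ⟪θ, (z : EuclideanSpace ℝ (Fin n))⟫ = 0 :=
      Submodule.mem_orthogonal_singleton_iff_inner_right.1 z.2
    have h2 : ⟪θ, (z : EuclideanSpace ℝ (Fin n)) + t • θ⟫ = t := by
      rw [inner_add_right, h1, inner_smul_right, real_inner_self_eq_norm_sq, hθ]; simp
    rw [hzt, inner_zero_right] at h2
    subst h2
    rw [zero_smul, add_zero] at hzt
    have : z = 0 := Subtype.ext hzt
    rw [this]; rfl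
  have hfr : Module.finrank ℝ (E × ℝ) = Module.finrank ℝ (EuclideanSpace ℝ (Fin n)) := by
    rw [Module.finrank_prod, Module.finrank_self, hdim, finrank_euclideanSpace_fin]
  let L := (LinearEquiv.ofBijective φ
    ⟨hinj, (LinearMap.injective_iff_surjective_of_finrank_eq_finrank hfr).1 hinj⟩).toContinuousLinearEquiv
  have hL : ∀ s : ℝ, L (0, s) = s • θ := fun s => by
    change φ (0, s) = _
    rw [hφ]; simp
  have key := gr_transfer volume L hγ hf_nonneg hf_concave hf_int hf_pos hf_cent_int hf_cent
  simp only [hL] at key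
  have hdim' : ((Module.finrank ℝ E : ℝ) + 1) = n := by exact_mod_cast hdim
  rw [hdim'] at key
  exact key
end

section
/- Let n ≥ 1, θ ∈ S^{n-1}, γ ∈ (0,∞), and let f : ℝ^n → [0,∞) be a γ-concave function, continuous on its support K_f, with 0 < ∫_{ℝ^n} f(x) dx < ∞ and centroid at the origin. Then equality ∫_0^∞ f(sθ) ds = ((γ+1)/(γn+γ+1))^{(γ+1)/γ} · ∫_{-∞}^∞ f(sθ) ds holds if and only if there exist constants m, r > 0, a unit vector ξ ∈ S^{n-1} with ⟨θ,ξ⟩ > 0, and an (n-1)-dimensional convex body D ⊂ ξ^⊥ whose centroid (taken within ξ^⊥) is at the origin, such that K_f = conv( −(nγ/(γ+1)) r θ , r θ + D ) and f(x) = m · 𝟙_{K_f}(x) · ( −⟨x,ξ⟩ + r⟨θ,ξ⟩ )^{1/γ} for all x. -/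
open MeasureTheory Set
open scoped RealInnerProductSpace
set_option linter.deprecated false

lemma gz_bm1 {A B C : Set ℝ} (hA : A.Nonempty) (hB : B.Nonempty) (hC : C.OrdConnected)
    {l : ℝ} (hl0 : 0 < l) (hl1 : l < 1)
    (h : ∀ a ∈ A, ∀ b ∈ B, (1 - l) * a + l * b ∈ C) :
    ENNReal.ofReal (1 - l) * volume A + ENNReal.ofReal l * volume B ≤ volume C := by
  have := hA.to_subtype
  have := hB.to_subtype
  have key : ∀ a ∈ A, ∀ a' ∈ A, ∀ b ∈ B, ∀ b' ∈ B, a ≤ a' → b ≤ b' →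
      ENNReal.ofReal (1 - l) * edist a a' + ENNReal.ofReal l * edist b b' ≤ volume C := by
    intro a ha a' ha' b hb b' hb' haa hbb
    have h1 : Icc ((1 - l) * a + l * b) ((1 - l) * a' + l * b') ⊆ C :=
      hC.out (h a ha b hb) (h a' ha' b' hb')
    refine le_trans (le_of_eq ?_) (measure_mono h1)
    rw [Real.volume_Icc, edist_dist, edist_dist, ← ENNReal.ofReal_mul (by linarith),
      ← ENNReal.ofReal_mul hl0.le, ← ENNReal.ofReal_add
        (mul_nonneg (by linarith) dist_nonneg) (mul_nonneg hl0.le dist_nonneg)]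
    congr 1
    rw [Real.dist_eq, Real.dist_eq, abs_sub_comm, abs_of_nonneg (by linarith), abs_sub_comm b,
      abs_of_nonneg (by linarith)]
    ring
  have hd : ∀ (S : Set ℝ), volume S ≤ ⨆ p : S × S, edist (p.1 : ℝ) (p.2 : ℝ) := by
    intro S
    refine (Real.volume_le_diam S).trans ?_
    refine Metric.ediam_le ?_
    intro x hx y hy
    exact le_iSup (fun p : S × S => edist (p.1 : ℝ) (p.2 : ℝ)) (⟨x, hx⟩, ⟨y, hy⟩)
  calc ENNReal.ofReal (1 - l) * volume A + ENNReal.ofReal l * volume B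
      ≤ ENNReal.ofReal (1 - l) * (⨆ p : A × A, edist (p.1 : ℝ) (p.2 : ℝ))
        + ENNReal.ofReal l * (⨆ p : B × B, edist (p.1 : ℝ) (p.2 : ℝ)) := by
        gcongr <;> exact hd _
    _ ≤ volume C := by
        rw [ENNReal.mul_iSup, ENNReal.mul_iSup]
        refine ENNReal.iSup_add_iSup_le ?_
        rintro ⟨⟨a, ha⟩, ⟨a', ha'⟩⟩ ⟨⟨b, hb⟩, ⟨b', hb'⟩⟩
        simp only
        rcases le_total a a' with h1 | h1 <;> rcases le_total b b' with h2 | h2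
        · exact key a ha a' ha' b hb b' hb' h1 h2
        · rw [edist_comm b]; exact key a ha a' ha' b' hb' b hb h1 h2
        · rw [edist_comm a]; exact key a' ha' a ha b hb b' hb' h1 h2
        · rw [edist_comm a, edist_comm b]; exact key a' ha' a ha b' hb' b hb h1 h2

lemma gz_holder {l b J0 J1 m0 m1 : ℝ} (hl0 : 0 < l) (hl1 : l < 1) (hb0 : 0 < b) (hb1 : b < 1)
    (hJ0 : 0 < J0) (hJ1 : 0 < J1) (hm0 : 0 < m0) (hm1 : 0 < m1) :
    (1 - l) * (J0 ^ b * m0 ^ (1 - b)) + l * (J1 ^ b * m1 ^ (1 - b)) ≤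
      ((1 - l) * J0 + l * J1) ^ b * ((1 - l) * m0 + l * m1) ^ (1 - b) := by
  have hl' : 0 < 1 - l := by linarith
  set J := (1 - l) * J0 + l * J1 with hJ
  set m := (1 - l) * m0 + l * m1 with hm
  have hJp : 0 < J := by positivity
  have hmp : 0 < m := by positivity
  have e : ∀ x y : ℝ, 0 < x → 0 < y →
      x ^ b * y ^ (1 - b) ≤ (b * (x / J) + (1 - b) * (y / m)) * (J ^ b * m ^ (1 - b)) := by
    intro x y hx hy
    have := Real.geom_mean_le_arith_mean2_weighted hb0.le (by linarith : 0 ≤ 1 - b)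
      (div_pos hx hJp).le (div_pos hy hmp).le (by ring)
    have h2 := mul_le_mul_of_nonneg_right this (by positivity : 0 ≤ J ^ b * m ^ (1 - b))
    refine le_trans (le_of_eq ?_) h2
    rw [Real.div_rpow hx.le hJp.le, Real.div_rpow hy.le hmp.le]
    have : J ^ b ≠ 0 := by positivity
    have : m ^ (1 - b) ≠ 0 := by positivity
    field_simp
  have e0 := mul_le_mul_of_nonneg_left (e J0 m0 hJ0 hm0) hl'.le
  have e1 := mul_le_mul_of_nonneg_left (e J1 m1 hJ1 hm1) hl0.le
  refine (add_le_add e0 e1).trans (le_of_eq ?_)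
  have : (1 - l) * (b * (J0 / J) + (1 - b) * (m0 / m)) + l * (b * (J1 / J) + (1 - b) * (m1 / m))
      = b * (J / J) + (1 - b) * (m / m) := by
    rw [hJ, hm]; ring
  rw [div_self hJp.ne', div_self hmp.ne'] at this
  calc _ = ((1 - l) * (b * (J0 / J) + (1 - b) * (m0 / m)) +
    l * (b * (J1 / J) + (1 - b) * (m1 / m))) * (J ^ b * m ^ (1 - b)) := by ring
    _ = _ := by rw [this]; ring

lemma gz_sup {γ : ℝ} (hγ : 0 < γ) {h : ℝ → ℝ} (hn : ∀ s, 0 ≤ h s) {C : ℝ} (hC : ∀ s, h s ≤ C)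
    (hI : 0 < ∫ s, h s) :
    ∃ m, 0 < m ∧ (∀ s, h s ^ γ ≤ m) ∧ ∀ a < m, ∃ s, a < h s ^ γ := by
  have hne : ∃ s, h s ≠ 0 := by
    by_contra! hc
    have : h = fun _ => 0 := funext hc
    rw [this] at hI
    simp at hI
  obtain ⟨s0, hs0⟩ := hne
  have hb : BddAbove (range fun s => h s ^ γ) := by
    refine ⟨C ^ γ, ?_⟩
    rintro _ ⟨s, rfl⟩
    exact Real.rpow_le_rpow (hn s) (hC s) hγ.le
  refine ⟨⨆ s, h s ^ γ, ?_, fun s => le_ciSup hb s, fun a ha => exists_lt_of_lt_ciSup ha⟩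
  exact lt_of_lt_of_le (Real.rpow_pos_of_pos (lt_of_le_of_ne (hn s0) hs0.symm) γ) (le_ciSup hb s0)

lemma gz_layer {γ : ℝ} (hγ : 0 < γ) {h : ℝ → ℝ} (hn : ∀ s, 0 ≤ h s) (hm : Measurable h)
    (hi : Integrable h) {m : ℝ} (hm0 : 0 < m) :
    ENNReal.ofReal ((∫ s, h s) / m ^ (1 / γ)) =
      ENNReal.ofReal (1 / γ) *
        ∫⁻ t in Ioi (0 : ℝ), volume {s | t < h s ^ γ / m} * ENNReal.ofReal (t ^ (1 / γ - 1)) := by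
  have hq : 0 < 1 / γ := by positivity
  rw [← lintegral_rpow_eq_lintegral_meas_lt_mul volume (f := fun s => h s ^ γ / m)]
  · rw [← integral_div, ofReal_integral_eq_lintegral_ofReal (hi.div_const _)]
    · refine lintegral_congr fun s => ?_
      congr 1
      rw [Real.div_rpow (Real.rpow_nonneg (hn s) _) hm0.le, ← Real.rpow_mul (hn s)]
      rw [mul_one_div_cancel hγ.ne', Real.rpow_one]
    · exact Filter.Eventually.of_forall fun s => div_nonneg (hn s) (by positivity)
  · exact Filter.Eventually.of_forall fun s =>
      div_nonneg (Real.rpow_nonneg (hn s) _) hm0.le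
  · exact ((hm.pow_const γ).div_const m).aemeasurable
  · exact hq

theorem gz_bbl {γ l : ℝ} (hγ : 0 < γ) (hl0 : 0 < l) (hl1 : l < 1) {h0 h1 h2 : ℝ → ℝ}
    (n0 : ∀ s, 0 ≤ h0 s) (n1 : ∀ s, 0 ≤ h1 s) (n2 : ∀ s, 0 ≤ h2 s)
    (m0 : Measurable h0) (m1 : Measurable h1) (m2 : Measurable h2)
    {C : ℝ} (b0 : ∀ s, h0 s ≤ C) (b1 : ∀ s, h1 s ≤ C)
    (i0 : Integrable h0) (i1 : Integrable h1) (i2 : Integrable h2)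
    (c2 : ∀ t, 0 < t → OrdConnected {s | t < h2 s ^ γ})
    (h : ∀ s t, h0 s ≠ 0 → h1 t ≠ 0 →
      ((1 - l) * h0 s ^ γ + l * h1 t ^ γ) ^ (1 / γ) ≤ h2 ((1 - l) * s + l * t))
    (I0 : 0 < ∫ s, h0 s) (I1 : 0 < ∫ s, h1 s) :
    (1 - l) * (∫ s, h0 s) ^ (γ / (γ + 1)) + l * (∫ s, h1 s) ^ (γ / (γ + 1)) ≤
      (∫ s, h2 s) ^ (γ / (γ + 1)) := by
  have hl' : 0 < 1 - l := by linarith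
  obtain ⟨M0, hM0, hle0, hlt0⟩ := gz_sup hγ n0 b0 I0
  obtain ⟨M1, hM1, hle1, hlt1⟩ := gz_sup hγ n1 b1 I1
  set M := (1 - l) * M0 + l * M1 with hM
  have hMp : 0 < M := by positivity
  have lev : ∀ t : ℝ, 0 < t → ENNReal.ofReal (1 - l) * volume {s | t < h0 s ^ γ / M0} +
      ENNReal.ofReal l * volume {s | t < h1 s ^ γ / M1} ≤ volume {s | t < h2 s ^ γ / M} := by
    intro t ht
    rcases lt_or_ge t 1 with ht1 | ht1
    · refine gz_bm1 ?_ ?_ ?_ hl0 hl1 ?_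
      · obtain ⟨s, hs⟩ := hlt0 (t * M0) (by nlinarith)
        exact ⟨s, by rw [mem_setOf_eq, lt_div_iff₀ hM0]; exact hs⟩
      · obtain ⟨s, hs⟩ := hlt1 (t * M1) (by nlinarith)
        exact ⟨s, by rw [mem_setOf_eq, lt_div_iff₀ hM1]; exact hs⟩
      · have := c2 (t * M) (by positivity)
        convert this using 3
        rw [lt_div_iff₀ hMp]
      · intro a ha b hb
        rw [mem_setOf_eq, lt_div_iff₀ hM0] at ha
        rw [mem_setOf_eq, lt_div_iff₀ hM1] at hb
        rw [mem_setOf_eq, lt_div_iff₀ hMp]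
        have ha0 : h0 a ≠ 0 := by
          intro h'; rw [h', Real.zero_rpow hγ.ne'] at ha; nlinarith [mul_pos ht hM0]
        have hb0 : h1 b ≠ 0 := by
          intro h'; rw [h', Real.zero_rpow hγ.ne'] at hb; nlinarith [mul_pos ht hM1]
        have hh := h a b ha0 hb0
        have hnn : 0 ≤ (1 - l) * h0 a ^ γ + l * h1 b ^ γ :=
          add_nonneg (mul_nonneg hl'.le (Real.rpow_nonneg (n0 _) _))
            (mul_nonneg hl0.le (Real.rpow_nonneg (n1 _) _))
        have h3 := Real.rpow_le_rpow (Real.rpow_nonneg hnn _) hh hγ.le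
        rw [← Real.rpow_mul hnn, one_div_mul_cancel hγ.ne', Real.rpow_one] at h3
        have h4 := mul_lt_mul_of_pos_left ha hl'
        have h5 := mul_lt_mul_of_pos_left hb hl0
        rw [hM]; linarith
    · have e0 : {s | t < h0 s ^ γ / M0} = ∅ := by
        ext s; simp only [mem_setOf_eq, mem_empty_iff_false, iff_false, not_lt]
        rw [div_le_iff₀ hM0]; nlinarith [hle0 s]
      have e1 : {s | t < h1 s ^ γ / M1} = ∅ := by
        ext s; simp only [mem_setOf_eq, mem_empty_iff_false, iff_false, not_lt]
        rw [div_le_iff₀ hM1]; nlinarith [hle1 s]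
      simp [e0, e1]
  set q := 1 / γ with hq
  have hqp : 0 < q := by positivity
  set J0 := (∫ s, h0 s) / M0 ^ q with hJ0
  set J1 := (∫ s, h1 s) / M1 ^ q with hJ1
  set J2 := (∫ s, h2 s) / M ^ q with hJ2
  have hJ0p : 0 < J0 := by positivity
  have hJ1p : 0 < J1 := by positivity
  have hI2 : 0 ≤ ∫ s, h2 s := integral_nonneg n2
  have hJ2p : 0 ≤ J2 := by positivity
  have l0 := gz_layer hγ n0 m0 i0 hM0
  have l1 := gz_layer hγ n1 m1 i1 hM1
  have l2 := gz_layer hγ n2 m2 i2 hMp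
  have hJ : (1 - l) * J0 + l * J1 ≤ J2 := by
    rw [← ENNReal.ofReal_le_ofReal_iff hJ2p, ENNReal.ofReal_add (by positivity) (by positivity),
      ENNReal.ofReal_mul hl'.le, ENNReal.ofReal_mul hl0.le, l0, l1, l2]
    have mt : ∀ (g : ℝ → ℝ), Measurable fun t : ℝ => volume {s | t < g s} := by
      intro g
      have : Antitone fun t : ℝ => volume {s | t < g s} := by
        intro a b hab
        exact measure_mono fun s hs => lt_of_le_of_lt hab hs
      exact this.measurable
    have mt' : Measurable fun t : ℝ => ENNReal.ofReal (t ^ (q - 1)) := by fun_prop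
    calc _ = ENNReal.ofReal q * ∫⁻ t in Ioi (0 : ℝ),
          (ENNReal.ofReal (1 - l) * volume {s | t < h0 s ^ γ / M0} +
      ENNReal.ofReal l * volume {s | t < h1 s ^ γ / M1}) * ENNReal.ofReal (t ^ (q - 1)) := by
          simp_rw [add_mul, mul_assoc]
          rw [lintegral_add_left, lintegral_const_mul, lintegral_const_mul]
          · ring
          · exact (mt _).mul mt'
          · exact (mt _).mul mt'
          · exact ((mt _).mul mt').const_mul _
      _ ≤ _ := by
          gcongr ENNReal.ofReal q * ?_
          refine setLIntegral_mono' measurableSet_Ioi fun t ht => ?_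
          gcongr
          exact lev t ht
  have hb : γ / (γ + 1) = 1 / (q + 1) := by rw [hq]; field_simp; ring
  set b := γ / (γ + 1) with hbdef
  have hb0 : 0 < b := by positivity
  have hb1 : b < 1 := by rw [hbdef, div_lt_one (by positivity)]; linarith
  have hqb : q * b = 1 - b := by
    rw [hbdef, hq]; field_simp; ring
  have hol := gz_holder hl0 hl1 hb0 hb1 hJ0p hJ1p hM0 hM1
  have ex : ∀ I m : ℝ, 0 ≤ I → 0 < m → I ^ b = (I / m ^ q) ^ b * m ^ (1 - b) := by
    intro I m hI hm
    rw [Real.div_rpow hI (by positivity), ← Real.rpow_mul hm.le, hqb]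
    have : m ^ (1 - b) ≠ 0 := by positivity
    field_simp
  rw [ex _ M0 I0.le hM0, ex _ M1 I1.le hM1, ex _ M hI2 hMp]
  refine hol.trans ?_
  gcongr

/-- The ambient Euclidean space. -/
abbrev GzE (n : ℕ) := EuclideanSpace ℝ (Fin n)

/-- Structural facts on the function `f` with support `K`. -/
structure Gz {n : ℕ} (γ : ℝ) (f : GzE n → ℝ) (K : Set (GzE n)) : Prop where
  hγ : 0 < γ
  nonneg : ∀ x, 0 ≤ f x
  conc : ∀ x y : GzE n, f x ≠ 0 → f y ≠ 0 → ∀ l : ℝ, 0 ≤ l → l ≤ 1 →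
        (l * f x ^ γ + (1 - l) * f y ^ γ) ^ (1 / γ) ≤ f (l • x + (1 - l) • y)
  cont : ContinuousOn f K
  comp : IsCompact K
  conv : Convex ℝ K
  zero : ∀ x, x ∉ K → f x = 0
  pos : ∀ x ∈ interior K, 0 < f x
  mem0 : (0 : GzE n) ∈ interior K
  cent : (∫ x, f x • x) = (0 : GzE n)
  int : Integrable f
  cint : Integrable (fun x => f x • x)

lemma gz_min_pos {γ l a b : ℝ} (ha : 0 < a) (hb : 0 ≤ b)
    (hl0 : 0 ≤ l) (hl1 : l ≤ 1) (hab : 0 < b ∨ 0 < l) :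
    0 < (l * a ^ γ + (1 - l) * b ^ γ) ^ (1 / γ) := by
  apply Real.rpow_pos_of_pos
  have h1 : 0 < a ^ γ := Real.rpow_pos_of_pos ha _
  have h2 : 0 ≤ b ^ γ := Real.rpow_nonneg hb _
  rcases hl0.eq_or_lt with h | h
  · subst h
    have hb' : 0 < b := by rcases hab with h | h
                           · exact h
                           · exact absurd h (lt_irrefl _)
    have h2 : 0 < b ^ γ := Real.rpow_pos_of_pos hb' _
    linarith
  · have := mul_pos h h1
    have := mul_nonneg (by linarith : 0 ≤ 1 - l) h2
    linarith

theorem gz_basic {n : ℕ} (γ : ℝ) (hγ : 0 < γ)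
    (f : GzE n → ℝ)
    (hf_nonneg : ∀ x, 0 ≤ f x)
    (hf_concave : ∀ x y : GzE n, f x ≠ 0 → f y ≠ 0 →
      ∀ l : ℝ, 0 ≤ l → l ≤ 1 →
        (l * f x ^ γ + (1 - l) * f y ^ γ) ^ (1 / γ) ≤ f (l • x + (1 - l) • y))
    (hf_cont : ContinuousOn f (tsupport f))
    (hf_int : Integrable f)
    (hf_pos : 0 < ∫ x, f x)
    (hf_cent_int : Integrable (fun x => f x • x))
    (hf_cent : (∫ x, f x • x) = (0 : GzE n)) : Gz γ f (tsupport f) := by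
  have hposne : ∀ x, f x ≠ 0 → 0 < f x := fun x hx => lt_of_le_of_ne (hf_nonneg x) hx.symm
  set P := Function.support f with hP
  have hconvP : Convex ℝ P := by
    intro x hx y hy a b ha hb hab
    have hx' := hposne x hx
    have hy' := hposne y hy
    have h1 := hf_concave x y hx hy a ha (by linarith)
    have h2 := gz_min_pos (γ := γ) hx' hy'.le ha (by linarith) (Or.inl hy')
    have : b = 1 - a := by linarith
    rw [this]
    exact (lt_of_lt_of_le h2 h1).ne'
  have hfront : volume (frontier P) = 0 := hconvP.addHaar_frontier volume
  have hae : ∀ᵐ x, f x ≠ 0 → x ∈ interior P := by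
    have : ∀ᵐ x, x ∉ frontier P := measure_eq_zero_iff_ae_notMem.1 hfront
    filter_upwards [this] with x hx hfx
    by_contra hc
    exact hx ⟨subset_closure hfx, hc⟩
  have hne : (interior P).Nonempty := by
    by_contra hc
    rw [not_nonempty_iff_eq_empty] at hc
    have : f =ᵐ[volume] 0 := by
      filter_upwards [hae] with x hx
      by_contra h
      have := hx h
      rw [hc] at this
      exact this
    rw [integral_congr_ae this] at hf_pos
    simp at hf_pos
  have hK : tsupport f = closure P := rfl
  have hintK : interior (tsupport f) = interior P := by
    rw [hK]; exact hconvP.interior_closure_eq_interior_of_nonempty_interior hne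
  have hpos : ∀ x ∈ interior P, 0 < f x := fun x hx => hposne x (interior_subset hx)
  -- boundedness
  have hbdd : Bornology.IsBounded P := by
    obtain ⟨x0, hx0⟩ := hne
    obtain ⟨ε, hε, hball⟩ := Metric.nhds_basis_closedBall.mem_iff.1 (isOpen_interior.mem_nhds hx0)
    obtain ⟨z, hz, hzmin⟩ := (isCompact_closedBall x0 ε).exists_isMinOn
      ⟨x0, Metric.mem_closedBall_self hε.le⟩
      (hf_cont.mono fun x hx => subset_closure (interior_subset (hball hx)))
    set δ := f z with hδ
    have hδp : 0 < δ := hpos z (hball hz)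
    set δ' := ((1 / 2 : ℝ) * δ ^ γ) ^ (1 / γ) with hδ'
    have hδ'p : 0 < δ' := by positivity
    have hlow : ∀ y ∈ P, ∀ b ∈ Metric.closedBall x0 ε,
        δ' ≤ f ((1 / 2 : ℝ) • b + (1 - 1 / 2 : ℝ) • y) := by
      intro y hy b hb
      refine le_trans ?_ (hf_concave b y (hpos b (hball hb)).ne' hy (1 / 2) (by norm_num)
        (by norm_num))
      apply Real.rpow_le_rpow (by positivity) _ (by positivity)
      have h1 : δ ^ γ ≤ f b ^ γ := Real.rpow_le_rpow hδp.le (hzmin hb) hγ.le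
      have h2 : 0 ≤ f y ^ γ := Real.rpow_nonneg (hf_nonneg y) _
      norm_num
      linarith
    have htail : Filter.Tendsto (fun k : ℕ => ∫ x in {x : GzE n | (k : ℝ) ≤ ‖x‖}, f x)
        Filter.atTop (nhds (∫ x in ⋂ k : ℕ, {x : GzE n | (k : ℝ) ≤ ‖x‖}, f x)) := by
      apply tendsto_setIntegral_of_antitone
      · intro k
        exact measurableSet_le measurable_const measurable_norm
      · intro i j hij x hx
        have : (i : ℝ) ≤ j := by exact_mod_cast hij
        exact le_trans this hx
      · exact ⟨0, hf_int.integrableOn⟩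
    have hemp : (⋂ k : ℕ, {x : GzE n | (k : ℝ) ≤ ‖x‖}) = ∅ := by
      ext x
      simp only [mem_iInter, mem_setOf_eq, mem_empty_iff_false, iff_false, not_forall, not_le]
      exact exists_nat_gt ‖x‖
    rw [hemp] at htail
    simp only [Measure.restrict_empty, integral_zero_measure] at htail
    set c := δ' * (volume (Metric.closedBall (0 : GzE n) (ε / 2))).toReal with hc
    have hcp : 0 < c := by
      apply mul_pos hδ'p
      apply ENNReal.toReal_pos
      · exact (Metric.measure_closedBall_pos volume _ (by linarith)).ne'
      · exact measure_closedBall_lt_top.ne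
    obtain ⟨k, hk⟩ := (htail.eventually (gt_mem_nhds hcp)).exists
    rw [isBounded_iff_forall_norm_le]
    refine ⟨2 * k + ‖x0‖ + ε, fun y hy => ?_⟩
    by_contra hcon
    push Not at hcon
    set z' := (1 / 2 : ℝ) • x0 + (1 / 2 : ℝ) • y with hz'
    have hsub : Metric.closedBall z' (ε / 2) ⊆ {x : GzE n | (k : ℝ) ≤ ‖x‖} := by
      intro x hx
      rw [mem_closedBall_iff_norm] at hx
      rw [mem_setOf_eq]
      have e1 : ‖y‖ ≤ 2 * ‖z'‖ + ‖x0‖ := by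
        have : y = (2 : ℝ) • z' - x0 := by rw [hz']; module
        calc ‖y‖ = ‖(2 : ℝ) • z' - x0‖ := by rw [← this]
          _ ≤ ‖(2 : ℝ) • z'‖ + ‖x0‖ := norm_sub_le _ _
          _ = _ := by rw [norm_smul]; norm_num
      have e2 : ‖z'‖ ≤ ‖x‖ + ‖x - z'‖ := by
        have := norm_sub_le x (x - z')
        simpa using this
      linarith
    have hlow2 : ∀ x ∈ Metric.closedBall z' (ε / 2), δ' ≤ f x := by
      intro x hx
      rw [mem_closedBall_iff_norm] at hx
      have := hlow y hy (x0 + (2 : ℝ) • (x - z')) (by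
        rw [mem_closedBall_iff_norm]
        simp only [add_sub_cancel_left, norm_smul]
        norm_num; linarith)
      convert this using 2
      rw [hz']; module
    have h1 : c ≤ ∫ x in Metric.closedBall z' (ε / 2), f x := by
      have := setIntegral_mono_on (μ := volume) (f := fun _ => δ') (g := f)
        (s := Metric.closedBall z' (ε / 2))
        (integrableOn_const measure_closedBall_lt_top.ne)
        hf_int.integrableOn Metric.isClosed_closedBall.measurableSet hlow2
      rw [setIntegral_const] at this
      refine le_trans (le_of_eq ?_) this
      rw [hc, Measure.real, Measure.addHaar_closedBall_center volume z', smul_eq_mul, mul_comm]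
    have h2 : ∫ x in Metric.closedBall z' (ε / 2), f x ≤
        ∫ x in {x : GzE n | (k : ℝ) ≤ ‖x‖}, f x :=
      setIntegral_mono_set hf_int.integrableOn
        (Filter.Eventually.of_forall hf_nonneg) (Filter.Eventually.of_forall hsub)
    linarith
  have h0 : (0 : GzE n) ∈ interior P := by
    by_contra hc
    obtain ⟨L, hL⟩ := geometric_hahn_banach_point_open hconvP.interior isOpen_interior hc
    simp only [map_zero] at hL
    have h1 : ∫ x, f x * L x = 0 := by
      have := L.integral_comp_comm hf_cent_int
      rw [hf_cent, map_zero] at this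
      simpa using this
    have hIntg : Integrable fun x => f x * L x := by
      have := L.integrable_comp hf_cent_int
      simpa using this
    have hnn : 0 ≤ᵐ[volume] fun x => f x * L x := by
      filter_upwards [hae] with x hx
      by_cases h : f x = 0
      · simp [h]
      · exact mul_nonneg (hf_nonneg x) (hL x (hx h)).le
    rw [integral_eq_zero_iff_of_nonneg_ae hnn hIntg] at h1
    have h2 : volume (interior P) = 0 := by
      rw [measure_eq_zero_iff_ae_notMem]
      filter_upwards [h1] with x hx hxP
      exact (mul_pos (hpos x hxP) (hL x hxP)).ne' hx
    exact (isOpen_interior.measure_pos volume hne).ne' h2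
  refine ⟨hγ, hf_nonneg, hf_concave, hf_cont, ?_, hconvP.closure, ?_, ?_, ?_, hf_cent, hf_int,
    hf_cent_int⟩
  · exact Metric.isCompact_of_isClosed_isBounded isClosed_closure hbdd.closure
  · exact fun x hx => image_eq_zero_of_notMem_tsupport hx
  · rw [hintK]; exact hpos
  · rw [hintK]; exact h0

section
variable {n : ℕ} {γ : ℝ} {f : GzE n → ℝ} {K : Set (GzE n)}

lemma Gz.eq_ind (h : Gz γ f K) : f = K.indicator f := by
  ext x
  by_cases hx : x ∈ K
  · rw [indicator_of_mem hx]
  · rw [indicator_of_notMem hx, h.zero x hx]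

lemma Gz.meas (h : Gz γ f K) : Measurable f := by
  classical
  rw [h.eq_ind]
  have h1 : Measurable (K.piecewise f 0) :=
    h.cont.measurable_piecewise continuousOn_const h.comp.isClosed.measurableSet
  have h2 : K.indicator f = K.piecewise f 0 := by
    ext x
    by_cases hx : x ∈ K <;> simp [hx]
  rw [h2]; exact h1

lemma Gz.bdd (h : Gz γ f K) : ∃ C, 0 < C ∧ ∀ x, f x ≤ C := by
  obtain ⟨C, hC⟩ := h.comp.bddAbove_image h.cont
  refine ⟨max C 1, by positivity, fun x => ?_⟩
  by_cases hx : x ∈ K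
  · exact (hC (mem_image_of_mem f hx)).trans (le_max_left _ _)
  · rw [h.zero x hx]; positivity

lemma Gz.rad (h : Gz γ f K) : ∃ R, 0 < R ∧ ∀ x ∈ K, ‖x‖ ≤ R := by
  obtain ⟨R, hR⟩ := isBounded_iff_forall_norm_le.1 h.comp.isBounded
  exact ⟨max R 1, by positivity, fun x hx => (hR x hx).trans (le_max_left _ _)⟩

lemma Gz.pow (h : Gz γ f K) {x y : GzE n} (hx : f x ≠ 0) (hy : f y ≠ 0) {l : ℝ} (h0 : 0 ≤ l)
    (h1 : l ≤ 1) : l * f x ^ γ + (1 - l) * f y ^ γ ≤ f (l • x + (1 - l) • y) ^ γ := by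
  have hh := h.conc x y hx hy l h0 h1
  have hnn : 0 ≤ l * f x ^ γ + (1 - l) * f y ^ γ :=
    add_nonneg (mul_nonneg h0 (Real.rpow_nonneg (h.nonneg _) _))
      (mul_nonneg (by linarith) (Real.rpow_nonneg (h.nonneg _) _))
  have h3 := Real.rpow_le_rpow (Real.rpow_nonneg hnn _) hh h.hγ.le
  rwa [← Real.rpow_mul hnn, one_div_mul_cancel h.hγ.ne', Real.rpow_one] at h3

lemma Gz.line_meas (h : Gz γ f K) (θ : GzE n) (x : GzE n) : Measurable fun s : ℝ => f (x + s • θ) :=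
  h.meas.comp (by fun_prop)

lemma Gz.line_supp (h : Gz γ f K) {θ : GzE n} (hθ : ‖θ‖ = 1) {R : ℝ} (hR : ∀ x ∈ K, ‖x‖ ≤ R)
    (x : GzE n) (s : ℝ) (hs : f (x + s • θ) ≠ 0) : |s| ≤ R + ‖x‖ := by
  have : x + s • θ ∈ K := by
    by_contra hc
    exact hs (h.zero _ hc)
  have h1 := hR _ this
  have h2 : ‖s • θ‖ ≤ ‖x + s • θ‖ + ‖x‖ := by
    have := norm_sub_le (x + s • θ) x
    simpa using this
  rw [norm_smul, hθ, mul_one, Real.norm_eq_abs] at h2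
  linarith

lemma Gz.line_int (h : Gz γ f K) {θ : GzE n} (hθ : ‖θ‖ = 1) (x : GzE n) :
    Integrable fun s : ℝ => f (x + s • θ) := by
  obtain ⟨C, hC0, hC⟩ := h.bdd
  obtain ⟨R, hR0, hR⟩ := h.rad
  have h1 : IntegrableOn (fun s : ℝ => f (x + s • θ)) (Icc (-(R + ‖x‖)) (R + ‖x‖)) := by
    refine Measure.integrableOn_of_bounded (M := C) (by simp)
      (h.line_meas θ x).aestronglyMeasurable ?_
    refine Filter.Eventually.of_forall fun s => ?_
    rw [Real.norm_eq_abs, abs_of_nonneg (h.nonneg _)]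
    exact hC _
  refine (integrableOn_iff_integrable_of_support_subset ?_).1 h1
  intro s hs
  exact abs_le.1 (h.line_supp hθ hR x s hs)

/-- Integral of `f` along the part of the line through `x` indexed by `S`. -/
noncomputable def gzG (f : GzE n → ℝ) (θ : GzE n) (S : Set ℝ) (x : GzE n) : ℝ :=
  ∫ s in S, f (x + s • θ)

lemma Gz.G_nonneg (h : Gz γ f K) (θ : GzE n) (S : Set ℝ) (x : GzE n) : 0 ≤ gzG f θ S x :=
  integral_nonneg fun _ => h.nonneg _

lemma Gz.G_conc (h : Gz γ f K) {θ : GzE n} (hθ : ‖θ‖ = 1) {S : Set ℝ} (hS : MeasurableSet S)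
    (hSc : Convex ℝ S) {x y : GzE n} (hx : 0 < gzG f θ S x) (hy : 0 < gzG f θ S y)
    {l : ℝ} (hl0 : 0 < l) (hl1 : l < 1) :
    (1 - l) * gzG f θ S x ^ (γ / (γ + 1)) + l * gzG f θ S y ^ (γ / (γ + 1)) ≤
      gzG f θ S ((1 - l) • x + l • y) ^ (γ / (γ + 1)) := by
  obtain ⟨C, hC0, hC⟩ := h.bdd
  unfold gzG at *
  simp only [← integral_indicator hS] at *
  have nn : ∀ z : GzE n, ∀ s, 0 ≤ S.indicator (fun s : ℝ => f (z + s • θ)) s :=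
    fun z s => indicator_nonneg (fun _ _ => h.nonneg _) s
  have bb : ∀ z : GzE n, ∀ s, S.indicator (fun s : ℝ => f (z + s • θ)) s ≤ C := by
    intro z s
    exact (indicator_le_self' (fun _ _ => h.nonneg _) s).trans (hC _)
  have mm : ∀ z : GzE n, Measurable (S.indicator (fun s : ℝ => f (z + s • θ))) :=
    fun z => (h.line_meas θ z).indicator hS
  have ii : ∀ z : GzE n, Integrable (S.indicator (fun s : ℝ => f (z + s • θ))) :=
    fun z => (h.line_int hθ z).indicator hS
  have ne : ∀ (z : GzE n) (s : ℝ), S.indicator (fun s : ℝ => f (z + s • θ)) s ≠ 0 →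
      s ∈ S ∧ f (z + s • θ) ≠ 0 ∧ S.indicator (fun s : ℝ => f (z + s • θ)) s = f (z + s • θ) := by
    intro z s hs
    have hsS : s ∈ S := by
      by_contra hc
      exact hs (indicator_of_notMem hc _)
    rw [indicator_of_mem hsS] at hs ⊢
    exact ⟨hsS, hs, rfl⟩
  refine gz_bbl h.hγ hl0 hl1 (nn x) (nn y) (nn _) (mm x) (mm y) (mm _) (bb x) (bb y)
    (ii x) (ii y) (ii _) ?_ ?_ hx hy
  · intro t ht
    set z := (1 - l) • x + l • y
    apply Convex.ordConnected (𝕜 := ℝ)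
    intro s hs s' hs' a b ha hb hab
    rw [mem_setOf_eq] at hs hs' ⊢
    have hs0 : S.indicator (fun s : ℝ => f (z + s • θ)) s ≠ 0 := by
      intro h'; rw [h', Real.zero_rpow h.hγ.ne'] at hs; linarith
    have hs0' : S.indicator (fun s : ℝ => f (z + s • θ)) s' ≠ 0 := by
      intro h'; rw [h', Real.zero_rpow h.hγ.ne'] at hs'; linarith
    obtain ⟨h1, h2, h3⟩ := ne _ _ hs0
    obtain ⟨h1', h2', h3'⟩ := ne _ _ hs0'
    rw [h3] at hs
    rw [h3'] at hs'
    rw [indicator_of_mem (hSc h1 h1' ha hb hab)]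
    have hb' : b = 1 - a := by linarith
    have := h.pow h2 h2' ha (by linarith)
    have e : a • (z + s • θ) + (1 - a) • (z + s' • θ) = z + (a • s + b • s') • θ := by
      rw [hb']; simp only [smul_eq_mul]; module
    rw [e] at this
    refine lt_of_lt_of_le ?_ this
    rw [← hb']
    have ht' : t = a * t + b * t := by rw [← add_mul, hab, one_mul]
    rw [ht']
    rcases ha.eq_or_lt with ha' | ha'
    · have : b = 1 := by linarith
      subst this; rw [← ha']; linarith
    · have := mul_lt_mul_of_pos_left hs ha'
      have := mul_le_mul_of_nonneg_left hs'.le hb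
      linarith
  · intro s t hs ht
    obtain ⟨h1, h2, h3⟩ := ne _ _ hs
    obtain ⟨h1', h2', h3'⟩ := ne _ _ ht
    rw [h3, h3', indicator_of_mem]
    · have := h.conc _ _ h2 h2' (1 - l) (by linarith) (by linarith)
      rw [sub_sub_cancel] at this
      convert this using 2
      module
    · exact hSc h1 h1' (by linarith) hl0.le (by ring)

lemma gz_exists_ball {x : GzE n} (hx : x ∈ interior K) {θ : GzE n} (hθ : ‖θ‖ = 1) :
    ∃ ε > 0, ∀ s : ℝ, |s| < ε → x + s • θ ∈ interior K := by
  obtain ⟨ε, hε, hb⟩ := Metric.isOpen_iff.1 isOpen_interior x hx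
  refine ⟨ε, hε, fun s hs => hb ?_⟩
  rw [mem_ball_iff_norm, add_sub_cancel_left, norm_smul, hθ, mul_one]
  exact hs

lemma Gz.G_pos (h : Gz γ f K) {θ : GzE n} (hθ : ‖θ‖ = 1) {S : Set ℝ} (hS : Ioi 0 ⊆ S)
    {x : GzE n} (hx : x ∈ interior K) : 0 < gzG f θ S x := by
  obtain ⟨ε, hε, hb⟩ := gz_exists_ball hx hθ
  unfold gzG
  rw [setIntegral_pos_iff_support_of_nonneg_ae (Filter.Eventually.of_forall fun _ => h.nonneg _)
    (h.line_int hθ x).integrableOn]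
  have hsub : Ioo 0 ε ⊆ (Function.support fun s : ℝ => f (x + s • θ)) ∩ S := by
    intro s hs
    refine ⟨(h.pos _ (hb s ?_)).ne', hS hs.1⟩
    rw [abs_of_pos hs.1]; exact hs.2
  refine lt_of_lt_of_le ?_ (measure_mono hsub)
  simp [hε]

lemma Gz.G_le (h : Gz γ f K) {θ : GzE n} (hθ : ‖θ‖ = 1) :
    ∃ C, 0 < C ∧ ∀ (S : Set ℝ) (x : GzE n), gzG f θ S x ≤ C := by
  obtain ⟨C, hC0, hC⟩ := h.bdd
  obtain ⟨R, hR0, hR⟩ := h.rad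
  refine ⟨C * (4 * R), by positivity, fun S x => ?_⟩
  have hnn : ∀ s : ℝ, 0 ≤ f (x + s • θ) := fun _ => h.nonneg _
  have h1 : gzG f θ S x ≤ ∫ s : ℝ, f (x + s • θ) :=
    setIntegral_le_integral (h.line_int hθ x) (Filter.Eventually.of_forall hnn)
  refine h1.trans ?_
  by_cases hex : ∃ s0 : ℝ, x + s0 • θ ∈ K
  · obtain ⟨s0, hs0⟩ := hex
    have hsub : ∀ s : ℝ, s ∉ Icc (s0 - 2 * R) (s0 + 2 * R) → f (x + s • θ) = 0 := by
      intro s hs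
      by_contra hc
      have hK : x + s • θ ∈ K := by
        by_contra hc'
        exact hc (h.zero _ hc')
      have e : (s - s0) • θ = (x + s • θ) - (x + s0 • θ) := by module
      have := norm_sub_le (x + s • θ) (x + s0 • θ)
      rw [← e, norm_smul, hθ, mul_one, Real.norm_eq_abs] at this
      have h2 := hR _ hK
      have h3 := hR _ hs0
      have h4 := abs_le.1 (this.trans (add_le_add h2 h3))
      exact hs ⟨by linarith [h4.1], by linarith [h4.2]⟩
    rw [← setIntegral_eq_integral_of_forall_compl_eq_zero hsub]
    have := setIntegral_mono_on (μ := volume) (f := fun s : ℝ => f (x + s • θ)) (g := fun _ => C)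
      (s := Icc (s0 - 2 * R) (s0 + 2 * R)) (h.line_int hθ x).integrableOn
      (integrableOn_const (by simp)) measurableSet_Icc (fun s _ => hC _)
    refine this.trans (le_of_eq ?_)
    rw [setIntegral_const, Measure.real, Real.volume_Icc, ENNReal.toReal_ofReal (by linarith),
      smul_eq_mul]
    ring
  · push Not at hex
    have : (fun s : ℝ => f (x + s • θ)) = fun _ => 0 := by
      ext s; exact h.zero _ (hex s)
    rw [this]
    simp only [integral_zero]
    positivity

lemma Gz.G_meas (h : Gz γ f K) (θ : GzE n) (S : Set ℝ) : Measurable (gzG f θ S) := by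
  have h1 : StronglyMeasurable fun p : GzE n × ℝ => f (p.1 + p.2 • θ) :=
    (h.meas.comp (by fun_prop)).stronglyMeasurable
  exact (h1.integral_prod_right' (ν := volume.restrict S)).measurable
end

section
variable {n : ℕ}

lemma gz_supergrad {U : Set (GzE n)} (hU : IsOpen U) (h0 : (0 : GzE n) ∈ U) {Φ : GzE n → ℝ}
    (hΦ : ConcaveOn ℝ U Φ) : ∃ L : GzE n →L[ℝ] ℝ, ∀ x ∈ U, Φ x ≤ Φ 0 + L x := by
  have hcont : ContinuousOn Φ U := hΦ.continuousOn hU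
  set S : Set (GzE n × ℝ) := {p | p.1 ∈ U ∧ p.2 < Φ p.1} with hS
  have hSc : Convex ℝ S := hΦ.convex_strict_hypograph
  have hSo : IsOpen S := by
    have h1 : IsOpen (U ×ˢ (univ : Set ℝ)) := hU.prod isOpen_univ
    have h2 : ContinuousOn (fun p : GzE n × ℝ => Φ p.1 - p.2) (U ×ˢ (univ : Set ℝ)) :=
      (hcont.comp continuousOn_fst fun p hp => hp.1).sub continuousOn_snd
    have h3 := h2.isOpen_inter_preimage h1 (isOpen_Ioi (a := (0 : ℝ)))
    convert h3 using 1
    ext p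
    simp [hS]
  have hnot : ((0 : GzE n), Φ 0) ∉ S := by simp [hS]
  obtain ⟨F, hF⟩ := geometric_hahn_banach_open_point hSc hSo hnot
  have hsplit : ∀ (x : GzE n) (t : ℝ), F (x, t) = F (x, 0) + t * F (0, 1) := by
    intro x t
    have : (x, t) = (x, (0 : ℝ)) + t • ((0 : GzE n), (1 : ℝ)) := by simp
    rw [this, map_add, map_smul, smul_eq_mul]
  have hb : 0 < F (0, 1) := by
    have := hF (0, Φ 0 - 1) ⟨h0, by simp⟩
    rw [hsplit 0 (Φ 0 - 1), hsplit 0 (Φ 0)] at this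
    linarith
  refine ⟨-((F (0, 1))⁻¹ • (F.comp (ContinuousLinearMap.inl ℝ (GzE n) ℝ))), fun x hx => ?_⟩
  refine le_of_forall_lt fun t ht => ?_
  have h1 := hF (x, t) ⟨hx, ht⟩
  have hz : F (0, 0) = 0 := map_zero F
  rw [hsplit x t, hsplit 0 (Φ 0), hz] at h1
  simp only [ContinuousLinearMap.neg_apply, ContinuousLinearMap.smul_apply,
    ContinuousLinearMap.comp_apply, ContinuousLinearMap.inl_apply, smul_eq_mul]
  have h2 : t * F (0, 1) < Φ 0 * F (0, 1) - F (x, 0) := by linarith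
  rw [← lt_div_iff₀ hb] at h2
  refine h2.trans_eq ?_
  field_simp
  ring

lemma gz_finrank {v : GzE n} (hv : v ≠ 0) : Module.finrank ℝ (ℝ ∙ v)ᗮ + 1 = n := by
  have h1 := Submodule.finrank_add_finrank_orthogonal (ℝ ∙ v)
  rw [finrank_span_singleton hv, finrank_euclideanSpace_fin] at h1
  omega

/-- The parametrization of the space by the line `ℝ θ` and the hyperplane `v^⊥`. -/
noncomputable def gzT (θ v : GzE n) (p : ℝ × (ℝ ∙ v)ᗮ) : GzE n := p.1 • θ + (p.2 : GzE n)

lemma gz_mem_perp {v w : GzE n} : w ∈ (ℝ ∙ v)ᗮ ↔ ⟪w, v⟫ = 0 := by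
  rw [Submodule.mem_orthogonal_singleton_iff_inner_left]

lemma gz_map {θ v : GzE n} (hv : ⟪θ, v⟫ ≠ 0) (ν : Measure (ℝ ∙ v)ᗮ) [ν.IsAddHaarMeasure] :
    MeasurableEmbedding (gzT θ v) ∧ ∃ c : ℝ, 0 < c ∧
      Measure.map (gzT θ v) (volume.prod ν) = ENNReal.ofReal c • volume := by
  let Tl : (ℝ × (ℝ ∙ v)ᗮ) →ₗ[ℝ] GzE n :=
    (LinearMap.toSpanSingleton ℝ (GzE n) θ).coprod ((ℝ ∙ v)ᗮ).subtype
  have hTl : ∀ p, Tl p = gzT θ v p := by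
    intro p
    simp [Tl, gzT]
  have hbij : Function.Bijective Tl := by
    constructor
    · rw [← LinearMap.ker_eq_bot, LinearMap.ker_eq_bot']
      rintro ⟨s, w⟩ h
      rw [hTl, gzT] at h
      simp only at h
      have h2 := gz_mem_perp.1 w.2
      have h1 : ⟪s • θ + (w : GzE n), v⟫ = 0 := by rw [h, inner_zero_left]
      rw [inner_add_left, real_inner_smul_left, h2, add_zero] at h1
      have hs : s = 0 := by
        rcases mul_eq_zero.1 h1 with h' | h'
        · exact h'
        · exact absurd h' hv
      subst hs
      simp only [zero_smul, zero_add] at h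
      ext
      · rfl
      · simp [h]
    · intro x
      refine ⟨(⟪x, v⟫ / ⟪θ, v⟫, ⟨x - (⟪x, v⟫ / ⟪θ, v⟫) • θ, ?_⟩), ?_⟩
      · rw [gz_mem_perp, inner_sub_left, real_inner_smul_left, div_mul_cancel₀ _ hv, sub_self]
      · rw [hTl, gzT]; simp
  let Te : (ℝ × (ℝ ∙ v)ᗮ) ≃L[ℝ] GzE n := (LinearEquiv.ofBijective Tl hbij).toContinuousLinearEquiv
  have hTe : (Te : (ℝ × (ℝ ∙ v)ᗮ) → GzE n) = gzT θ v := by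
    ext1 p; rw [← hTl]; rfl
  refine ⟨?_, ?_⟩
  · rw [← hTe]; exact Te.toHomeomorph.measurableEmbedding
  · have hh : (Measure.map Te ((volume : Measure ℝ).prod ν)).IsAddHaarMeasure :=
      Te.isAddHaarMeasure_map _
    rw [← hTe]
    have h1 := Measure.isAddLeftInvariant_eq_smul (Measure.map Te ((volume : Measure ℝ).prod ν))
      (volume : Measure (GzE n))
    set c := Measure.addHaarScalarFactor (Measure.map Te ((volume : Measure ℝ).prod ν))
      (volume : Measure (GzE n)) with hc
    refine ⟨c, ?_, ?_⟩
    · have := Measure.addHaarScalarFactor_pos_of_isAddHaarMeasure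
        (Measure.map Te ((volume : Measure ℝ).prod ν)) (volume : Measure (GzE n))
      exact_mod_cast this
    · rw [h1, ENNReal.ofReal_coe_nnreal]
      rfl

lemma gz_integral_T {F : Type*} [NormedAddCommGroup F] [NormedSpace ℝ F] {θ v : GzE n}
    {ν : Measure (ℝ ∙ v)ᗮ} (hT : MeasurableEmbedding (gzT θ v)) {c : ℝ} (hc : 0 < c)
    (hm : Measure.map (gzT θ v) (volume.prod ν) = ENNReal.ofReal c • volume) (g : GzE n → F) :
    ∫ p, g (gzT θ v p) ∂(volume.prod ν) = c • ∫ x, g x := by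
  rw [← hT.integral_map, hm, integral_smul_measure, ENNReal.toReal_ofReal hc.le]

lemma gz_integrable_T {F : Type*} [NormedAddCommGroup F] [NormedSpace ℝ F] {θ v : GzE n}
    {ν : Measure (ℝ ∙ v)ᗮ} (hT : MeasurableEmbedding (gzT θ v)) {c : ℝ} 
    (hm : Measure.map (gzT θ v) (volume.prod ν) = ENNReal.ofReal c • volume) {g : GzE n → F}
    (hg : Integrable g) : Integrable (fun p => g (gzT θ v p)) (volume.prod ν) := by
  have := (hT.integrable_map_iff (μ := (volume.prod ν)) (g := g)).1
  apply this
  rw [hm]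
  exact hg.smul_measure ENNReal.ofReal_ne_top

end

section
variable {n : ℕ} {γ : ℝ} {f : GzE n → ℝ} {K : Set (GzE n)}

lemma gzG_shift (f : GzE n → ℝ) (θ x : GzE n) (s : ℝ) :
    gzG f θ (Ioi 0) (x + s • θ) = ∫ t in Ioi s, f (x + t • θ) := by
  unfold gzG
  rw [← integral_indicator measurableSet_Ioi, ← integral_indicator measurableSet_Ioi,
    
    ← integral_add_left_eq_self ((Ioi s).indicator fun t => f (x + t • θ)) s]
  refine integral_congr_ae (Filter.Eventually.of_forall fun t => ?_)
  by_cases ht : 0 < t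
  · have h1 : s + t ∈ Ioi s := by simp [ht]
    simp only [indicator_of_mem h1, indicator_of_mem (show t ∈ Ioi (0 : ℝ) from ht)]
    congr 1; module
  · have h1 : s + t ∉ Ioi s := by simpa using ht
    simp only [indicator_of_notMem h1, indicator_of_notMem (show t ∉ Ioi (0 : ℝ) from ht)]

lemma gzG_univ_shift (f : GzE n → ℝ) (θ x : GzE n) (s : ℝ) :
    gzG f θ univ (x + s • θ) = gzG f θ univ x := by
  unfold gzG
  simp only [setIntegral_univ]
  rw [← integral_add_left_eq_self (fun t : ℝ => f (x + t • θ)) s]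
  refine integral_congr_ae (Filter.Eventually.of_forall fun t => ?_)
  simp only
  congr 1; module

lemma Gz.seg (h : Gz γ f K) {θ : GzE n} (hθ : ‖θ‖ = 1) {x : GzE n} (hx : ∃ s : ℝ, x + s • θ ∈ K) :
    ∃ a b : ℝ, a ≤ b ∧ ∀ s : ℝ, x + s • θ ∈ K ↔ s ∈ Icc a b := by
  obtain ⟨R, hR0, hR⟩ := h.rad
  set I : Set ℝ := {s | x + s • θ ∈ K} with hI
  have hconv : Convex ℝ I := by
    intro s hs t ht a b ha hb hab
    have := h.conv hs ht ha hb hab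
    rw [hI, mem_setOf_eq]
    convert this using 1
    have : a = 1 - b := by linarith
    subst this
    simp only [smul_eq_mul]
    module
  have hclosed : IsClosed I := h.comp.isClosed.preimage (by fun_prop)
  have hcomp : IsCompact I := by
    refine Metric.isCompact_of_isClosed_isBounded hclosed ?_
    rw [isBounded_iff_forall_norm_le]
    refine ⟨R + ‖x‖, fun s hs => ?_⟩
    have h1 := hR _ hs
    have h2 : ‖s • θ‖ ≤ ‖x + s • θ‖ + ‖x‖ := by
      have := norm_sub_le (x + s • θ) x
      simpa using this
    rw [norm_smul, hθ, mul_one] at h2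
    linarith
  have hne : I.Nonempty := hx
  have heq := eq_Icc_of_connected_compact ⟨hne, hconv.isPreconnected⟩ hcomp
  refine ⟨sInf I, sSup I, ?_, fun s => ?_⟩
  · obtain ⟨s, hs⟩ := hne
    rw [heq] at hs
    exact hs.1.trans hs.2
  · rw [← heq]; rfl

lemma Gz.line_id (h : Gz γ f K) {θ : GzE n} (hθ : ‖θ‖ = 1) {β : ℝ} (hβ : 0 < β) (x : GzE n) :
    ∫ s : ℝ, f (x + s • θ) * gzG f θ (Ioi 0) (x + s • θ) ^ β =
      gzG f θ univ x ^ (1 + β) / (1 + β) := by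
  have hli := h.line_int hθ x
  by_cases hex : ∃ s : ℝ, x + s • θ ∈ K
  · obtain ⟨a, b, hab, hseg⟩ := h.seg hθ hex
    set g : ℝ → ℝ := fun s => f (x + s • θ) with hg
    have hgc : ContinuousOn g (Icc a b) := by
      refine h.cont.comp (by fun_prop) ?_
      intro s hs
      exact (hseg s).2 hs
    have hg0 : ∀ s, s ∉ Icc a b → g s = 0 := fun s hs => h.zero _ fun hc => hs ((hseg s).1 hc)
    set H : ℝ → ℝ := fun s => ∫ t in s..b, g t with hH
    have hHG : ∀ s ∈ Icc a b, gzG f θ (Ioi 0) (x + s • θ) = H s := by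
      intro s hs
      rw [gzG_shift, hH]
      simp only
      rw [intervalIntegral.integral_of_le hs.2]
      refine setIntegral_eq_of_subset_of_forall_diff_eq_zero measurableSet_Ioi
        (fun t ht => ht.1) ?_
      intro t ht
      refine hg0 t fun hc => ht.2 ⟨ht.1, hc.2⟩
    have hM : gzG f θ univ x = H a := by
      unfold gzG
      rw [setIntegral_univ, hH]
      simp only
      rw [intervalIntegral.integral_of_le hab, ← integral_Icc_eq_integral_Ioc]
      exact (setIntegral_eq_integral_of_forall_compl_eq_zero hg0).symm
    have hlhs : ∫ s : ℝ, f (x + s • θ) * gzG f θ (Ioi 0) (x + s • θ) ^ β =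
        ∫ s in a..b, g s * H s ^ β := by
      rw [intervalIntegral.integral_of_le hab, ← integral_Icc_eq_integral_Ioc,
        ← setIntegral_eq_integral_of_forall_compl_eq_zero (s := Icc a b)]
      · refine setIntegral_congr_fun measurableSet_Icc fun s hs => ?_
        rw [hHG s hs]
      · intro s hs
        have : f (x + s • θ) = 0 := hg0 s hs
        rw [this, zero_mul]
    have hHc : ContinuousOn H (Icc a b) := by
      have h1 : ContinuousOn (fun s => ∫ t in b..s, g t) (Icc a b) := by
        have := intervalIntegral.continuousOn_primitive_interval (μ := volume) (a := b) (b := a)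
          (f := g) hli.integrableOn
        rwa [uIcc_comm, uIcc_of_le hab] at this
      have h2 : H = fun s => -∫ t in b..s, g t := by
        ext s; rw [hH]; simp only; rw [intervalIntegral.integral_symm]
      rw [h2]; exact h1.neg
    have hHn : ∀ s ∈ Icc a b, 0 ≤ H s := fun s hs => by
      rw [← hHG s hs]; exact h.G_nonneg _ _ _
    have hβ1 : 0 < 1 + β := by linarith
    rw [hlhs, hM, intervalIntegral.integral_eq_sub_of_hasDerivAt_of_le hab
      (f := fun s => -(H s ^ (1 + β) / (1 + β)))]
    · have : H b = 0 := by rw [hH]; simp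
      rw [this, Real.zero_rpow hβ1.ne']; ring
    · exact ((hHc.rpow_const fun s hs => Or.inr hβ1.le).div_const _).neg
    · intro s hs
      have hcs : ContinuousAt g s := hgc.continuousAt (Icc_mem_nhds hs.1 hs.2)
      have hd : HasDerivAt H (-g s) s := by
        refine intervalIntegral.integral_hasDerivAt_left hli.intervalIntegrable ?_ hcs
        exact (h.line_meas θ x).stronglyMeasurable.stronglyMeasurableAtFilter
      have h1 := ((hd.rpow_const (p := 1 + β) (Or.inr (by linarith))).div_const (1 + β)).neg
      refine h1.congr_deriv ?_
      rw [add_sub_cancel_left]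
      field_simp
    · refine ContinuousOn.intervalIntegrable ?_
      rw [uIcc_of_le hab]
      exact hgc.mul (hHc.rpow_const fun s hs => Or.inr hβ.le)
  · push Not at hex
    have h0 : ∀ s : ℝ, f (x + s • θ) = 0 := fun s => h.zero _ (hex s)
    unfold gzG
    simp only [h0, zero_mul, integral_zero]
    rw [Real.zero_rpow (by linarith)]; simp

end

lemma gz_tangent {q v L : ℝ} (hq : 1 ≤ q) (hv : 0 ≤ v) (hL : 0 < L) :
    L ^ q + q * L ^ (q - 1) * (v - L) ≤ v ^ q := by
  have h1 := one_add_mul_self_le_rpow_one_add (s := v / L - 1) (by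
    have := div_nonneg hv hL.le
    linarith) hq
  have h2 : 1 + (v / L - 1) = v / L := by ring
  rw [h2, Real.div_rpow hv hL.le] at h1
  have hp : 0 < L ^ q := Real.rpow_pos_of_pos hL _
  rw [le_div_iff₀ hp] at h1
  have h3 : L ^ q = L ^ (q - 1) * L := by
    rw [Real.rpow_sub_one hL.ne']; field_simp
  have h4 : (1 + q * (v / L - 1)) * L ^ q = L ^ q + q * L ^ (q - 1) * (v - L) := by
    rw [h3]; field_simp
  linarith

lemma gz_scale {W : Type*} [NormedAddCommGroup W] [NormedSpace ℝ W] [FiniteDimensional ℝ W]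
    [MeasurableSpace W] [BorelSpace W] (ν : Measure W) [ν.IsAddHaarMeasure]
    {N : W → ℝ} {p : ℝ} (hp : 0 < p) (hN : ∀ w, 0 ≤ N w)
    (hc : ∀ w, 0 < N w → ∀ t : ℝ, 0 < t → t < 1 → (1 - t) * N 0 + t * N w ≤ N (t • w))
    (hA : Integrable (fun w => N w ^ (p + 1)) ν) (hB : Integrable (fun w => N w ^ p) ν) :
    (p + 1) * (N 0 * ∫ w, N w ^ p ∂ν) ≤
      (Module.finrank ℝ W + p + 1) * ∫ w, N w ^ (p + 1) ∂ν := by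
  set A := ∫ w, N w ^ (p + 1) ∂ν with hAd
  set B := ∫ w, N w ^ p ∂ν with hBd
  set d := Module.finrank ℝ W with hd
  have hA0 : 0 ≤ A := integral_nonneg fun w => Real.rpow_nonneg (hN w) _
  have key : ∀ t : ℝ, 0 < t → t < 1 → t ^ d * ((p + 1) * (N 0 * B - A)) ≤ d * A := by
    intro t ht0 ht1
    have h1 : ∫ w, N (t • w) ^ (p + 1) ∂ν = (t ^ d)⁻¹ * A := by
      have := Measure.integral_comp_smul ν (fun w => N w ^ (p + 1)) t
      rw [this, abs_of_pos (by positivity), smul_eq_mul]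
    have hI1 : Integrable (fun w => N (t • w) ^ (p + 1)) ν := hA.comp_smul ht0.ne'
    have hI0 : Integrable (fun w => N 0 * N w ^ p - N w ^ (p + 1)) ν := (hB.const_mul _).sub hA
    have hI2 : Integrable (fun w => N w ^ (p + 1) +
        (1 - t) * (p + 1) * (N 0 * N w ^ p - N w ^ (p + 1))) ν :=
      hA.add (((hB.const_mul _).sub hA).const_mul _)
    have h2 : ∫ w, (N w ^ (p + 1) + (1 - t) * (p + 1) * (N 0 * N w ^ p - N w ^ (p + 1))) ∂ν ≤
        ∫ w, N (t • w) ^ (p + 1) ∂ν := by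
      refine integral_mono hI2 hI1 fun w => ?_
      simp only
      rcases (hN w).eq_or_lt with h | h
      · rw [← h, Real.zero_rpow (by linarith), Real.zero_rpow (by linarith)]
        simp only [mul_zero, sub_zero, add_zero]
        exact Real.rpow_nonneg (hN _) _
      · have hv : 0 ≤ (1 - t) * N 0 + t * N w := by
          have := mul_nonneg (by linarith : 0 ≤ 1 - t) (hN 0)
          have := mul_nonneg ht0.le (hN w)
          linarith
        have h3 := gz_tangent (q := p + 1) (by linarith) hv h
        have h4 := Real.rpow_le_rpow hv (hc w h t ht0 ht1) (by linarith : 0 ≤ p + 1)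
        refine le_trans (le_of_eq ?_) (h3.trans h4)
        rw [add_sub_cancel_right, Real.rpow_add_one h.ne']
        ring
    rw [integral_add hA (hI0.const_mul _), integral_const_mul,
      integral_sub (hB.const_mul _) hA, integral_const_mul, h1] at h2
    have htd : 0 < t ^ d := by positivity
    have h3 : t ^ d * (A + (1 - t) * (p + 1) * (N 0 * B - A)) ≤ A := by
      calc _ ≤ t ^ d * ((t ^ d)⁻¹ * A) := by gcongr
        _ = A := by field_simp
    have h4 : 1 - t ^ d ≤ d * (1 - t) := by
      have := one_add_mul_le_pow (a := t - 1) (by linarith) d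
      rw [add_sub_cancel] at this
      linarith
    have h5 : (1 - t ^ d) * A ≤ d * (1 - t) * A := by gcongr
    have h6 : (1 - t) * (t ^ d * ((p + 1) * (N 0 * B - A))) ≤ (1 - t) * (d * A) := by nlinarith
    exact le_of_mul_le_mul_left h6 (by linarith)
  have hlim : Filter.Tendsto (fun t : ℝ => t ^ d * ((p + 1) * (N 0 * B - A))) (nhdsWithin 1 (Iio 1))
      (nhds ((1:ℝ) ^ d * ((p + 1) * (N 0 * B - A)))) :=
    (Continuous.tendsto (by fun_prop) _).mono_left nhdsWithin_le_nhds
  have hle := le_of_tendsto hlim (b := d * A) (by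
    filter_upwards [Ioo_mem_nhdsLT (show (0:ℝ) < 1 by norm_num)] with t ht
    exact key t ht.1 ht.2)
  rw [one_pow, one_mul] at hle
  nlinarith

section
variable {n : ℕ} {γ : ℝ} {f : GzE n → ℝ} {K : Set (GzE n)}

lemma Gz.ineq (h : Gz γ f K) {θ : GzE n} (hθ : ‖θ‖ = 1) :
    (γ + 1) / (γ * n + γ + 1) * gzG f θ univ 0 ^ (γ / (γ + 1)) * (∫ x, f x) ≤
      ∫ x, f x * gzG f θ (Ioi 0) x ^ (γ / (γ + 1)) := by
  have hγ := h.hγ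
  set β := γ / (γ + 1) with hβ
  have hβ0 : 0 < β := by positivity
  have hθ0 : θ ≠ 0 := by intro hc; simp [hc] at hθ
  have hin : ⟪θ, θ⟫ ≠ 0 := by rw [real_inner_self_eq_norm_sq, hθ]; norm_num
  obtain ⟨hT, c, hc, hm⟩ := gz_map hin (volume : Measure (ℝ ∙ θ)ᗮ)
  obtain ⟨C, hC0, hC⟩ := h.G_le hθ
  set ν : Measure (ℝ ∙ θ)ᗮ := volume with hν
  set M : (ℝ ∙ θ)ᗮ → ℝ := fun w => gzG f θ univ (w : GzE n) with hM
  have hMn : ∀ w, 0 ≤ M w := fun w => h.G_nonneg _ _ _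
  have hMm : Measurable M := (h.G_meas θ univ).comp measurable_subtype_coe
  have hfT := gz_integrable_T hT hm h.int
  have hMeq : ∀ w : (ℝ ∙ θ)ᗮ, ∫ s : ℝ, f (gzT θ θ (s, w)) = M w := by
    intro w
    rw [hM]; simp only [gzG, setIntegral_univ, gzT]
    simp only [add_comm]
  have hMI : Integrable M ν := by
    have := hfT.integral_prod_right
    simpa only [hMeq] using this
  have hpow : ∀ w, (M w ^ β) ^ (1 / β) = M w := by
    intro w
    rw [← Real.rpow_mul (hMn w), mul_one_div_cancel hβ0.ne', Real.rpow_one]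
  have hpow2 : ∀ w, (M w ^ β) ^ (1 / β + 1) = M w ^ (1 + β) := by
    intro w
    rw [← Real.rpow_mul (hMn w)]
    congr 1; field_simp
  have hMI2 : Integrable (fun w => M w ^ (1 + β)) ν := by
    refine (hMI.const_mul (C ^ β)).mono' (hMm.pow_const _).aestronglyMeasurable ?_
    refine Filter.Eventually.of_forall fun w => ?_
    rw [Real.norm_of_nonneg (Real.rpow_nonneg (hMn w) _)]
    rcases (hMn w).eq_or_lt with h0 | h0
    · rw [← h0, Real.zero_rpow (by linarith)]; simp
    · rw [Real.rpow_add h0, Real.rpow_one, mul_comm]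
      have := Real.rpow_le_rpow h0.le (hC univ w) hβ0.le
      gcongr
  have hsc := gz_scale ν (N := fun w => M w ^ β) (p := 1 / β) (by positivity)
    (fun w => Real.rpow_nonneg (hMn w) _) (by
      intro w hw t ht0 ht1
      have hw' : 0 < M w := by
        rcases (hMn w).eq_or_lt with h0 | h0
        · rw [← h0, Real.zero_rpow hβ0.ne'] at hw
          exact absurd hw (lt_irrefl _)
        · exact h0
      have h0 : 0 < gzG f θ univ 0 := h.G_pos hθ (subset_univ _) h.mem0
      have := h.G_conc hθ MeasurableSet.univ convex_univ h0 hw' ht0 ht1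
      rw [smul_zero, zero_add] at this
      simpa [hM] using this)
    (by simpa only [hpow2] using hMI2) (by simpa only [hpow] using hMI)
  simp only [hpow, hpow2] at hsc
  have hd : (Module.finrank ℝ (ℝ ∙ θ)ᗮ : ℝ) = n - 1 := by
    have := gz_finrank hθ0
    have h2 : ((Module.finrank ℝ (ℝ ∙ θ)ᗮ + 1 : ℕ) : ℝ) = n := by exact_mod_cast this
    push_cast at h2; linarith
  rw [hd] at hsc
  have hBc : ∫ w, M w ∂ν = c * ∫ x, f x := by
    have h1 := gz_integral_T hT hc hm f
    rw [integral_prod_symm _ hfT] at h1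
    simpa only [hMeq, smul_eq_mul] using h1
  have hΦI : Integrable (fun x => f x * gzG f θ (Ioi 0) x ^ β) := by
    refine (h.int.mul_const (C ^ β)).mono'
      (h.meas.mul ((h.G_meas θ _).pow_const _)).aestronglyMeasurable ?_
    refine Filter.Eventually.of_forall fun x => ?_
    have h1 := h.G_nonneg θ (Ioi 0) x
    rw [Real.norm_of_nonneg (mul_nonneg (h.nonneg _) (Real.rpow_nonneg h1 _))]
    have := Real.rpow_le_rpow h1 (hC _ x) hβ0.le
    have := h.nonneg x
    gcongr
  have hAc : ∫ w, M w ^ (1 + β) ∂ν =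
      (1 + β) * (c * ∫ x, f x * gzG f θ (Ioi 0) x ^ β) := by
    have h1 := gz_integral_T hT hc hm (fun x => f x * gzG f θ (Ioi 0) x ^ β)
    rw [integral_prod_symm _ (gz_integrable_T hT hm hΦI)] at h1
    have h2 : ∀ w : (ℝ ∙ θ)ᗮ, ∫ s : ℝ, f (gzT θ θ (s, w)) * gzG f θ (Ioi 0) (gzT θ θ (s, w)) ^ β
        = M w ^ (1 + β) / (1 + β) := by
      intro w
      rw [← h.line_id hθ hβ0 (w : GzE n)]
      simp only [gzT, add_comm]
    simp only [h2, smul_eq_mul] at h1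
    rw [← h1, integral_div]
    field_simp
  rw [hBc, hAc] at hsc
  have hM0 : M 0 = gzG f θ univ 0 := by simp [hM]
  rw [hM0] at hsc
  set X := gzG f θ univ 0 ^ β
  set I := ∫ x, f x
  set J := ∫ x, f x * gzG f θ (Ioi 0) x ^ β
  have e1 : (γ + 1) / (γ * n + γ + 1) = 1 / (n * β + 1) := by
    rw [hβ]; field_simp; ring
  rw [e1]
  have e2 : 0 < n * β + 1 := by positivity
  rw [one_div, mul_assoc, inv_mul_le_iff₀ e2]
  have e3 : (1 / β + 1) * (X * (c * I)) = (c * (1 + β) / β) * (X * I) := by field_simp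
  have e4 : ((n - 1 : ℝ) + 1 / β + 1) * ((1 + β) * (c * J)) =
      (c * (1 + β) / β) * ((n * β + 1) * J) := by field_simp; ring
  rw [e3, e4] at hsc
  exact le_of_mul_le_mul_left hsc (by positivity)

end

section
variable {n : ℕ} {γ : ℝ} {f : GzE n → ℝ} {K : Set (GzE n)}

lemma Gz.ae_int (h : Gz γ f K) : ∀ᵐ x : GzE n, x ∈ K → x ∈ interior K := by
  have h1 := h.conv.addHaar_frontier volume
  have h2 : ∀ᵐ x : GzE n, x ∉ frontier K := by
    rw [ae_iff]; simpa using h1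
  filter_upwards [h2] with x hx hK
  by_contra hc
  exact hx ⟨subset_closure hK, hc⟩

lemma Gz.affine (h : Gz γ f K) {θ : GzE n} (hθ : ‖θ‖ = 1) (hpos : 0 < ∫ x, f x)
    (heq : gzG f θ (Ioi 0) 0 = ((γ + 1) / (γ * n + γ + 1)) ^ ((γ + 1) / γ) * gzG f θ univ 0) :
    ∃ ℓ : GzE n →L[ℝ] ℝ, ∀ x ∈ interior K, gzG f θ (Ioi 0) x ^ (γ / (γ + 1)) =
      gzG f θ (Ioi 0) 0 ^ (γ / (γ + 1)) + ℓ x := by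
  have hγ := h.hγ
  have hineq := h.ineq hθ
  set β := γ / (γ + 1) with hβ
  have hβ0 : 0 < β := by positivity
  obtain ⟨C, hC0, hC⟩ := h.G_le hθ
  set G := gzG f θ (Ioi 0) with hG
  set Φ : GzE n → ℝ := fun x => G x ^ β with hΦ
  have hU : IsOpen (interior K) := isOpen_interior
  have hGp : ∀ x ∈ interior K, 0 < G x := fun x hx => h.G_pos hθ Subset.rfl hx
  have hconc : ConcaveOn ℝ (interior K) Φ := by
    refine ⟨h.conv.interior, fun x hx y hy a b ha hb hab => ?_⟩
    rcases hb.eq_or_lt with h0 | h0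
    · have : a = 1 := by linarith
      subst this; subst h0; simp
    rcases ha.eq_or_lt with h1 | h1
    · have : b = 1 := by linarith
      subst this; subst h1; simp
    have h2 : a = 1 - b := by linarith
    subst h2
    exact h.G_conc hθ measurableSet_Ioi (convex_Ioi 0) (hGp x hx) (hGp y hy) h0 (by linarith)
  obtain ⟨ℓ, hℓ⟩ := gz_supergrad hU h.mem0 hconc
  refine ⟨ℓ, ?_⟩
  have hΦ0 : Φ 0 = (γ + 1) / (γ * n + γ + 1) * gzG f θ univ 0 ^ β := by
    simp only [hΦ]
    rw [heq, Real.mul_rpow (by positivity) (h.G_nonneg _ _ _), ← Real.rpow_mul (by positivity)]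
    congr 1
    have : (γ + 1) / γ * β = 1 := by rw [hβ]; field_simp
    rw [this, Real.rpow_one]
  rw [← hΦ0] at hineq
  have hΦI : Integrable (fun x => f x * Φ x) := by
    refine (h.int.mul_const (C ^ β)).mono'
      (h.meas.mul ((h.G_meas θ _).pow_const _)).aestronglyMeasurable ?_
    refine Filter.Eventually.of_forall fun x => ?_
    have h1 := h.G_nonneg θ (Ioi 0) x
    rw [Real.norm_of_nonneg (mul_nonneg (h.nonneg _) (Real.rpow_nonneg h1 _))]
    have := Real.rpow_le_rpow h1 (hC _ x) hβ0.le
    have := h.nonneg x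
    gcongr
  have hℓI : Integrable (fun x => f x * ℓ x) := by
    have := ℓ.integrable_comp h.cint
    simpa using this
  have hℓ0 : ∫ x, f x * ℓ x = 0 := by
    have := ℓ.integral_comp_comm h.cint
    rw [h.cent, map_zero] at this
    simpa using this
  set D : GzE n → ℝ := fun x => f x * Φ 0 + f x * ℓ x - f x * Φ x with hD
  have hDI : Integrable D := ((h.int.mul_const _).add hℓI).sub hΦI
  have hDint : ∫ x, D x ≤ 0 := by
    have h1 : ∫ x, D x = (∫ x, f x * Φ 0 + f x * ℓ x) - ∫ x, f x * Φ x :=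
      integral_sub ((h.int.mul_const _).add hℓI) hΦI
    rw [h1, integral_add (h.int.mul_const _) hℓI, hℓ0, integral_mul_const]
    have : ∫ x, f x * Φ x = ∫ x, f x * G x ^ β := rfl
    rw [this]
    linarith
  have hDn : 0 ≤ᵐ[volume] D := by
    filter_upwards [h.ae_int] with x hx
    by_cases hxK : x ∈ K
    · have := hℓ x (hx hxK)
      have h2 := mul_nonneg (h.nonneg x) (sub_nonneg.2 this)
      simp only [hD, Pi.zero_apply]
      linarith
    · simp [hD, h.zero x hxK]
  have hD0 : D =ᵐ[volume] 0 := by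
    rw [← integral_eq_zero_iff_of_nonneg_ae hDn hDI]
    exact le_antisymm hDint (integral_nonneg_of_ae hDn)
  have hae : Φ =ᵐ[volume.restrict (interior K)] fun x => Φ 0 + ℓ x := by
    rw [Filter.EventuallyEq, ae_restrict_iff' hU.measurableSet]
    filter_upwards [hD0] with x hx hxU
    have hfp := h.pos x hxU
    simp only [hD, Pi.zero_apply] at hx
    have : f x * (Φ 0 + ℓ x - Φ x) = 0 := by linarith
    rcases mul_eq_zero.1 this with h1 | h1
    · exact absurd h1 hfp.ne'
    · linarith
  have := Measure.eqOn_open_of_ae_eq hae hU (hconc.continuousOn hU) (by fun_prop)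
  exact this

lemma Gz.f_formula (h : Gz γ f K) {θ : GzE n} (hθ : ‖θ‖ = 1) {c : ℝ} {ℓ : GzE n →L[ℝ] ℝ}
    (hℓ : ∀ x ∈ interior K, gzG f θ (Ioi 0) x ^ (γ / (γ + 1)) = c + ℓ x) :
    ∀ x ∈ interior K, 0 < c + ℓ x ∧ gzG f θ (Ioi 0) x = (c + ℓ x) ^ ((γ + 1) / γ) ∧
      f x = ((γ + 1) / γ * -ℓ θ) * (c + ℓ x) ^ (1 / γ) := by
  have hγ := h.hγ
  have hGp : ∀ x ∈ interior K, 0 < gzG f θ (Ioi 0) x := fun x hx => h.G_pos hθ Subset.rfl hx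
  have hG : ∀ x ∈ interior K, gzG f θ (Ioi 0) x = (c + ℓ x) ^ ((γ + 1) / γ) := by
    intro x hx
    rw [← hℓ x hx, ← Real.rpow_mul (hGp x hx).le]
    have : γ / (γ + 1) * ((γ + 1) / γ) = 1 := by field_simp
    rw [this, Real.rpow_one]
  intro x hx
  have hp : 0 < c + ℓ x := by rw [← hℓ x hx]; exact Real.rpow_pos_of_pos (hGp x hx) _
  refine ⟨hp, hG x hx, ?_⟩
  have hli := h.line_int hθ x
  have hfc : ContinuousAt (fun s : ℝ => f (x + s • θ)) 0 := by
    have h1 : ContinuousAt f (x + (0 : ℝ) • θ) := by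
      rw [zero_smul, add_zero]
      exact h.cont.continuousAt (mem_interior_iff_mem_nhds.1 hx)
    exact ContinuousAt.comp (f := fun s : ℝ => x + s • θ) h1 (by fun_prop)
  have hd1 : HasDerivAt (fun s : ℝ => gzG f θ (Ioi 0) (x + s • θ)) (-f x) 0 := by
    have h1 : (fun s : ℝ => gzG f θ (Ioi 0) (x + s • θ)) =
        fun s => (∫ t in Ioi (0 : ℝ), f (x + t • θ)) - ∫ t in (0 : ℝ)..s, f (x + t • θ) := by
      ext s
      rw [gzG_shift, ← intervalIntegral.integral_Ioi_sub_Ioi' (a := 0) (b := s) hli.integrableOn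
        hli.integrableOn]
      ring
    rw [h1]
    have h2 : HasDerivAt (fun s : ℝ => ∫ t in (0 : ℝ)..s, f (x + t • θ)) (f (x + (0:ℝ) • θ)) 0 :=
      intervalIntegral.integral_hasDerivAt_right hli.intervalIntegrable
        (h.line_meas θ x).stronglyMeasurable.stronglyMeasurableAtFilter hfc
    rw [zero_smul, add_zero] at h2
    exact h2.const_sub _
  have hd2 : HasDerivAt (fun s : ℝ => (c + ℓ (x + s • θ)) ^ ((γ + 1) / γ))
      (ℓ θ * ((γ + 1) / γ) * (c + ℓ x) ^ (1 / γ)) 0 := by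
    have h1 : HasDerivAt (fun s : ℝ => c + ℓ (x + s • θ)) (ℓ θ) 0 := by
      simp only [map_add, map_smul, smul_eq_mul]
      have := (((hasDerivAt_id (0 : ℝ)).mul_const (ℓ θ)).const_add (ℓ x)).const_add c
      simpa using this
    have h2 := h1.rpow_const (p := (γ + 1) / γ) (Or.inl (by simpa using hp.ne'))
    rw [zero_smul, add_zero] at h2
    convert h2 using 2
    congr 1; field_simp; ring
  have hev : (fun s : ℝ => gzG f θ (Ioi 0) (x + s • θ)) =ᶠ[nhds 0]
      (fun s : ℝ => (c + ℓ (x + s • θ)) ^ ((γ + 1) / γ)) := by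
    obtain ⟨ε, hε, hb⟩ := gz_exists_ball hx hθ
    filter_upwards [Metric.ball_mem_nhds (0 : ℝ) hε] with s hs
    exact hG _ (hb s (by simpa using hs))
  have := hd1.unique (hd2.congr_of_eventuallyEq hev)
  linarith

lemma Gz.closure_int (h : Gz γ f K) : closure (interior K) = K := by
  rw [h.conv.closure_interior_eq_closure_of_nonempty_interior ⟨0, h.mem0⟩,
    h.comp.isClosed.closure_eq]

lemma Gz.normal (h : Gz γ f K) {θ : GzE n} (hθ : ‖θ‖ = 1) (hpos : 0 < ∫ x, f x)
    (heq : gzG f θ (Ioi 0) 0 = ((γ + 1) / (γ * n + γ + 1)) ^ ((γ + 1) / γ) * gzG f θ univ 0) :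
    ∃ (m r k : ℝ) (ξ : GzE n), 0 < m ∧ 0 < r ∧ 0 < k ∧ ‖ξ‖ = 1 ∧ 0 < ⟪θ, ξ⟫ ∧
      (∀ x ∈ interior K, 0 < -⟪x, ξ⟫ + r * ⟪θ, ξ⟫) ∧
      (∀ x ∈ interior K, gzG f θ (Ioi 0) x = k * (-⟪x, ξ⟫ + r * ⟪θ, ξ⟫) ^ ((γ + 1) / γ)) ∧
      (∀ x ∈ K, f x = m * (-⟪x, ξ⟫ + r * ⟪θ, ξ⟫) ^ (1 / γ)) := by
  have hγ := h.hγ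
  obtain ⟨ℓ, hℓ⟩ := h.affine hθ hpos heq
  set c := gzG f θ (Ioi 0) 0 ^ (γ / (γ + 1)) with hc
  have hc0 : 0 < c := Real.rpow_pos_of_pos (h.G_pos hθ Subset.rfl h.mem0) _
  have hform := h.f_formula hθ hℓ
  have hℓθ : ℓ θ < 0 := by
    obtain ⟨h1, -, h2⟩ := hform 0 h.mem0
    have h3 := h.pos 0 h.mem0
    rw [h2] at h3
    have h4 : 0 < (c + ℓ 0) ^ (1 / γ) := Real.rpow_pos_of_pos h1 _
    have h5 := pos_of_mul_pos_left h3 h4.le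
    have h6 : 0 < (γ + 1) / γ := by positivity
    have h7 := (pos_iff_pos_of_mul_pos h5).1 h6
    linarith
  set v := (InnerProductSpace.toDual ℝ (GzE n)).symm ℓ with hv
  have hvx : ∀ x, ℓ x = ⟪v, x⟫ := fun x => (InnerProductSpace.toDual_symm_apply).symm
  have hv0 : v ≠ 0 := by
    intro h0
    rw [hvx, h0, inner_zero_left] at hℓθ
    exact lt_irrefl _ hℓθ
  have hN : 0 < ‖v‖ := norm_pos_iff.2 hv0
  have hξ : ∀ x, ⟪x, (-‖v‖⁻¹) • v⟫ = -‖v‖⁻¹ * ℓ x := by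
    intro x
    rw [inner_smul_right, hvx, real_inner_comm]
  have ht : 0 < -‖v‖⁻¹ * ℓ θ := by
    have := mul_pos (inv_pos.2 hN) (neg_pos.2 hℓθ)
    linarith
  have hL : ∀ x, -⟪x, (-‖v‖⁻¹) • v⟫ + (c / (-ℓ θ)) * ⟪θ, (-‖v‖⁻¹) • v⟫ = ‖v‖⁻¹ * (c + ℓ x) := by
    intro x
    rw [hξ, hξ]
    have : -ℓ θ ≠ 0 := by linarith
    have : ℓ θ ≠ 0 := hℓθ.ne
    field_simp
    ring
  refine ⟨((γ + 1) / γ * -ℓ θ) * ‖v‖ ^ (1 / γ), c / (-ℓ θ), ‖v‖ ^ ((γ + 1) / γ), (-‖v‖⁻¹) • v,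
    ?_, div_pos hc0 (by linarith), Real.rpow_pos_of_pos hN _, ?_, ?_, ?_, ?_, ?_⟩
  · have : 0 < -ℓ θ := by linarith
    have := Real.rpow_pos_of_pos hN (1 / γ)
    positivity
  · rw [norm_smul, norm_neg, norm_inv, norm_norm]; field_simp
  · rw [hξ]; exact ht
  · intro x hx
    rw [hL]
    exact mul_pos (inv_pos.2 hN) (hform x hx).1
  · intro x hx
    rw [hL, (hform x hx).2.1, Real.mul_rpow (inv_pos.2 hN).le (hform x hx).1.le, ← mul_assoc,
      ← Real.mul_rpow hN.le (inv_pos.2 hN).le, mul_inv_cancel₀ hN.ne', Real.one_rpow, one_mul]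
  · have hEq : EqOn f (fun x => ((γ + 1) / γ * -ℓ θ) * (c + ℓ x) ^ (1 / γ)) (interior K) :=
      fun x hx => (hform x hx).2.2
    have hEqK : EqOn f (fun x => ((γ + 1) / γ * -ℓ θ) * (c + ℓ x) ^ (1 / γ)) K := by
      refine hEq.of_subset_closure h.cont ?_ interior_subset h.closure_int.ge
      refine ContinuousOn.mul continuousOn_const ?_
      exact ContinuousOn.rpow_const (by fun_prop) fun x _ => Or.inr (by positivity)
    have hLn : ∀ x ∈ K, 0 ≤ c + ℓ x := by
      intro x hx
      have h1 : IsClosed {x | 0 ≤ c + ℓ x} := isClosed_le continuous_const (by fun_prop)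
      have h2 : closure (interior K) ⊆ {x | 0 ≤ c + ℓ x} :=
        closure_minimal (fun x hx => (hform x hx).1.le) h1
      rw [h.closure_int] at h2
      exact h2 hx
    intro x hx
    rw [hEqK hx, hL, Real.mul_rpow (inv_pos.2 hN).le (hLn x hx)]
    simp only
    rw [Real.inv_rpow hN.le]
    have := Real.rpow_pos_of_pos hN (1 / γ)
    field_simp

end

section
variable {n : ℕ}

set_option maxHeartbeats 1000000 in
lemma gz_rigid (hn : 1 ≤ n) {K : Set (GzE n)} (hcomp : IsCompact K) (hconv : Convex ℝ K)
    (h0 : (0 : GzE n) ∈ K) {u q : ℝ} (hq : 0 < q) {ℓ : GzE n →L[ℝ] ℝ}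
    (hL : ∀ y ∈ K, 0 ≤ u + ℓ y)
    (hAB : (q + 1) * (u * ∫ y in K, (u + ℓ y) ^ q) = (n + q + 1) * ∫ y in K, (u + ℓ y) ^ (q + 1))
    {y₀ : GzE n} (hy₀ : y₀ ∈ interior K) {t₀ : ℝ} (ht₀ : 1 < t₀) (hpos : 0 < u + ℓ (t₀ • y₀)) :
    t₀ • y₀ ∈ K := by
  by_contra hnot
  have hu : 0 ≤ u := by simpa using hL 0 h0
  have hKm : MeasurableSet K := hcomp.isClosed.measurableSet
  have ht00 : 0 < t₀ := by linarith
  have hposy : 0 < u + ℓ y₀ := by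
    have h1 : t₀ * (u + ℓ y₀) = (t₀ - 1) * u + (u + ℓ (t₀ • y₀)) := by
      rw [map_smul, smul_eq_mul]; ring
    have h2 : 0 < t₀ * (u + ℓ y₀) := by
      rw [h1]; have := mul_nonneg (by linarith : 0 ≤ t₀ - 1) hu; linarith
    exact (pos_iff_pos_of_mul_pos h2).1 ht00
  obtain ⟨δ, hδ0, hδ1, hδ2⟩ : ∃ δ > 0, δ < u + ℓ y₀ ∧ δ < u + ℓ (t₀ • y₀) := by
    obtain ⟨δ, h1, h2⟩ := exists_between (lt_min hposy hpos)
    exact ⟨δ, h1, lt_of_lt_of_le h2 (min_le_left _ _), lt_of_lt_of_le h2 (min_le_right _ _)⟩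
  set B : Set (GzE n) := interior K ∩ ({y | δ < u + ℓ y} ∩ ({y | δ < u + ℓ (t₀ • y)} ∩
    {y | t₀ • y ∈ Kᶜ})) with hB
  have hBo : IsOpen B := by
    refine isOpen_interior.inter ((isOpen_lt continuous_const (by fun_prop)).inter
      ((isOpen_lt continuous_const (by fun_prop)).inter ?_))
    exact hcomp.isClosed.isOpen_compl.preimage (by fun_prop)
  have hBy : y₀ ∈ B := ⟨hy₀, hδ1, hδ2, hnot⟩
  set C : Set (GzE n) := ⋃ s : ℝ, {z | 0 < s ∧ s • z ∈ B} with hC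
  have hCo : IsOpen C := by
    refine isOpen_iUnion fun s => ?_
    exact (isOpen_const (p := 0 < s)).inter (hBo.preimage (by fun_prop))
  have hBC : B ⊆ C := fun z hz => mem_iUnion.2 ⟨1, by norm_num, by simpa using hz⟩
  have hCs : ∀ t : ℝ, 0 < t → ∀ z, t • z ∈ C ↔ z ∈ C := by
    intro t ht z
    simp only [hC, mem_iUnion, mem_setOf_eq]
    constructor
    · rintro ⟨s, hs, hz⟩
      exact ⟨s * t, by positivity, by rwa [mul_smul]⟩
    · rintro ⟨s, hs, hz⟩
      refine ⟨s / t, by positivity, ?_⟩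
      rwa [smul_smul, div_mul_cancel₀ _ ht.ne']
  set V := volume.real (K ∩ C) with hV
  have hfin : volume (K ∩ C) ≠ ⊤ := ((measure_mono inter_subset_left).trans_lt
    hcomp.measure_lt_top).ne
  have hV0 : 0 < V := by
    refine ENNReal.toReal_pos ?_ hfin
    have h1 : 0 < volume B := hBo.measure_pos _ ⟨y₀, hBy⟩
    have h2 : B ⊆ K ∩ C := fun z hz => ⟨interior_subset hz.1, hBC hz⟩
    exact (h1.trans_le (measure_mono h2)).ne'
  set A := ∫ y in K, (u + ℓ y) ^ (q + 1) with hA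
  set B' := ∫ y in K, (u + ℓ y) ^ q with hB'
  have hc1 : Continuous fun y => (u + ℓ y) ^ (q + 1) :=
    Continuous.rpow_const (by fun_prop) fun _ => Or.inr (by linarith)
  have hc2 : Continuous fun y => (u + ℓ y) ^ q :=
    Continuous.rpow_const (by fun_prop) fun _ => Or.inr hq.le
  have hA0 : 0 ≤ A := setIntegral_nonneg hKm fun y hy => Real.rpow_nonneg (hL y hy) _
  set F : GzE n → ℝ := K.indicator fun y => (u + ℓ y) ^ (q + 1) with hF
  have hFI : Integrable F := (hc1.continuousOn.integrableOn_compact hcomp).integrable_indicator hKm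
  have hFA : ∫ y, F y = A := integral_indicator hKm
  have hFn : ∀ y, 0 ≤ F y := fun y => indicator_nonneg (fun y hy => Real.rpow_nonneg (hL y hy) _) y
  set η := (δ / 2) ^ (q + 1) * V with hη
  have hη0 : 0 < η := mul_pos (Real.rpow_pos_of_pos (by linarith) _) hV0
  have key : ∀ t : ℝ, 1 / 2 ≤ t → t < 1 → η ≤ (1 - t ^ n) * A := by
    intro t ht2 ht1
    have ht : 0 < t := by linarith
    have htn : 0 < t ^ n := by positivity
    set w := (t ^ n)⁻¹ - 1 with hw
    have hscale : ∫ y, F (t • y) = (w + 1) * A := by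
      rw [Measure.integral_comp_smul volume F t, finrank_euclideanSpace_fin,
        abs_of_pos (by positivity), smul_eq_mul, hFA, hw]; ring
    set S : Set (GzE n) := ((fun y => t • y) ⁻¹' (K ∩ C)) \ (K ∩ C) with hS
    have hKC : MeasurableSet (K ∩ C) := hKm.inter hCo.measurableSet
    have hpre : MeasurableSet ((fun y : GzE n => t • y) ⁻¹' (K ∩ C)) :=
      hKC.preimage (by fun_prop)
    have hSm : MeasurableSet S := hpre.diff hKC
    have hvolpre : volume ((fun y : GzE n => t • y) ⁻¹' (K ∩ C)) =
        ENNReal.ofReal ((t ^ n)⁻¹) * volume (K ∩ C) := by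
      rw [Measure.addHaar_preimage_smul volume ht.ne', finrank_euclideanSpace_fin,
        abs_of_pos (by positivity)]
    have hsub : K ∩ C ⊆ (fun y : GzE n => t • y) ⁻¹' (K ∩ C) := by
      rintro z ⟨hz1, hz2⟩
      exact ⟨(hconv.starConvex h0).smul_mem hz1 ht.le ht1.le, (hCs t ht z).2 hz2⟩
    have hpfin : volume ((fun y : GzE n => t • y) ⁻¹' (K ∩ C)) ≠ ⊤ := by
      rw [hvolpre]; exact ENNReal.mul_ne_top ENNReal.ofReal_ne_top hfin
    have hSfin : volume S ≠ ⊤ := ((measure_mono diff_subset).trans_lt hpfin.lt_top).ne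
    have hSvol : volume.real S = w * V := by
      rw [hS, measureReal_diff hsub hKC hpfin, hw, sub_mul, one_mul]
      congr 1
      rw [measureReal_def, hvolpre, ENNReal.toReal_mul, ENNReal.toReal_ofReal (by positivity)]
      rfl
    have hi1 : IntegrableOn (fun y => (u + ℓ y) ^ (q + 1)) K :=
      hc1.continuousOn.integrableOn_compact hcomp
    have hi2 : IntegrableOn (fun y => (u + ℓ y) ^ q) K :=
      hc2.continuousOn.integrableOn_compact hcomp
    have hi3 : IntegrableOn (fun y => u * (u + ℓ y) ^ q - (u + ℓ y) ^ (q + 1)) K :=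
      (hi2.const_mul u).sub hi1
    have hi4 : IntegrableOn (fun y => (u + ℓ y) ^ (q + 1) +
        (1 - t) * (q + 1) * (u * (u + ℓ y) ^ q - (u + ℓ y) ^ (q + 1))) K :=
      hi1.add (hi3.const_mul _)
    set H1 : GzE n → ℝ := K.indicator fun y => (u + ℓ y) ^ (q + 1) +
        (1 - t) * (q + 1) * (u * (u + ℓ y) ^ q - (u + ℓ y) ^ (q + 1)) with hH1
    set H2 : GzE n → ℝ := S.indicator fun _ => (δ / 2) ^ (q + 1) with hH2
    have hI1 : Integrable H1 := hi4.integrable_indicator hKm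
    have hI2 : Integrable H2 := (integrableOn_const hSfin).integrable_indicator hSm
    have hle : ∀ y, H1 y + H2 y ≤ F (t • y) := by
      intro y
      by_cases hy : y ∈ K
      · have hty : t • y ∈ K := (hconv.starConvex h0).smul_mem hy ht.le ht1.le
        have hyS : y ∉ S := by
          rintro ⟨⟨h1, h2⟩, h3⟩
          exact h3 ⟨hy, (hCs t ht y).1 h2⟩
        rw [hH1, hH2, hF, indicator_of_mem hy, indicator_of_notMem hyS, indicator_of_mem hty,
          add_zero]
        have hLt : u + ℓ (t • y) = (1 - t) * u + t * (u + ℓ y) := by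
          rw [map_smul, smul_eq_mul]; ring
        rcases (hL y hy).eq_or_lt with h1 | h1
        · rw [← h1, Real.zero_rpow (by linarith), Real.zero_rpow (by linarith)]
          simp only [mul_zero, sub_zero, add_zero]
          exact Real.rpow_nonneg (hL _ hty) _
        · have h3 := gz_tangent (q := q + 1) (by linarith) (hL _ hty) h1
          refine le_trans (le_of_eq ?_) h3
          rw [add_sub_cancel_right, Real.rpow_add_one h1.ne', hLt]
          ring
      · rw [hH1, indicator_of_notMem hy, zero_add]
        by_cases hyS : y ∈ S
        · rw [hH2, indicator_of_mem hyS]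
          obtain ⟨⟨hty, htC⟩, -⟩ := hyS
          simp only at hty htC
          rw [hF, indicator_of_mem hty]
          refine Real.rpow_le_rpow (by linarith) ?_ (by linarith)
          rw [hC, mem_iUnion] at htC
          obtain ⟨s, hs, hsB⟩ := htC
          set b := s • t • y with hb
          have hbK : b ∈ K := interior_subset hsB.1
          have htyb : t • y = s⁻¹ • b := by rw [hb, smul_smul, inv_mul_cancel₀ hs.ne', one_smul]
          have hyb : y = (t⁻¹ * s⁻¹) • b := by
            rw [mul_smul, ← htyb, smul_smul, inv_mul_cancel₀ ht.ne', one_smul]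
          have hgt : 1 < t⁻¹ * s⁻¹ := by
            by_contra hc
            push Not at hc
            apply hy
            rw [hyb]
            exact (hconv.starConvex h0).smul_mem hbK (by positivity) hc
          have hts : t < s⁻¹ := by
            have h1 := mul_lt_mul_of_pos_left hgt ht
            rw [← mul_assoc, mul_inv_cancel₀ ht.ne', one_mul, mul_one] at h1
            exact h1
          have hlt : s⁻¹ < t₀ := by
            by_contra hc
            push Not at hc
            apply hsB.2.2.2
            have h1 : t₀ • b = (t₀ * s) • (t • y) := by
              rw [hb]; simp only [smul_smul]; congr 1; ring
            rw [h1]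
            refine (hconv.starConvex h0).smul_mem hty (by positivity) ?_
            have := mul_le_mul_of_nonneg_right hc hs.le
            rwa [inv_mul_cancel₀ hs.ne'] at this
          rw [htyb, map_smul, smul_eq_mul]
          have hb1 : δ < u + ℓ b := hsB.2.1
          have hb2 : δ < u + ℓ (t₀ • b) := hsB.2.2.1
          rw [map_smul, smul_eq_mul] at hb2
          generalize s⁻¹ = σ at *
          by_cases hσ : 1 ≤ σ
          · by_cases hsg : 0 ≤ ℓ b
            · have := mul_le_mul_of_nonneg_right hσ hsg
              linarith
            · push Not at hsg
              have := mul_le_mul_of_nonpos_right hlt.le hsg.le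
              linarith
          · push Not at hσ
            have h1 := mul_nonneg (by linarith : 0 ≤ 1 - σ) hu
            have hσ0 : 1 / 2 ≤ σ := by linarith
            have h2 := mul_le_mul hσ0 hb1.le hδ0.le (by linarith)
            linarith
        · rw [hH2, indicator_of_notMem hyS]
          exact hFn _
    have hIntg := integral_mono (hI1.add hI2) (hFI.comp_smul ht.ne') hle
    have e1 : ∫ y, H1 y = A + (1 - t) * (q + 1) * (u * B' - A) := by
      rw [hH1, integral_indicator hKm, integral_add hi1 (hi3.const_mul _), integral_const_mul,
        integral_sub (hi2.const_mul _) hi1, integral_const_mul]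
    have e2 : ∫ y, H2 y = w * η := by
      rw [hH2, integral_indicator hSm, setIntegral_const, hSvol, hη, smul_eq_mul]; ring
    simp only [Pi.add_apply] at hIntg
    rw [integral_add hI1 hI2, e1, e2, hscale] at hIntg
    have h1t : t ^ n < 1 := pow_lt_one₀ ht.le ht1 (by omega)
    have hw0 : 0 < w := by
      rw [hw]; have := (one_lt_inv₀ htn).2 h1t; linarith
    have hwt : t ^ n * w = 1 - t ^ n := by rw [hw]; field_simp
    have h4 : 1 - t ^ n ≤ n * (1 - t) := by
      have := one_add_mul_le_pow (a := t - 1) (by linarith) n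
      rw [add_sub_cancel] at this
      linarith
    have h5 : (q + 1) * (u * B' - A) = n * A := by linarith
    have h6 : A + (1 - t) * (n * A) + w * η ≤ (w + 1) * A := by
      rw [← h5]; linarith
    have h7 : (t ^ n * w) * A ≤ (n * (1 - t)) * A := by rw [hwt]; gcongr
    have h8 : w * η ≤ w * ((1 - t ^ n) * A) := by
      have e : w * ((1 - t ^ n) * A) = w * A - (t ^ n * w) * A := by ring
      rw [e]; linarith
    exact le_of_mul_le_mul_left h8 hw0
  have hlim : Filter.Tendsto (fun t : ℝ => (1 - t ^ n) * A) (nhdsWithin 1 (Iio 1))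
      (nhds ((1 - (1:ℝ) ^ n) * A)) :=
    (Continuous.tendsto (by fun_prop) _).mono_left nhdsWithin_le_nhds
  have hle := ge_of_tendsto hlim (b := η) (by
    filter_upwards [Ioo_mem_nhdsLT (show (1/2:ℝ) < 1 by norm_num)] with t ht
    exact key t ht.1.le ht.2)
  rw [one_pow, sub_self, zero_mul] at hle
  linarith

end

lemma gz_int_pow {q τ m r c : ℝ} (hq : 0 < q) (hτ : 0 < τ) (hc : c ≤ r) :
    ∫ s in c..r, m * (τ * (r - s)) ^ q = m * τ ^ q / (q + 1) * (r - c) ^ (q + 1) := by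
  have h1 : ∫ s in c..r, m * (τ * (r - s)) ^ q = ∫ s in c..r, (m * τ ^ q) * (r - s) ^ q := by
    refine intervalIntegral.integral_congr fun s hs => ?_
    rw [uIcc_of_le hc] at hs
    rw [Real.mul_rpow hτ.le (by linarith [hs.2]), mul_assoc]
  rw [h1, intervalIntegral.integral_const_mul,
    intervalIntegral.integral_comp_sub_left (fun x => x ^ q), sub_self,
    integral_rpow (Or.inl (by linarith)), Real.zero_rpow (by linarith)]
  ring

lemma gz_line_iff {γ τ m r a κ : ℝ} (hγ : 0 < γ) (hτ : 0 < τ) (hm : 0 < m) (hr : 0 < r)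
    (ha : 0 ≤ a) (hκ : 0 < κ) {g : ℝ → ℝ}
    (hg1 : ∀ s ∈ Icc (-a) r, g s = m * (τ * (r - s)) ^ (1 / γ)) (hg0 : ∀ s ∉ Icc (-a) r, g s = 0) :
    (∫ s in Ioi (0 : ℝ), g s) = κ ^ ((γ + 1) / γ) * (∫ s : ℝ, g s) ↔ r = κ * (r + a) := by
  have hp : (1 / γ + 1) = (γ + 1) / γ := by field_simp; ring
  have hq : 0 < 1 / γ := by positivity
  have e1 : ∫ s in Ioi (0 : ℝ), g s = m * τ ^ (1 / γ) / ((γ + 1) / γ) * r ^ ((γ + 1) / γ) := by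
    have h1 : ∫ s in Ioi (0 : ℝ), g s = ∫ s in Ioc (0 : ℝ) r, g s :=
      setIntegral_eq_of_subset_of_forall_diff_eq_zero measurableSet_Ioi (fun t ht => ht.1)
        fun t ht => hg0 t fun hc => ht.2 ⟨ht.1, hc.2⟩
    rw [h1, ← intervalIntegral.integral_of_le hr.le, ← hp]
    have h2 := gz_int_pow (m := m) hq hτ hr.le
    rw [sub_zero] at h2
    rw [← h2]
    refine intervalIntegral.integral_congr fun s hs => ?_
    rw [uIcc_of_le hr.le] at hs
    exact hg1 s ⟨by linarith [hs.1], hs.2⟩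
  have e2 : ∫ s : ℝ, g s = m * τ ^ (1 / γ) / ((γ + 1) / γ) * (r + a) ^ ((γ + 1) / γ) := by
    have har : -a ≤ r := by linarith
    have h1 : ∫ s : ℝ, g s = ∫ s in (-a)..r, g s := by
      rw [intervalIntegral.integral_of_le har, ← integral_Icc_eq_integral_Ioc]
      exact (setIntegral_eq_integral_of_forall_compl_eq_zero hg0).symm
    rw [h1, ← hp]
    have h2 := gz_int_pow (m := m) hq hτ har
    rw [sub_neg_eq_add] at h2
    rw [← h2]
    refine intervalIntegral.integral_congr fun s hs => ?_
    rw [uIcc_of_le har] at hs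
    exact hg1 s hs
  have hC : 0 < m * τ ^ (1 / γ) / ((γ + 1) / γ) := by
    have := Real.rpow_pos_of_pos hτ (1 / γ)
    positivity
  have hpp : (γ + 1) / γ ≠ 0 := by positivity
  rw [e1, e2, mul_left_comm, mul_right_inj' hC.ne', ← Real.mul_rpow hκ.le (by linarith)]
  constructor
  · intro h
    exact (Real.rpow_left_inj hr.le (by positivity) hpp).1 h
  · intro h
    rw [← h]

section
variable {n : ℕ} {γ : ℝ} {f : GzE n → ℝ} {K : Set (GzE n)}

lemma gz_mem_hull {D : Set (GzE n)} (hD : Convex ℝ D) (hne : D.Nonempty) {p v x : GzE n} :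
    x ∈ convexHull ℝ (insert p ((fun d => v + d) '' D)) ↔
      ∃ d ∈ D, ∃ t : ℝ, 0 ≤ t ∧ t ≤ 1 ∧ x = (1 - t) • p + t • (v + d) := by
  rw [convexHull_insert (hne.image _), (hD.translate v).convexHull_eq, mem_convexJoin]
  constructor
  · rintro ⟨_, rfl, _, ⟨d, hd, rfl⟩, a, b, ha, hb, hab, rfl⟩
    refine ⟨d, hd, b, hb, by linarith, ?_⟩
    rw [show a = 1 - b by linarith]
  · rintro ⟨d, hd, t, h0, h1, rfl⟩
    exact ⟨p, rfl, _, ⟨d, hd, rfl⟩, 1 - t, t, by linarith, h0, by ring, rfl⟩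

lemma Gz.reverse (h : Gz γ f K) {θ ξ : GzE n} (hn : 1 ≤ n) {m r : ℝ} {D : Set (GzE n)}
    (hm : 0 < m) (hr : 0 < r) (hin : 0 < ⟪θ, ξ⟫) (hD : Convex ℝ D)
    (hDs : D ⊆ {x | ⟪x, ξ⟫ = 0}) (hne : D.Nonempty)
    (hK : K = convexHull ℝ (insert ((-(n * γ / (γ + 1)) * r) • θ) ((fun d => r • θ + d) '' D)))
    (hf : ∀ x, f x = m * K.indicator (fun y => (-⟪y, ξ⟫ + r * ⟪θ, ξ⟫) ^ (1 / γ)) x) :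
    (∫ s in Ioi (0 : ℝ), f (s • θ)) =
        ((γ + 1) / (γ * n + γ + 1)) ^ ((γ + 1) / γ) * (∫ s : ℝ, f (s • θ)) := by
  have hγ := h.hγ
  have hn' : (0 : ℝ) < n := by exact_mod_cast hn
  set a := n * γ / (γ + 1) * r with ha
  have ha0 : 0 < a := by positivity
  have hmem : ∀ x, x ∈ K ↔ ∃ d ∈ D, ∃ t : ℝ, 0 ≤ t ∧ t ≤ 1 ∧
      x = (-(1 - t) * a + t * r) • θ + t • d := by
    intro x
    rw [hK, gz_mem_hull hD hne]
    refine exists_congr fun d => and_congr_right fun _ => exists_congr fun t =>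
      and_congr_right fun _ => and_congr_right fun _ => ?_
    have : (1 - t) • (-(n * γ / (γ + 1)) * r) • θ + t • (r • θ + d) =
        (-(1 - t) * a + t * r) • θ + t • d := by
      rw [ha]; module
    rw [this]
  have hinner : ∀ s t : ℝ, ∀ d ∈ D, s • θ = (-(1 - t) * a + t * r) • θ + t • d →
      s = -(1 - t) * a + t * r := by
    intro s t d hd hs
    have h1 := congrArg (fun z => ⟪z, ξ⟫) hs
    simp only [inner_add_left, real_inner_smul_left] at h1
    rw [show ⟪d, ξ⟫ = 0 from hDs hd, mul_zero, add_zero] at h1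
    exact mul_right_cancel₀ hin.ne' h1
  have hD0 : (0 : GzE n) ∈ D := by
    obtain ⟨d, hd, t, ht0, ht1, hx⟩ := (hmem 0).1 (interior_subset h.mem0)
    have h1 := hinner 0 t d hd (by rw [zero_smul]; exact hx)
    rw [← h1, zero_smul, zero_add] at hx
    have ht : t ≠ 0 := by
      rintro rfl
      linarith
    have := (smul_eq_zero.1 hx.symm).resolve_left ht
    rwa [← this]
  have hseg : ∀ s : ℝ, s • θ ∈ K ↔ s ∈ Icc (-a) r := by
    intro s
    rw [hmem]
    constructor
    · rintro ⟨d, hd, t, ht0, ht1, hx⟩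
      rw [hinner s t d hd hx]
      constructor
      · have := mul_nonneg ht0 (by linarith : 0 ≤ a + r)
        linarith
      · have := mul_nonneg (by linarith : 0 ≤ 1 - t) (by linarith : 0 ≤ a + r)
        linarith
    · rintro ⟨h1, h2⟩
      refine ⟨0, hD0, (s + a) / (r + a), div_nonneg (by linarith) (by linarith), ?_, ?_⟩
      · rw [div_le_one (by linarith)]; linarith
      · rw [smul_zero, add_zero]
        congr 1
        have : r + a ≠ 0 := by positivity
        field_simp
        ring
  refine (gz_line_iff (a := a) (τ := ⟪θ, ξ⟫) (m := m) (r := r) hγ hin hm hr ha0.le (by positivity)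
    ?_ ?_).2 ?_
  · intro s hs
    rw [hf, indicator_of_mem ((hseg s).2 hs), real_inner_smul_left]
    congr 2; ring
  · intro s hs
    rw [hf, indicator_of_notMem (fun hc => hs ((hseg s).1 hc)), mul_zero]
  · rw [ha]; field_simp; ring

end

/-- The affine function vanishing on the top face. -/
noncomputable def gzL {n : ℕ} (θ ξ : GzE n) (r : ℝ) (x : GzE n) : ℝ := -⟪x, ξ⟫ + r * ⟪θ, ξ⟫

/-- Data available in the equality case. -/
structure Gn {n : ℕ} (γ : ℝ) (f : GzE n → ℝ) (K : Set (GzE n)) (θ ξ : GzE n) (m r k : ℝ) :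
    Prop where
  h : Gz γ f K
  hn : 1 ≤ n
  hθ : ‖θ‖ = 1
  hm : 0 < m
  hr : 0 < r
  hk : 0 < k
  hin : 0 < ⟪θ, ξ⟫
  Lpos : ∀ x ∈ interior K, 0 < gzL θ ξ r x
  Gform : ∀ x ∈ interior K, gzG f θ (Ioi 0) x = k * gzL θ ξ r x ^ ((γ + 1) / γ)
  fform : ∀ x ∈ K, f x = m * gzL θ ξ r x ^ (1 / γ)
  heq : gzG f θ (Ioi 0) 0 = ((γ + 1) / (γ * n + γ + 1)) ^ ((γ + 1) / γ) * gzG f θ univ 0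

section
variable {n : ℕ} {γ m r k : ℝ} {f : GzE n → ℝ} {K : Set (GzE n)} {θ ξ : GzE n}

lemma gzL_cont (θ ξ : GzE n) (r : ℝ) : Continuous (gzL θ ξ r) := by
  unfold gzL; fun_prop

lemma gzL_add (θ ξ x : GzE n) (r s : ℝ) : gzL θ ξ r (x + s • θ) = gzL θ ξ r x - s * ⟪θ, ξ⟫ := by
  unfold gzL; rw [inner_add_left, real_inner_smul_left]; ring

lemma gzL_smul (θ ξ : GzE n) (r s : ℝ) : gzL θ ξ r (s • θ) = ⟪θ, ξ⟫ * (r - s) := by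
  unfold gzL; rw [real_inner_smul_left]; ring

lemma Gn.Lnn (H : Gn γ f K θ ξ m r k) {x : GzE n} (hx : x ∈ K) : 0 ≤ gzL θ ξ r x := by
  have h1 : IsClosed {x | 0 ≤ gzL θ ξ r x} := isClosed_le continuous_const (gzL_cont _ _ _)
  have h2 := closure_minimal (fun x hx => (H.Lpos x hx).le) h1
  rw [H.h.closure_int] at h2
  exact h2 hx

lemma Gn.top (H : Gn γ f K θ ξ m r k) {x : GzE n} (hx : x ∈ interior K) :
    x + (gzL θ ξ r x / ⟪θ, ξ⟫) • θ ∈ K := by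
  have hγ := H.h.hγ
  obtain ⟨a, b, hab, hseg⟩ := H.h.seg H.hθ ⟨0, by simpa using interior_subset hx⟩
  obtain ⟨ε, hε, hball⟩ := gz_exists_ball hx H.hθ
  obtain ⟨C, hC0, hC⟩ := H.h.bdd
  have hb : 0 < b := by
    have := (hseg (ε / 2)).1 (interior_subset (hball _ (by rw [abs_of_pos] <;> linarith)))
    linarith [this.2]
  have hbK : x + b • θ ∈ K := (hseg b).2 ⟨hab, le_rfl⟩
  have hIntg : ∀ s ∈ Ioo 0 b, x + s • θ ∈ interior K := by
    intro s hs
    refine H.h.conv.openSegment_interior_self_subset_interior hx hbK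
      ⟨1 - s / b, s / b, ?_, by have := hs.1; positivity, by ring, ?_⟩
    · have : s / b < 1 := (div_lt_one hb).2 hs.2
      linarith
    · have : x + s • θ = x + ((s / b) * b) • θ := by rw [div_mul_cancel₀ _ hb.ne']
      rw [this]; module
  have hle : ∀ s ∈ Ioo 0 b, k * gzL θ ξ r (x + s • θ) ^ ((γ + 1) / γ) ≤ C * (b - s) := by
    intro s hs
    rw [← H.Gform _ (hIntg s hs), gzG_shift]
    have h1 : ∫ t in Ioi s, f (x + t • θ) = ∫ t in Ioc s b, f (x + t • θ) :=
      setIntegral_eq_of_subset_of_forall_diff_eq_zero measurableSet_Ioi (fun t ht => ht.1)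
        fun t ht => H.h.zero _ fun hc => ht.2 ⟨ht.1, ((hseg t).1 hc).2⟩
    rw [h1, ← intervalIntegral.integral_of_le hs.2.le]
    have h2 := intervalIntegral.integral_mono_on (μ := volume) (a := s) (b := b) hs.2.le
      (H.h.line_int H.hθ x).intervalIntegrable
      (intervalIntegrable_const (c := C)) (fun t _ => hC (x + t • θ))
    rw [intervalIntegral.integral_const, smul_eq_mul] at h2
    linarith
  have hp : 0 < (γ + 1) / γ := by positivity
  have hcont : Continuous fun s : ℝ => k * gzL θ ξ r (x + s • θ) ^ ((γ + 1) / γ) := by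
    refine continuous_const.mul (Continuous.rpow_const ?_ fun _ => Or.inr hp.le)
    exact (gzL_cont θ ξ r).comp (by fun_prop)
  have hlim1 : Filter.Tendsto (fun s : ℝ => k * gzL θ ξ r (x + s • θ) ^ ((γ + 1) / γ))
      (nhdsWithin b (Iio b)) (nhds (k * gzL θ ξ r (x + b • θ) ^ ((γ + 1) / γ))) :=
    (hcont.tendsto b).mono_left nhdsWithin_le_nhds
  have hlim2 : Filter.Tendsto (fun s : ℝ => C * (b - s)) (nhdsWithin b (Iio b))
      (nhds (C * (b - b))) := (Continuous.tendsto (by fun_prop) b).mono_left nhdsWithin_le_nhds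
  have hfin := le_of_tendsto_of_tendsto hlim1 hlim2 (by
    filter_upwards [Ioo_mem_nhdsLT hb] with s hs
    exact hle s hs)
  rw [sub_self, mul_zero] at hfin
  have hL0 : gzL θ ξ r (x + b • θ) = 0 := by
    rcases (H.Lnn hbK).eq_or_lt with h1 | h1
    · exact h1.symm
    · have := mul_pos H.hk (Real.rpow_pos_of_pos h1 ((γ + 1) / γ))
      linarith
  rw [gzL_add] at hL0
  have hbe : gzL θ ξ r x / ⟪θ, ξ⟫ = b := by
    rw [div_eq_iff H.hin.ne']; linarith
  rwa [hbe]

lemma Gn.seg0 (H : Gn γ f K θ ξ m r k) (s : ℝ) :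
    s • θ ∈ K ↔ s ∈ Icc (-(n * γ / (γ + 1) * r)) r := by
  have hγ := H.h.hγ
  have h0K : (0 : GzE n) ∈ K := interior_subset H.h.mem0
  obtain ⟨a, b, hab, hseg⟩ := H.h.seg H.hθ (x := 0) ⟨0, by simpa using h0K⟩
  simp only [zero_add] at hseg
  have hrb : b = r := by
    have h1 := H.top H.h.mem0
    have h2 : gzL θ ξ r 0 / ⟪θ, ξ⟫ = r := by
      have := H.hin.ne'
      simp [gzL]; field_simp
    rw [h2, zero_add] at h1
    have h3 := ((hseg r).1 h1).2
    have h4 := H.Lnn ((hseg b).2 ⟨hab, le_rfl⟩)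
    rw [gzL_smul] at h4
    have h5 := nonneg_of_mul_nonneg_right h4 H.hin
    linarith
  subst hrb
  have ha : a ≤ 0 := ((hseg 0).1 (by simpa using h0K)).1
  have h1 := (gz_line_iff (a := -a) (τ := ⟪θ, ξ⟫) (m := m) (r := b)
    (κ := (γ + 1) / (γ * n + γ + 1)) (g := fun s => f (s • θ)) hγ H.hin H.hm H.hr
    (by linarith) (by positivity) (by
      intro s hs
      rw [neg_neg] at hs
      rw [H.fform _ ((hseg s).2 hs), gzL_smul]) (by
      intro s hs
      rw [neg_neg] at hs
      exact H.h.zero _ fun hc => hs ((hseg s).1 hc))).1 (by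
      have := H.heq
      simpa [gzG] using this)
  have h2 : a = -(n * γ / (γ + 1) * b) := by
    field_simp at h1 ⊢
    linarith
  rw [hseg, ← h2]

lemma gzL_neg_add (θ ξ y : GzE n) (r a : ℝ) :
    gzL θ ξ r ((-a) • θ + y) = ⟪θ, ξ⟫ * (r + a) + (-(innerSL ℝ ξ)) y := by
  unfold gzL
  rw [inner_add_left, real_inner_smul_left]
  simp only [ContinuousLinearMap.neg_apply, innerSL_apply_apply]
  rw [real_inner_comm ξ y]; ring

lemma gz_setint_shift (K : Set (GzE n)) (hK : MeasurableSet K) (p : GzE n) (g : GzE n → ℝ) :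
    ∫ y in (fun y => p + y) ⁻¹' K, g (p + y) = ∫ x in K, g x := by
  rw [← integral_indicator hK, ← integral_indicator (hK.preimage (by fun_prop)),
    ← integral_add_left_eq_self (K.indicator g) p]
  rfl

lemma Gn.ray (H : Gn γ f K θ ξ m r k) {y : GzE n}
    (hy : (-(n * γ / (γ + 1) * r)) • θ + y ∈ interior K) {t : ℝ} (ht : 1 < t)
    (hp : 0 < gzL θ ξ r ((-(n * γ / (γ + 1) * r)) • θ + t • y)) :
    (-(n * γ / (γ + 1) * r)) • θ + t • y ∈ K := by
  have hγ := H.h.hγ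
  have hr := H.hr
  have hτ := H.hin
  set a := n * γ / (γ + 1) * r with ha
  have ha0 : 0 ≤ a := by positivity
  set p : GzE n := (-a) • θ with hpdef
  set K' : Set (GzE n) := (fun y => p + y) ⁻¹' K with hK'
  have hKm : MeasurableSet K := H.h.comp.isClosed.measurableSet
  have hK'e : K' = (Homeomorph.addLeft p) ⁻¹' K := rfl
  have hcomp : IsCompact K' := by
    rw [hK'e]
    exact (Homeomorph.addLeft p).isCompact_preimage.2 H.h.comp
  have hconv : Convex ℝ K' := H.h.conv.translate_preimage_right p
  have hIntg : interior K' = (Homeomorph.addLeft p) ⁻¹' (interior K) := by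
    rw [hK'e, Homeomorph.preimage_interior]
  have hLe : ∀ y, gzL θ ξ r (p + y) = ⟪θ, ξ⟫ * (r + a) + (-(innerSL ℝ ξ)) y :=
    fun y => gzL_neg_add θ ξ y r a
  have hB : ∫ y in K', (⟪θ, ξ⟫ * (r + a) + (-(innerSL ℝ ξ)) y) ^ (1 / γ) = (∫ x, f x) / m := by
    simp only [← hLe]
    rw [gz_setint_shift K hKm p (fun x => gzL θ ξ r x ^ (1 / γ)),
      ← setIntegral_eq_integral_of_forall_compl_eq_zero (s := K) (fun x hx => H.h.zero x hx),
      setIntegral_congr_fun hKm (fun x hx => H.fform x hx), integral_const_mul]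
    have := H.hm
    field_simp
  have hA : ∫ y in K', (⟪θ, ξ⟫ * (r + a) + (-(innerSL ℝ ξ)) y) ^ (1 / γ + 1) =
      r * ⟪θ, ξ⟫ * (∫ x, f x) / m := by
    simp only [← hLe]
    rw [gz_setint_shift K hKm p (fun x => gzL θ ξ r x ^ (1 / γ + 1))]
    have h1 : ∫ x, f x * gzL θ ξ r x = r * ⟪θ, ξ⟫ * ∫ x, f x := by
      have hi : Integrable fun x => f x * ⟪x, ξ⟫ := by
        have := (innerSL ℝ ξ).integrable_comp H.h.cint
        simpa [real_inner_comm] using this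
      have hi0 : ∫ x, f x * ⟪x, ξ⟫ = 0 := by
        have := (innerSL ℝ ξ).integral_comp_comm H.h.cint
        rw [H.h.cent, map_zero] at this
        simpa [real_inner_comm] using this
      have : ∀ x, f x * gzL θ ξ r x = r * ⟪θ, ξ⟫ * f x - f x * ⟪x, ξ⟫ := by
        intro x; unfold gzL; ring
      simp only [this]
      rw [integral_sub (H.h.int.const_mul _) hi, hi0, integral_const_mul, sub_zero]
    rw [← h1, ← setIntegral_eq_integral_of_forall_compl_eq_zero (s := K)
      (f := fun x => f x * gzL θ ξ r x) (fun x hx => by rw [H.h.zero x hx, zero_mul])]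
    have h2 : ∫ x in K, f x * gzL θ ξ r x = ∫ x in K, m * gzL θ ξ r x ^ (1 / γ + 1) := by
      refine setIntegral_congr_fun hKm fun x hx => ?_
      rw [H.fform x hx]
      rcases (H.Lnn hx).eq_or_lt with h0 | h0
      · rw [← h0, Real.zero_rpow (by positivity : 1 / γ + 1 ≠ 0)]; simp
      · rw [Real.rpow_add_one h0.ne', mul_assoc]
    rw [h2, integral_const_mul]
    have := H.hm
    field_simp
  have hmain := gz_rigid H.hn hcomp hconv (K := K') (u := ⟪θ, ξ⟫ * (r + a)) (q := 1 / γ)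
    (ℓ := -(innerSL ℝ ξ)) (y₀ := y) (t₀ := t) (by
      rw [hK', mem_preimage, add_zero]
      exact (H.seg0 _).2 ⟨le_rfl, by linarith⟩) (by positivity) (by
      intro y hy
      rw [← hLe]; exact H.Lnn hy) (by
      rw [hA, hB]
      have := H.hm
      rw [ha]
      field_simp
      ring) (by rw [hIntg]; exact hy) ht (by rw [← hLe]; exact hp)
  exact hmain

/-- The base of the cone. -/
def gzD (K : Set (GzE n)) (θ ξ : GzE n) (r : ℝ) : Set (GzE n) :=
  {d | ⟪d, ξ⟫ = 0 ∧ r • θ + d ∈ K}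

lemma Gn.D_convex (H : Gn γ f K θ ξ m r k) : Convex ℝ (gzD K θ ξ r) := by
  intro x hx y hy a b ha hb hab
  refine ⟨?_, ?_⟩
  · rw [inner_add_left, real_inner_smul_left, real_inner_smul_left, hx.1, hy.1]; simp
  · have := H.h.conv hx.2 hy.2 ha hb hab
    convert this using 1
    have : a = 1 - b := by linarith
    subst this
    module

lemma Gn.D_compact (H : Gn γ f K θ ξ m r k) : IsCompact (gzD K θ ξ r) := by
  have h1 : IsCompact ((Homeomorph.addLeft (r • θ)) ⁻¹' K) :=
    (Homeomorph.addLeft (r • θ)).isCompact_preimage.2 H.h.comp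
  have h2 : gzD K θ ξ r = ((Homeomorph.addLeft (r • θ)) ⁻¹' K) ∩ {d | ⟪d, ξ⟫ = 0} := by
    ext d; simp [gzD, and_comm]
  rw [h2]
  exact h1.inter_right (isClosed_eq (by fun_prop) continuous_const)

lemma Gn.D_mem (H : Gn γ f K θ ξ m r k) {w : GzE n} (hw : w ∈ interior K) (hw0 : ⟪w, ξ⟫ = 0) :
    w ∈ gzD K θ ξ r := by
  refine ⟨hw0, ?_⟩
  have h1 := H.top hw
  have h2 : gzL θ ξ r w / ⟪θ, ξ⟫ = r := by
    have := H.hin.ne'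
    simp [gzL, hw0]; field_simp
  rw [h2] at h1
  rwa [add_comm]

lemma Gn.hull (H : Gn γ f K θ ξ m r k) :
    K = convexHull ℝ (insert ((-(n * γ / (γ + 1) * r)) • θ)
      ((fun d => r • θ + d) '' gzD K θ ξ r)) := by
  have hγ := H.h.hγ
  have hr := H.hr
  have hτ := H.hin
  have hray := fun y => H.ray (y := y)
  have hseg0 := H.seg0
  set a := n * γ / (γ + 1) * r with ha
  have ha0 : 0 ≤ a := by positivity
  set p : GzE n := (-a) • θ with hpdef
  have hpK : p ∈ K := (hseg0 _).2 ⟨le_rfl, by linarith⟩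
  have hne : (gzD K θ ξ r).Nonempty := ⟨0, H.D_mem H.h.mem0 (by simp)⟩
  apply Subset.antisymm
  · have hcl : IsClosed (convexHull ℝ (insert p ((fun d => r • θ + d) '' gzD K θ ξ r))) := by
      have h1 : convexHull ℝ (insert p ((fun d => r • θ + d) '' gzD K θ ξ r)) =
          (fun z : GzE n × ℝ => (1 - z.2) • p + z.2 • (r • θ + z.1)) ''
            (gzD K θ ξ r ×ˢ Icc (0 : ℝ) 1) := by
        ext x
        rw [gz_mem_hull H.D_convex hne]
        constructor
        · rintro ⟨d, hd, t, h0, h1, rfl⟩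
          exact ⟨(d, t), ⟨hd, h0, h1⟩, rfl⟩
        · rintro ⟨⟨d, t⟩, ⟨hd, h0, h1⟩, rfl⟩
          exact ⟨d, hd, t, h0, h1, rfl⟩
      rw [h1]
      exact ((H.D_compact.prod isCompact_Icc).image (by fun_prop)).isClosed
    rw [← H.h.closure_int]
    rw [H.h.closure_int]
    refine H.h.closure_int.ge.trans (closure_minimal ?_ hcl)
    intro x hx
    rw [gz_mem_hull H.D_convex hne]
    set y := x - p with hy
    have hxy : p + y = x := by rw [hy]; abel
    set u := ⟪θ, ξ⟫ * (r + a) with hu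
    have hu0 : 0 < u := by positivity
    have hLt : ∀ t : ℝ, gzL θ ξ r (p + t • y) = u + t * (-(innerSL ℝ ξ)) y := by
      intro t
      rw [hpdef, gzL_neg_add, map_smul, smul_eq_mul]
    have hLx : 0 < u + (-(innerSL ℝ ξ)) y := by
      have := H.Lpos x hx
      rw [← hxy] at this
      have h2 := hLt 1
      rw [one_smul, one_mul] at h2
      rwa [← h2]
    generalize (-(innerSL ℝ ξ)) y = e at *
    by_cases he : 0 ≤ e
    · have hall : ∀ t : ℝ, 1 < t → p + t • y ∈ K := by
        intro t ht
        refine hray y (by rw [hxy]; exact hx) ht ?_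
        rw [hLt]
        have := mul_nonneg (by linarith : 0 ≤ t) he
        linarith
      have hy0 : y = 0 := by
        by_contra hyne
        have hyn : 0 < ‖y‖ := norm_pos_iff.2 hyne
        obtain ⟨R, hR0, hR⟩ := H.h.rad
        have hpn := norm_nonneg p
        set t := (R + ‖p‖) / ‖y‖ + 2 with ht
        have ht1 : 1 < t := by
          have : 0 ≤ (R + ‖p‖) / ‖y‖ := by positivity
          linarith
        have h1 := hR _ (hall t ht1)
        have h2 : ‖t • y‖ ≤ ‖p + t • y‖ + ‖p‖ := by
          have := norm_sub_le (p + t • y) p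
          simpa using this
        rw [norm_smul, Real.norm_of_nonneg (by linarith), ht, add_mul,
          div_mul_cancel₀ _ hyn.ne'] at h2
        linarith
      obtain ⟨d, hd⟩ := hne
      refine ⟨d, hd, 0, le_rfl, zero_le_one, ?_⟩
      rw [← hxy, hy0]; simp
    · push Not at he
      set t₁ := u / (-e) with ht1
      have ht1gt : 1 < t₁ := by rw [ht1, one_lt_div (by linarith)]; linarith
      have hte : t₁ * e = -u := by
        rw [ht1]; have := he.ne; field_simp
      have hmemK : p + t₁ • y ∈ K := by
        have hcc : IsClosed {t : ℝ | p + t • y ∈ K} := H.h.comp.isClosed.preimage (by fun_prop)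
        have hsub : Ioo 1 t₁ ⊆ {t : ℝ | p + t • y ∈ K} := by
          intro t ht
          refine hray y (by rw [hxy]; exact hx) ht.1 ?_
          rw [hLt]
          have := mul_lt_mul_of_neg_right ht.2 he
          linarith
        have h2 := closure_minimal hsub hcc
        rw [closure_Ioo ht1gt.ne] at h2
        exact h2 ⟨ht1gt.le, le_rfl⟩
      have hL0 : gzL θ ξ r (p + t₁ • y) = 0 := by rw [hLt, hte]; ring
      refine ⟨p + t₁ • y - r • θ, ⟨?_, ?_⟩, t₁⁻¹, by positivity, inv_le_one_of_one_le₀ ht1gt.le, ?_⟩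
      · rw [inner_sub_left, real_inner_smul_left]
        unfold gzL at hL0
        linarith
      · rwa [add_sub_cancel]
      · have e1 : t₁⁻¹ • t₁ • y = y := by
          rw [smul_smul, inv_mul_cancel₀ (by linarith), one_smul]
        rw [add_sub_cancel, ← hxy, smul_add, e1]
        module
  · refine convexHull_min ?_ H.h.conv
    rintro x (rfl | ⟨d, hd, rfl⟩)
    · exact hpK
    · exact hd.2

end

section
variable {n : ℕ} {γ m r k : ℝ} {f : GzE n → ℝ} {K : Set (GzE n)} {θ ξ : GzE n}

lemma gz_haar (hξ : ξ ≠ 0) :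
    (Measure.hausdorffMeasure ((n : ℝ) - 1) : Measure (ℝ ∙ ξ)ᗮ).IsAddHaarMeasure := by
  have h1 := gz_finrank hξ
  have h2 : ((Module.finrank ℝ (ℝ ∙ ξ)ᗮ + 1 : ℕ) : ℝ) = n := by exact_mod_cast h1
  have h3 : (n : ℝ) - 1 = (Module.finrank ℝ (ℝ ∙ ξ)ᗮ : ℝ) := by
    push_cast at h2; linarith
  rw [h3]
  infer_instance

lemma gz_haus_map (hξ : ξ ≠ 0) :
    Measure.map (Subtype.val : (ℝ ∙ ξ)ᗮ → GzE n)
      (Measure.hausdorffMeasure ((n : ℝ) - 1) : Measure (ℝ ∙ ξ)ᗮ) =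
    (Measure.hausdorffMeasure ((n : ℝ) - 1) : Measure (GzE n)).restrict
      ((ℝ ∙ ξ)ᗮ : Set (GzE n)) := by
  have h1 : Isometry (Subtype.val : (ℝ ∙ ξ)ᗮ → GzE n) := isometry_subtype_coe
  have := gz_finrank hξ
  rw [h1.map_hausdorffMeasure (Or.inl (by
    have : 1 ≤ n := by omega
    have : (1 : ℝ) ≤ n := by exact_mod_cast this
    linarith))]
  congr 1
  simp

lemma Gn.D_meas (H : Gn γ f K θ ξ m r k) (hξ : ξ ≠ 0) :
    0 < (Measure.hausdorffMeasure ((n : ℝ) - 1) : Measure (GzE n)) (gzD K θ ξ r) := by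
  have := gz_haar hξ
  set ν : Measure (ℝ ∙ ξ)ᗮ := Measure.hausdorffMeasure ((n : ℝ) - 1) with hν
  have hDm : MeasurableSet (gzD K θ ξ r) := H.D_compact.isClosed.measurableSet
  have h1 : ν (Subtype.val ⁻¹' gzD K θ ξ r) ≤
      (Measure.hausdorffMeasure ((n : ℝ) - 1) : Measure (GzE n)) (gzD K θ ξ r) := by
    rw [← Measure.map_apply measurable_subtype_coe hDm, hν, gz_haus_map hξ]
    exact Measure.restrict_apply_le _ _
  refine lt_of_lt_of_le ?_ h1
  have h2 : IsOpen ((Subtype.val : (ℝ ∙ ξ)ᗮ → GzE n) ⁻¹' interior K) :=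
    isOpen_interior.preimage continuous_subtype_val
  refine (h2.measure_pos ν ⟨0, by simpa using H.h.mem0⟩).trans_le (measure_mono ?_)
  intro w hw
  exact H.D_mem hw (gz_mem_perp.1 w.2)

lemma Gn.D_cent (H : Gn γ f K θ ξ m r k) (hξ : ξ ≠ 0) :
    ∫ x in gzD K θ ξ r, x ∂(Measure.hausdorffMeasure ((n : ℝ) - 1)) = (0 : GzE n) := by
  have hγ := H.h.hγ
  have hr := H.hr
  have hτ := H.hin
  have hm0 := H.hm
  have hh := gz_haar hξ
  set ν : Measure (ℝ ∙ ξ)ᗮ := Measure.hausdorffMeasure ((n : ℝ) - 1) with hν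
  set D := gzD K θ ξ r with hD
  have hDm : MeasurableSet D := H.D_compact.isClosed.measurableSet
  have hDsub : D ⊆ ((ℝ ∙ ξ)ᗮ : Set (GzE n)) := fun d hd => gz_mem_perp.2 hd.1
  set DW : Set (ℝ ∙ ξ)ᗮ := Subtype.val ⁻¹' D with hDW
  have hDWm : MeasurableSet DW := hDm.preimage measurable_subtype_coe
  have hemb : MeasurableEmbedding (Subtype.val : (ℝ ∙ ξ)ᗮ → GzE n) :=
    MeasurableEmbedding.subtype_coe (Submodule.closed_of_finiteDimensional _).measurableSet
  have hIeq : ∫ x in D, x ∂(Measure.hausdorffMeasure ((n : ℝ) - 1)) =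
      ∫ w in DW, (w : GzE n) ∂ν := by
    have h1 : (Measure.hausdorffMeasure ((n : ℝ) - 1) : Measure (GzE n)).restrict D =
        (Measure.map (Subtype.val : (ℝ ∙ ξ)ᗮ → GzE n) ν).restrict D := by
      rw [gz_haus_map hξ, Measure.restrict_restrict hDm, inter_eq_left.2 hDsub]
    rw [h1, hemb.setIntegral_map]
  rw [hIeq]
  set I := ∫ w in DW, (w : GzE n) ∂ν with hI
  obtain ⟨hT, c, hc, hmap⟩ := gz_map hτ.ne' ν
  have hhull := H.hull
  have hne : D.Nonempty := ⟨0, H.D_mem H.h.mem0 (by simp)⟩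
  have hDc : Convex ℝ D := H.D_convex
  set a := n * γ / (γ + 1) * r with ha
  have hn' : (0 : ℝ) < n := by exact_mod_cast H.hn
  have ha0 : 0 < a := by positivity
  -- slices
  have hin : ∀ (s t : ℝ) (w d : GzE n), ⟪w, ξ⟫ = 0 → ⟪d, ξ⟫ = 0 →
      s • θ + w = (1 - t) • (-a) • θ + t • (r • θ + d) → s = -a + t * (r + a) ∧ w = t • d := by
    intro s t w d hw hd hs
    have h1 := congrArg (fun z => ⟪z, ξ⟫) hs
    simp only [inner_add_left, real_inner_smul_left, hw, hd, add_zero] at h1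
    have h2 : s = -a + t * (r + a) := by
      have : (s - (-a + t * (r + a))) * ⟪θ, ξ⟫ = 0 := by linarith
      have := (mul_eq_zero.1 this).resolve_right hτ.ne'
      linarith
    refine ⟨h2, ?_⟩
    rw [h2] at hs
    have h3 : (1 - t) • (-a) • θ + t • (r • θ + d) = (-a + t * (r + a)) • θ + t • d := by module
    rw [h3] at hs
    exact add_left_cancel hs
  have hslice : ∀ s ∈ Ioo (-a) r, ∀ w : (ℝ ∙ ξ)ᗮ, s • θ + (w : GzE n) ∈ K ↔
      ((s + a) / (r + a))⁻¹ • w ∈ DW := by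
    intro s hs w
    have hw := gz_mem_perp.1 w.2
    have hra : 0 < r + a := by positivity
    have hsa : 0 < s + a := by linarith [hs.1]
    have ht : 0 < (s + a) / (r + a) := by positivity
    rw [hhull, gz_mem_hull hDc hne]
    constructor
    · rintro ⟨d, hd, t, ht0, ht1, hx⟩
      obtain ⟨h1, h2⟩ := hin s t w d hw hd.1 hx
      have h3 : (s + a) / (r + a) = t := by rw [div_eq_iff hra.ne']; linarith
      rw [hDW, mem_preimage, h3]
      rw [h3] at ht
      have h4 : ((t⁻¹ • w : (ℝ ∙ ξ)ᗮ) : GzE n) = d := by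
        rw [Submodule.coe_smul, h2, smul_smul, inv_mul_cancel₀ ht.ne', one_smul]
      rw [h4]; exact hd
    · intro hw'
      refine ⟨_, hw', (s + a) / (r + a), ht.le, ?_, ?_⟩
      · rw [div_le_one hra]; linarith [hs.2]
      · rw [Submodule.coe_smul]
        set t := (s + a) / (r + a) with htd
        have h1 : s = -a + t * (r + a) := by rw [htd, div_mul_cancel₀ _ hra.ne']; ring
        rw [smul_add, smul_smul t t⁻¹, mul_inv_cancel₀ ht.ne', one_smul, h1]
        module
  have hout : ∀ s, s ∉ Icc (-a) r → ∀ w : (ℝ ∙ ξ)ᗮ, f (s • θ + (w : GzE n)) = 0 := by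
    intro s hs w
    refine H.h.zero _ fun hc => hs ?_
    rw [hhull, gz_mem_hull hDc hne] at hc
    obtain ⟨d, hd, t, ht0, ht1, hx⟩ := hc
    obtain ⟨h1, h2⟩ := hin s t w d (gz_mem_perp.1 w.2) hd.1 hx
    rw [h1]
    constructor
    · have := mul_nonneg ht0 (by linarith : 0 ≤ r + a)
      linarith
    · have := mul_nonneg (by linarith : 0 ≤ 1 - t) (by linarith : 0 ≤ r + a)
      linarith
  -- projection
  set P : GzE n →L[ℝ] GzE n := ContinuousLinearMap.id ℝ (GzE n) -
    ((⟪θ, ξ⟫)⁻¹ • (innerSL ℝ ξ)).smulRight θ with hP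
  have hPT : ∀ p : ℝ × (ℝ ∙ ξ)ᗮ, P (gzT θ ξ p) = (p.2 : GzE n) := by
    intro p
    have hw := gz_mem_perp.1 p.2.2
    simp only [hP, ContinuousLinearMap.sub_apply, ContinuousLinearMap.id_apply,
      ContinuousLinearMap.smulRight_apply, ContinuousLinearMap.smul_apply, innerSL_apply_apply, gzT]
    rw [real_inner_comm (p.1 • θ + (p.2 : GzE n)) ξ, inner_add_left, hw, real_inner_smul_left, add_zero, smul_eq_mul]
    have : (⟪θ, ξ⟫)⁻¹ * (p.1 * ⟪θ, ξ⟫) = p.1 := by field_simp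
    rw [this]; abel
  have hPI : Integrable (fun x => P (f x • x)) := P.integrable_comp H.h.cint
  have hP0 : ∫ x, P (f x • x) = 0 := by
    rw [P.integral_comp_comm H.h.cint, H.h.cent, map_zero]
  have hTI := gz_integrable_T hT hmap hPI
  have hT0 := gz_integral_T hT hc hmap (fun x => P (f x • x))
  rw [hP0, smul_zero] at hT0
  simp only [map_smul, hPT] at hTI hT0
  rw [integral_prod _ hTI] at hT0
  simp only [gzT] at hT0
  set φ : ℝ → ℝ := fun s => m * (⟪θ, ξ⟫ * (r - s)) ^ (1 / γ) *
    ((s + a) / (r + a)) * ((s + a) / (r + a)) ^ (Module.finrank ℝ (ℝ ∙ ξ)ᗮ) with hφ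
  have hinner : ∀ s ∈ Ioo (-a) r,
      ∫ w : (ℝ ∙ ξ)ᗮ, f (s • θ + (w : GzE n)) • (w : GzE n) ∂ν = φ s • I := by
    intro s hs
    have hra : 0 < r + a := by positivity
    have hsa : 0 < s + a := by linarith [hs.1]
    set t := (s + a) / (r + a) with ht
    have ht0 : 0 < t := by positivity
    have h1 : ∀ w : (ℝ ∙ ξ)ᗮ, f (s • θ + (w : GzE n)) • (w : GzE n) =
        (m * (⟪θ, ξ⟫ * (r - s)) ^ (1 / γ) * t) •
          DW.indicator (fun w => (w : GzE n)) (t⁻¹ • w) := by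
      intro w
      by_cases hw : t⁻¹ • w ∈ DW
      · have hK := (hslice s hs w).2 hw
        rw [indicator_of_mem hw, H.fform _ hK, Submodule.coe_smul, smul_smul, mul_assoc,
          mul_inv_cancel₀ ht0.ne', mul_one, add_comm, gzL_add]
        congr 3
        unfold gzL
        rw [gz_mem_perp.1 w.2]; ring
      · have hK : s • θ + (w : GzE n) ∉ K := fun hc => hw ((hslice s hs w).1 hc)
        rw [indicator_of_notMem hw, H.h.zero _ hK, zero_smul, smul_zero]
    simp only [h1]
    rw [integral_smul, Measure.integral_comp_inv_smul, integral_indicator hDWm,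
      abs_of_pos (by positivity), smul_smul]
  have hae : ∫ s : ℝ, (∫ w : (ℝ ∙ ξ)ᗮ, f (s • θ + (w : GzE n)) • (w : GzE n) ∂ν) =
      ∫ s in (-a)..r, φ s • I := by
    rw [intervalIntegral.integral_of_le (by linarith), integral_Ioc_eq_integral_Ioo,
      ← setIntegral_congr_fun measurableSet_Ioo hinner, ← integral_Icc_eq_integral_Ioo]
    symm
    refine setIntegral_eq_integral_of_forall_compl_eq_zero fun s hs => ?_
    simp only [hout s hs, zero_smul, integral_zero]
  rw [hae, intervalIntegral.integral_smul_const] at hT0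
  have hφpos : 0 < ∫ s in (-a)..r, φ s := by
    refine intervalIntegral.intervalIntegral_pos_of_pos_on ?_ ?_ (by linarith)
    · refine Continuous.intervalIntegrable ?_ _ _
      have : Continuous fun s : ℝ => (⟪θ, ξ⟫ * (r - s)) ^ (1 / γ) :=
        Continuous.rpow_const (by fun_prop) fun _ => Or.inr (by positivity)
      rw [hφ]
      fun_prop
    · intro s hs
      have h1 : 0 < r - s := by linarith [hs.2]
      have h2 : 0 < s + a := by linarith [hs.1]
      have h3 : 0 < (⟪θ, ξ⟫ * (r - s)) ^ (1 / γ) := Real.rpow_pos_of_pos (by positivity) _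
      simp only [hφ]
      positivity
  exact (smul_eq_zero.1 hT0).resolve_left hφpos.ne'

end

/-- **Equality case of Grünbaum's inequality for one-dimensional sections of
γ-concave functions.** Equality holds iff `f` is (up to constants) the `1/γ`-th
power of an affine function supported on a suitable cone. -/
theorem grunbaum_one_dim_sections_equality
    (n : ℕ) (hn : 1 ≤ n)
    (θ : EuclideanSpace ℝ (Fin n)) (hθ : ‖θ‖ = 1)
    (γ : ℝ) (hγ : 0 < γ)
    (f : EuclideanSpace ℝ (Fin n) → ℝ)
    (hf_nonneg : ∀ x, 0 ≤ f x)
    (hf_concave : ∀ x y : EuclideanSpace ℝ (Fin n), f x ≠ 0 → f y ≠ 0 →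
      ∀ l : ℝ, 0 ≤ l → l ≤ 1 →
        (l * f x ^ γ + (1 - l) * f y ^ γ) ^ (1 / γ) ≤ f (l • x + (1 - l) • y))
    (hf_cont : ContinuousOn f (tsupport f))
    (hf_int : Integrable f)
    (hf_pos : 0 < ∫ x, f x)
    (hf_cent_int : Integrable (fun x => f x • x))
    (hf_cent : (∫ x, f x • x) = (0 : EuclideanSpace ℝ (Fin n))) :
    (∫ s in Ioi (0 : ℝ), f (s • θ)) =
        ((γ + 1) / (γ * n + γ + 1)) ^ ((γ + 1) / γ) * (∫ s : ℝ, f (s • θ)) ↔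
      ∃ (m r : ℝ) (ξ : EuclideanSpace ℝ (Fin n)) (D : Set (EuclideanSpace ℝ (Fin n))),
        0 < m ∧ 0 < r ∧ ‖ξ‖ = 1 ∧ 0 < ⟪θ, ξ⟫ ∧
        -- `D` is an `(n-1)`-dimensional convex body in `ξ^⊥` ...
        Convex ℝ D ∧ IsCompact D ∧ D ⊆ {x | ⟪x, ξ⟫ = 0} ∧ 0 < μH[(n : ℝ) - 1] D ∧
        -- ... whose centroid (taken in `ξ^⊥`) is at the origin,
        (∫ x in D, x ∂μH[(n : ℝ) - 1]) = (0 : EuclideanSpace ℝ (Fin n)) ∧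
        -- `K_f = conv( -(nγ/(γ+1)) r θ , r θ + D )`,
        tsupport f = convexHull ℝ
          (insert ((-(n * γ / (γ + 1)) * r) • θ) ((fun d => r • θ + d) '' D)) ∧
        -- and `f(x) = m 𝟙_{K_f}(x) (-⟨x,ξ⟩ + r⟨θ,ξ⟩)^{1/γ}`.
        ∀ x, f x =
          m * (tsupport f).indicator (fun y => (-⟪y, ξ⟫ + r * ⟪θ, ξ⟫) ^ (1 / γ)) x := by
  have h := gz_basic γ hγ f hf_nonneg hf_concave hf_cont hf_int hf_pos hf_cent_int hf_cent
  constructor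
  · intro heq
    have heq' : gzG f θ (Ioi 0) 0 =
        ((γ + 1) / (γ * n + γ + 1)) ^ ((γ + 1) / γ) * gzG f θ univ 0 := by
      simpa [gzG] using heq
    obtain ⟨m, r, k, ξ, hm, hr, hk, hξ, hin, hLp, hGf, hff⟩ := h.normal hθ hf_pos heq'
    have H : Gn γ f (tsupport f) θ ξ m r k :=
      ⟨h, hn, hθ, hm, hr, hk, hin, hLp, hGf, hff, heq'⟩
    have hξ0 : ξ ≠ 0 := by
      rintro rfl
      simp at hξ
    refine ⟨m, r, ξ, gzD (tsupport f) θ ξ r, hm, hr, hξ, hin, H.D_convex, H.D_compact,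
      fun x hx => hx.1, H.D_meas hξ0, H.D_cent hξ0, ?_, ?_⟩
    · rw [neg_mul]
      exact H.hull
    · intro x
      by_cases hx : x ∈ tsupport f
      · rw [indicator_of_mem hx]
        exact hff x hx
      · rw [indicator_of_notMem hx, mul_zero]
        exact h.zero x hx
  · rintro ⟨m, r, ξ, D, hm, hr, hξ, hin, hDc, hDk, hDs, hDp, -, hK, hf⟩
    have hne : D.Nonempty := by
      rw [nonempty_iff_ne_empty]
      rintro rfl
      simp at hDp
    exact h.reverse hn hm hr hin hDc hDs hne hK hf
end
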